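/- ∫₀¹ (k/k')^{3/4} K(k) dk = (π²/12)·√(5 + 1/√2), where k' = √(1-k²). -/

import Mathlib

open scoped Real
open MeasureTheory

noncomputable def EllK (k : ℝ) : ℝ :=
  ∫ x in (0:ℝ)..(1:ℝ), 1 / Real.sqrt ((1 - x^2) * (1 - k^2 * x^2))

noncomputable def EllE (k : ℝ) : ℝ :=
  ∫ x in (0:ℝ)..(1:ℝ), Real.sqrt ((1 - k^2 * x^2) / (1 - x^2))

noncomputable def EllK' (k : ℝ) : ℝ := EllK (Real.sqrt (1 - k^2))

open Filter Topology

/-- The theta series `∑ q ^ (n ^ 2)` over the integers. -/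
noncomputable def thetaSeries (q : ℂ) : ℂ := ∑' n : ℤ, q ^ (n.natAbs ^ 2)

lemma summable_norm_pow_natAbs_sq {r : ℝ} (h0 : 0 ≤ r) (h1 : r < 1) :
    Summable fun n : ℤ => r ^ (n.natAbs ^ 2) := by
  have h : Summable fun n : ℕ => r ^ (n ^ 2) := by
    refine Summable.of_nonneg_of_le (fun n => by positivity) (fun n => ?_)
      (summable_geometric_of_lt_one h0 h1)
    exact pow_le_pow_of_le_one h0 h1.le
        (by nlinarith [Nat.zero_le n, sq_nonneg ((n:ℤ) - 1), Nat.le_self_pow (n := 2) two_ne_zero n])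
  refine Summable.of_nat_of_neg ?_ ?_
  · simpa using h
  · simpa using h

lemma summable_norm_thetaSeries {q : ℂ} (hq : ‖q‖ < 1) :
    Summable fun n : ℤ => ‖q ^ (n.natAbs ^ 2)‖ := by
  simpa using summable_norm_pow_natAbs_sq (norm_nonneg q) hq

lemma thetaSeries_zero : thetaSeries 0 = 1 := by
  rw [thetaSeries, tsum_eq_single 0]
  · simp
  · intro n hn
    simp [hn]

lemma norm_pow_lt_one {q : ℂ} (hq : ‖q‖ < 1) {k : ℕ} (hk : k ≠ 0) : ‖q ^ k‖ < 1 := by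
  rw [norm_pow]
  exact pow_lt_one₀ (norm_nonneg _) hq hk

lemma neg_one_pow_natAbs_sq (n : ℤ) : (-1 : ℂ) ^ (n.natAbs ^ 2) = (-1) ^ n.natAbs := by
  rcases Nat.even_or_odd n.natAbs with h | h
  · rw [h.neg_one_pow, (h.pow_of_ne_zero two_ne_zero).neg_one_pow]
  · rw [h.neg_one_pow, (h.pow).neg_one_pow]

lemma thetaSeries_add_neg {q : ℂ} (hq : ‖q‖ < 1) :
    thetaSeries q + thetaSeries (-q) = 2 * thetaSeries (q ^ 4) := by
  have h1 := (summable_norm_thetaSeries hq).of_norm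
  have h2 := (summable_norm_thetaSeries (q := -q) (by simpa using hq)).of_norm
  have hinj : Function.Injective (fun k : ℤ => 2 * k) := fun a b h => by
    simpa using h
  rw [thetaSeries, thetaSeries, thetaSeries, ← h1.tsum_add h2, ← hinj.tsum_eq, ← tsum_mul_left]
  · refine tsum_congr fun k => ?_
    have : (2 * k).natAbs ^ 2 = 4 * k.natAbs ^ 2 := by
      rw [Int.natAbs_mul]; simp; ring
    rw [this, neg_pow, ← pow_mul, Even.neg_one_pow ⟨2 * k.natAbs ^ 2, by ring⟩]
    ring
  · intro n hn
    rcases Int.even_or_odd n with h | h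
    · obtain ⟨k, rfl⟩ := h
      exact ⟨k, by ring⟩
    · exfalso
      apply hn
      have : Odd (n.natAbs ^ 2) := (Int.natAbs_odd.mpr h).pow
      simp [this.neg_pow]

lemma thetaSeries_sq_add_sq {q : ℂ} (hq : ‖q‖ < 1) :
    thetaSeries q ^ 2 + thetaSeries (-q) ^ 2 = 2 * thetaSeries (q ^ 2) ^ 2 := by
  have h1 := summable_norm_thetaSeries hq
  have h2 := summable_norm_thetaSeries (q := -q) (by simpa using hq)
  have h3 := summable_norm_thetaSeries (norm_pow_lt_one hq two_ne_zero)
  have hinj : Function.Injective (fun p : ℤ × ℤ => (p.1 + p.2, p.1 - p.2)) := by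
    rintro ⟨a, b⟩ ⟨c, d⟩ h
    simp only [Prod.mk.injEq] at h ⊢
    omega
  simp only [thetaSeries, sq (tsum _)]
  rw [tsum_mul_tsum_of_summable_norm h1 h1, tsum_mul_tsum_of_summable_norm h2 h2,
    tsum_mul_tsum_of_summable_norm h3 h3,
    ← (summable_mul_of_summable_norm h1 h1).tsum_add (summable_mul_of_summable_norm h2 h2),
    ← hinj.tsum_eq, ← tsum_mul_left]
  · refine tsum_congr fun ⟨u, v⟩ => ?_
    have e : (u + v).natAbs ^ 2 + (u - v).natAbs ^ 2 = 2 * (u.natAbs ^ 2) + 2 * v.natAbs ^ 2 := by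
      zify
      simp only [sq_abs]
      ring
    simp only [← pow_add]
    rw [e, neg_pow, Even.neg_one_pow ⟨u.natAbs ^ 2 + v.natAbs ^ 2, by ring⟩, pow_add, pow_mul,
      pow_mul]
    ring
  · rintro ⟨m, n⟩ hn
    rcases Int.even_or_odd (m + n) with h | h
    · obtain ⟨k, hk⟩ := h
      exact ⟨(k, k - n), by simp only [Prod.mk.injEq]; omega⟩
    · exfalso
      apply hn
      have : Odd (m.natAbs ^ 2 + n.natAbs ^ 2) := by
        rw [Nat.odd_add, Nat.odd_pow_iff two_ne_zero, Nat.even_pow' two_ne_zero, Int.natAbs_odd,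
            Int.natAbs_even]
        exact Int.odd_add.mp h
      simp only [← pow_add]
      rw [this.neg_pow]
      ring

lemma thetaSeries_neg {q : ℂ} (hq : ‖q‖ < 1) :
    thetaSeries (-q) = 2 * thetaSeries (q ^ 4) - thetaSeries q := by
  linear_combination thetaSeries_add_neg hq

/-- The Landen relation between the theta series at `q`, `q ^ 2` and `q ^ 4`. -/
lemma thetaSeries_landen {q : ℂ} (hq : ‖q‖ < 1) :
    (thetaSeries q - thetaSeries (q ^ 4)) ^ 2 + thetaSeries (q ^ 4) ^ 2 =
        thetaSeries (q ^ 2) ^ 2 := by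
  have h := thetaSeries_sq_add_sq hq
  rw [thetaSeries_neg hq] at h
  linear_combination h / 2

lemma thetaSeries_mul_neg {q : ℂ} (hq : ‖q‖ < 1) :
    thetaSeries q * thetaSeries (-q) = thetaSeries (-q ^ 2) ^ 2 := by
  have h := thetaSeries_landen hq
  have h2 := thetaSeries_landen (norm_pow_lt_one hq two_ne_zero)
  rw [thetaSeries_neg hq, thetaSeries_neg (norm_pow_lt_one hq two_ne_zero)]
  simp only [← pow_mul] at h2 ⊢
  norm_num at h2 ⊢
  linear_combination -h - 2 * h2

lemma differentiableOn_thetaSeries : DifferentiableOn ℂ thetaSeries (Metric.ball 0 1) := by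
  intro q hq
  rw [mem_ball_zero_iff] at hq
  obtain ⟨r, hr, hr1⟩ := exists_between hq
  have hr0 : 0 ≤ r := (norm_nonneg q).trans hr.le
  have : DifferentiableOn ℂ thetaSeries (Metric.ball 0 r) := by
    refine Complex.differentiableOn_tsum_of_summable_norm (u := fun n : ℤ => r ^ (n.natAbs ^ 2))
      (summable_norm_pow_natAbs_sq hr0 hr1) (fun n => by fun_prop) Metric.isOpen_ball ?_
    intro n w hw
    rw [mem_ball_zero_iff] at hw
    rw [norm_pow]
    gcongr
  exact (this.differentiableAt
      (Metric.isOpen_ball.mem_nhds (by simpa using hr))).differentiableWithinAt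

lemma differentiableAt_thetaSeries {q : ℂ} (hq : ‖q‖ < 1) : DifferentiableAt ℂ thetaSeries q :=
  differentiableOn_thetaSeries.differentiableAt (Metric.isOpen_ball.mem_nhds (by simpa using hq))

lemma continuousAt_thetaSeries {q : ℂ} (hq : ‖q‖ < 1) : ContinuousAt thetaSeries q :=
  (differentiableAt_thetaSeries hq).continuousAt

lemma tendsto_pow_two_pow {q : ℂ} (hq : ‖q‖ < 1) :
    Tendsto (fun n : ℕ => q ^ (2 ^ n)) atTop (𝓝 0) :=
  (tendsto_pow_atTop_nhds_zero_of_norm_lt_one hq).comp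
    (tendsto_pow_atTop_atTop_of_one_lt one_lt_two)

lemma thetaSeries_ne_zero {q : ℂ} (hq : ‖q‖ < 1) : thetaSeries q ≠ 0 := by
  intro h
  have key : ∀ n : ℕ, thetaSeries (-q ^ (2 ^ (n + 1))) = 0 := by
    intro n
    induction n with
    | zero =>
      have := thetaSeries_mul_neg hq
      rw [h, zero_mul] at this
      simpa using this.symm
    | succ n ih =>
      have := thetaSeries_mul_neg (norm_pow_lt_one hq (k := 2 ^ (n + 1)) (by positivity))
      rw [ih, mul_zero, ← pow_mul, ← pow_succ] at this
      exact pow_eq_zero_iff two_ne_zero |>.mp this.symm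
  have ht : Tendsto (fun n : ℕ => thetaSeries (-q ^ (2 ^ (n + 1)))) atTop (𝓝 1) := by
    have h0 : Tendsto (fun n : ℕ => -q ^ (2 ^ (n + 1))) atTop (𝓝 0) := by
      simpa using ((tendsto_pow_two_pow hq).comp (tendsto_add_atTop_nat 1)).neg
    have := (continuousAt_thetaSeries (q := 0) (by simp)).tendsto.comp h0
    rwa [thetaSeries_zero] at this
  simp only [key] at ht
  exact zero_ne_one (tendsto_nhds_unique tendsto_const_nhds ht)

lemma hasDerivAt_thetaSeries_zero : HasDerivAt thetaSeries 2 0 := by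
  set g : ℂ → ℂ := fun q => ∑' n : ℤ, if n = 0 then 0 else q ^ (n.natAbs ^ 2 - 1) with hg
  have hpos : ∀ n : ℤ, n ≠ 0 → n.natAbs ^ 2 - 1 + 1 = n.natAbs ^ 2 := fun n hn =>
    Nat.sub_add_cancel (Nat.one_le_pow _ _ (Int.natAbs_pos.mpr hn))
  have hd : DifferentiableOn ℂ g (Metric.ball 0 (1 / 2)) := by
    refine Complex.differentiableOn_tsum_of_summable_norm
      (u := fun n : ℤ => 2 * (1 / 2 : ℝ) ^ (n.natAbs ^ 2))
      ((summable_norm_pow_natAbs_sq (by norm_num) (by norm_num)).mul_left 2) (fun n => ?_)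
      Metric.isOpen_ball ?_
    · split_ifs <;> fun_prop
    · intro n w hw
      rw [mem_ball_zero_iff] at hw
      split_ifs with h
      · simp
      · rw [norm_pow]
        have := pow_le_pow_left₀ (norm_nonneg w) hw.le (n.natAbs ^ 2 - 1)
        have e := pow_succ (1 / 2 : ℝ) (n.natAbs ^ 2 - 1)
        rw [hpos n h] at e
        linarith
  have hc : ContinuousAt g 0 :=
    (hd.differentiableAt (Metric.ball_mem_nhds 0 (by norm_num))).continuousAt
  have hg0 : g 0 = 2 := by
    have hs : ∀ n : ℤ, n ∉ ({1, -1} : Finset ℤ) →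
        (if n = 0 then (0 : ℂ) else 0 ^ (n.natAbs ^ 2 - 1)) = 0 := by
      intro n hn
      simp only [Finset.mem_insert, Finset.mem_singleton, not_or] at hn
      split_ifs with h
      · rfl
      · have : 2 ≤ n.natAbs := by omega
        have : 4 ≤ n.natAbs ^ 2 := by nlinarith
        exact zero_pow (by omega)
    rw [hg]
    simp only
    rw [tsum_eq_sum hs]
    norm_num
  rw [hasDerivAt_iff_tendsto_slope_zero]
  have hev : ∀ᶠ q : ℂ in 𝓝[≠] 0, g q = q⁻¹ • (thetaSeries (0 + q) - thetaSeries 0) := by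
    filter_upwards [self_mem_nhdsWithin,
      mem_nhdsWithin_of_mem_nhds (Metric.ball_mem_nhds (0 : ℂ) one_pos)] with q hq0 hq
    rw [mem_ball_zero_iff] at hq
    have hs := (summable_norm_thetaSeries hq).of_norm
    rw [zero_add, thetaSeries_zero, thetaSeries, hs.tsum_eq_add_tsum_ite 0, smul_eq_mul]
    simp only [Int.natAbs_zero, ne_eq, OfNat.ofNat_ne_zero, not_false_eq_true, zero_pow, pow_zero,
      add_sub_cancel_left]
    rw [hg, ← tsum_mul_left]
    refine tsum_congr fun n => ?_
    split_ifs with h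
    · simp
    · have hq0' : q ≠ 0 := hq0
      have e := pow_succ q (n.natAbs ^ 2 - 1)
      rw [hpos n h] at e
      rw [e]
      field_simp
  rw [← hg0]
  exact (hc.tendsto.mono_left nhdsWithin_le_nhds).congr' hev

/-- The sum of `q ^ (n ^ 2)` over odd integers `n`. -/
noncomputable def thetaOdd (q : ℂ) : ℂ := thetaSeries q - thetaSeries (q ^ 4)

lemma thetaOdd_sq {q : ℂ} (hq : ‖q‖ < 1) :
    thetaOdd q ^ 2 = 2 * thetaSeries (q ^ 8) * thetaOdd (q ^ 2) := by
  have h := thetaSeries_landen hq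
  have h2 := thetaSeries_landen (norm_pow_lt_one hq two_ne_zero)
  unfold thetaOdd
  simp only [← pow_mul] at h2 ⊢
  norm_num at h2 ⊢
  linear_combination h + h2

lemma hasDerivAt_thetaOdd_zero : HasDerivAt thetaOdd 2 0 := by
  have h4 : HasDerivAt (fun q : ℂ => thetaSeries (q ^ 4)) (2 * (4 * 0 ^ 3 * 1)) 0 := by
    have h := hasDerivAt_thetaSeries_zero
    have h0 : (0 : ℂ) = (id 0) ^ 4 := by simp
    rw [h0] at h
    exact h.comp (0 : ℂ) ((hasDerivAt_id (0 : ℂ)).pow 4)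
  have := hasDerivAt_thetaSeries_zero.fun_sub h4
  simp only [ne_eq, OfNat.ofNat_ne_zero, not_false_eq_true, zero_pow, zero_mul, mul_zero,
    sub_zero] at this
  exact this

lemma thetaOdd_ne_zero {q : ℂ} (hq : ‖q‖ < 1) (h0 : q ≠ 0) : thetaOdd q ≠ 0 := by
  intro h
  have key : ∀ n : ℕ, thetaOdd (q ^ (2 ^ n)) = 0 := by
    intro n
    induction n with
    | zero => simpa using h
    | succ n ih =>
      have hn := norm_pow_lt_one hq (k := 2 ^ n) (by positivity)
      have := thetaOdd_sq hn
      rw [ih, ← pow_mul _ _ 2, ← pow_succ] at this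
      have h8 := thetaSeries_ne_zero (norm_pow_lt_one hn (k := 8) (by norm_num))
      simpa [h8] using this.symm
  have ht : Tendsto (fun n : ℕ => q ^ (2 ^ n)) atTop (𝓝[≠] 0) :=
    tendsto_nhdsWithin_iff.mpr ⟨tendsto_pow_two_pow hq, .of_forall fun n => pow_ne_zero _ h0⟩
  have h2 := (hasDerivAt_iff_tendsto_slope_zero.mp hasDerivAt_thetaOdd_zero).comp ht
  have hz : thetaOdd 0 = 0 := by simp [thetaOdd]
  simp only [Function.comp_def, zero_add, key, hz, sub_zero, smul_zero] at h2
  exact two_ne_zero (tendsto_nhds_unique h2 tendsto_const_nhds)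

/-- The hyperbolic secant coefficient `1 / (q ^ d + q ^ (-d))`. -/
noncomputable def sechCoeff (q : ℂ) (d : ℤ) : ℂ := q ^ d / (1 + q ^ (2 * d))

lemma one_add_zpow_ne_zero {q : ℂ} (hq : ‖q‖ < 1) (h0 : q ≠ 0) (d : ℤ) : 1 + q ^ (2 * d) ≠ 0 := by
  intro h
  have h1 : q ^ (2 * d) = -1 := by linear_combination h
  have h2 : ‖q‖ ^ (2 * d) = 1 := by rw [← norm_zpow, h1]; simp
  have h3 : ‖q‖ ^ (2 * d) = ‖q‖ ^ (0 : ℤ) := by rw [h2]; simp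
  have h4 := zpow_right_injective₀ (norm_pos_iff.mpr h0) hq.ne h3
  have : d = 0 := by omega
  subst this
  norm_num at h1

lemma sechCoeff_neg {q : ℂ} (d : ℤ) : sechCoeff q (-d) = sechCoeff q d := by
  rcases eq_or_ne q 0 with rfl | h0
  · rcases eq_or_ne d 0 with rfl | hd
    · simp
    · simp [sechCoeff, zero_zpow _ hd, zero_zpow (-d) (by omega)]
  · unfold sechCoeff
    have e1 : q ^ (2 * -d) = (q ^ d)⁻¹ ^ 2 := by
      rw [mul_comm, zpow_mul, zpow_neg]; norm_cast
    have e2 : q ^ (2 * d) = (q ^ d) ^ 2 := by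
      rw [mul_comm, zpow_mul]; norm_cast
    rw [e1, e2, zpow_neg]
    have h : q ^ d ≠ 0 := zpow_ne_zero _ h0
    rw [show (1 : ℂ) + (q ^ d)⁻¹ ^ 2 = (1 + (q ^ d) ^ 2) * ((q ^ d)⁻¹ ^ 2) by field_simp; ring]
    rw [← div_div, div_eq_mul_inv, div_eq_mul_inv, div_eq_mul_inv]
    field_simp

lemma sechCoeff_eq_natAbs (q : ℂ) (d : ℤ) :
    sechCoeff q d = q ^ d.natAbs / (1 + q ^ (2 * d.natAbs)) := by
  rcases Int.natAbs_eq d with h | h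
  · rw [h]
    simp only [Int.natAbs_natCast]
    unfold sechCoeff
    norm_cast
  · rw [h, sechCoeff_neg]
    simp only [Int.natAbs_neg, Int.natAbs_natCast]
    unfold sechCoeff
    norm_cast

lemma norm_inv_one_add_pow_le {q : ℂ} (hq : ‖q‖ < 1) (n : ℕ) :
    ‖(1 + q ^ (2 * n))⁻¹‖ ≤ (1 - ‖q‖ ^ 2)⁻¹ := by
  have h2 : ‖q‖ ^ 2 < 1 := pow_lt_one₀ (norm_nonneg _) hq two_ne_zero
  rw [norm_inv]
  refine inv_anti₀ (by linarith) ?_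
  rcases Nat.eq_zero_or_pos n with rfl | hn
  · norm_num; nlinarith [sq_nonneg ‖q‖]
  · have h3 : ‖q ^ (2 * n)‖ ≤ ‖q‖ ^ 2 := by
      rw [norm_pow]
      exact pow_le_pow_of_le_one (norm_nonneg _) hq.le (by omega)
    have := norm_sub_norm_le (1 : ℂ) (-q ^ (2 * n))
    rw [norm_one, norm_neg, sub_neg_eq_add] at this
    linarith

lemma norm_sechCoeff_le {q : ℂ} (hq : ‖q‖ < 1) (d : ℤ) :
    ‖sechCoeff q d‖ ≤ (1 - ‖q‖ ^ 2)⁻¹ * ‖q‖ ^ d.natAbs := by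
  rw [sechCoeff_eq_natAbs, div_eq_mul_inv, norm_mul, norm_pow, mul_comm]
  exact mul_le_mul_of_nonneg_right (norm_inv_one_add_pow_le hq _) (by positivity)

lemma summable_pow_natAbs {r : ℝ} (h0 : 0 ≤ r) (h1 : r < 1) :
    Summable fun n : ℤ => r ^ n.natAbs := by
  have h := summable_geometric_of_lt_one h0 h1
  refine Summable.of_nat_of_neg ?_ ?_ <;> simpa using h

lemma summable_norm_sechCoeff {q : ℂ} (hq : ‖q‖ < 1) : Summable fun d => ‖sechCoeff q d‖ :=
  .of_nonneg_of_le (fun _ => norm_nonneg _) (norm_sechCoeff_le hq)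
    ((summable_pow_natAbs (norm_nonneg q) hq).mul_left _)

lemma norm_inv_one_add_zpow_le {q : ℂ} (hq : ‖q‖ < 1) (h0 : q ≠ 0) (d : ℤ) :
    ‖(1 + q ^ (2 * d))⁻¹‖ ≤ (1 - ‖q‖ ^ 2)⁻¹ := by
  obtain ⟨n, rfl | rfl⟩ := d.eq_nat_or_neg
  · exact_mod_cast norm_inv_one_add_pow_le hq n
  · have h := norm_inv_one_add_pow_le hq n
    have e : (1 + q ^ (2 * -(n : ℤ)))⁻¹ = q ^ (2 * n) * (1 + q ^ (2 * n))⁻¹ := by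
      have hn := one_add_zpow_ne_zero hq h0 n
      have h1 : q ^ (2 * -(n : ℤ)) = (q ^ (2 * n))⁻¹ := by
        rw [show 2 * -(n : ℤ) = -((2 * n : ℕ) : ℤ) by push_cast; ring, zpow_neg, zpow_natCast]
      have h2 : (1 : ℂ) + q ^ (2 * n) ≠ 0 := by exact_mod_cast hn
      have h3 : q ^ (2 * n) ≠ 0 := pow_ne_zero _ h0
      rw [h1, show (1 : ℂ) + (q ^ (2 * n))⁻¹ = (1 + q ^ (2 * n)) * (q ^ (2 * n))⁻¹ by
        field_simp; ring, mul_inv, inv_inv, mul_comm]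
    rw [e, norm_mul, norm_pow]
    refine le_trans (mul_le_of_le_one_left (norm_nonneg _) ?_) h
    exact pow_le_one₀ (norm_nonneg _) hq.le

/-- The Lambert series `∑ q ^ d / (1 + q ^ (2 * d))` over the integers. -/
noncomputable def sechSeries (q : ℂ) : ℂ := ∑' d, sechCoeff q d

/-- The partial theta quotients in the Jordan-Kronecker product. -/
noncomputable def jkCoeff (q : ℂ) (N : ℤ) : ℂ :=
  ∑' n : ℤ, (-1) ^ n.natAbs * q ^ (n ^ 2 - n) * (1 + q ^ (2 * (N - n)))⁻¹

lemma zpow_sq_sub_eq {q : ℂ} (n : ℤ) (h0 : q ≠ 0) :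
    q ^ (n ^ 2 - n) = q ^ (n.natAbs ^ 2) * q ^ (-n) := by
  rw [sub_eq_add_neg, zpow_add₀ h0]
  congr 1
  rw [← Int.natAbs_sq]
  norm_cast

lemma summable_norm_zpow_sq_sub {q : ℂ} (hq : ‖q‖ < 1) (h0 : q ≠ 0) :
    Summable fun n : ℤ => ‖q ^ (n ^ 2 - n)‖ := by
  have hpos := norm_pos_iff.mpr h0
  have hb := (summable_pow_natAbs (norm_nonneg q) hq).mul_left (‖q‖⁻¹)
  refine .of_nonneg_of_le (fun _ => norm_nonneg _) (fun n => ?_) hb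
  rw [norm_zpow, ← zpow_natCast, ← zpow_neg_one, ← zpow_add₀ hpos.ne']
  refine zpow_le_zpow_right_of_le_one₀ hpos hq.le ?_
  rcases le_total 0 n with h | h
  · have e : (n.natAbs : ℤ) = n := by omega
    rw [e]; nlinarith [sq_nonneg (n - 1)]
  · have e : (n.natAbs : ℤ) = -n := by omega
    rw [e]; nlinarith [sq_nonneg n]

lemma summable_norm_jk {q : ℂ} (hq : ‖q‖ < 1) (h0 : q ≠ 0) (N : ℤ) :
    Summable fun n : ℤ => ‖(-1) ^ n.natAbs * q ^ (n ^ 2 - n) * (1 + q ^ (2 * (N - n)))⁻¹‖ := by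
  refine .of_nonneg_of_le (fun _ => norm_nonneg _) (fun n => ?_)
    ((summable_norm_zpow_sq_sub hq h0).mul_right (1 - ‖q‖ ^ 2)⁻¹)
  rw [norm_mul, norm_mul, norm_pow, norm_neg, norm_one, one_pow, one_mul]
  exact mul_le_mul_of_nonneg_left (norm_inv_one_add_zpow_le hq h0 _) (norm_nonneg _)

lemma neg_one_pow_natAbs_one_sub (n : ℤ) : (-1 : ℂ) ^ (1 - n).natAbs = -(-1) ^ n.natAbs := by
  rcases Int.even_or_odd n with h | h
  · have h' : Odd (1 - n) := odd_one.sub_even h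
    rw [(Int.natAbs_even.mpr h).neg_one_pow, (Int.natAbs_odd.mpr h').neg_one_pow]
  · have h' : Even (1 - n) := odd_one.sub_odd h
    rw [(Int.natAbs_odd.mpr h).neg_one_pow, (Int.natAbs_even.mpr h').neg_one_pow, neg_neg]

lemma tsum_alternating_zpow_sq_sub (q : ℂ) : ∑' n : ℤ, (-1) ^ n.natAbs * q ^ (n ^ 2 - n) = 0 := by
  have h := (Equiv.subLeft (1 : ℤ)).tsum_eq (fun n : ℤ => (-1) ^ n.natAbs * q ^ (n ^ 2 - n))
  have h2 : ∑' n : ℤ, (-1) ^ (Equiv.subLeft (1 : ℤ) n).natAbs *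
      q ^ ((Equiv.subLeft (1 : ℤ) n) ^ 2 - (Equiv.subLeft (1 : ℤ) n))
      = -∑' n : ℤ, (-1) ^ n.natAbs * q ^ (n ^ 2 - n) := by
    rw [← tsum_neg]
    refine tsum_congr fun n => ?_
    rw [Equiv.subLeft_apply, neg_one_pow_natAbs_one_sub,
      show (1 - n) ^ 2 - (1 - n) = n ^ 2 - n by ring, neg_mul]
  rw [h2] at h
  linear_combination (-1 / 2 : ℂ) * h

lemma jkCoeff_succ {q : ℂ} (hq : ‖q‖ < 1) (h0 : q ≠ 0) (N : ℤ) :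
    jkCoeff q (N + 1) = q ^ (2 * N) * jkCoeff q N := by
  have h := (Equiv.subRight (1 : ℤ)).tsum_eq
    (fun n : ℤ => (-1) ^ n.natAbs * q ^ (n ^ 2 - n) * (1 + q ^ (2 * (N - n)))⁻¹)
  have hs := ((Equiv.subRight (1 : ℤ)).summable_iff).mpr (summable_norm_jk hq h0 N).of_norm
  simp only [Function.comp_def] at hs
  unfold jkCoeff
  rw [← h, ← sub_eq_zero, ← tsum_mul_left,
    ← (summable_norm_jk hq h0 (N + 1)).of_norm.tsum_sub (hs.mul_left _),
    ← tsum_alternating_zpow_sq_sub q]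
  refine tsum_congr fun n => ?_
  have e1 := neg_one_pow_natAbs_one_sub n
  rw [← Int.natAbs_neg, neg_sub] at e1
  have hne := one_add_zpow_ne_zero hq h0 (N + 1 - n)
  have e2 : q ^ (2 * N) * q ^ ((n - 1) ^ 2 - (n - 1)) = q ^ (n ^ 2 - n) *
      q ^ (2 * (N + 1 - n)) := by
    rw [← zpow_add₀ h0, ← zpow_add₀ h0]
    congr 1; ring
  simp only [Equiv.subRight_apply]
  rw [e1, show N - (n - 1) = N + 1 - n by ring]
  calc _ = (-1) ^ n.natAbs * (q ^ (n ^ 2 - n) + q ^ (2 * N) * q ^ ((n - 1) ^ 2 - (n - 1))) *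
        (1 + q ^ (2 * (N + 1 - n)))⁻¹ := by ring
    _ = (-1) ^ n.natAbs * q ^ (n ^ 2 - n) *
        ((1 + q ^ (2 * (N + 1 - n))) * (1 + q ^ (2 * (N + 1 - n)))⁻¹) := by rw [e2]; ring
    _ = _ := by rw [mul_inv_cancel₀ hne, mul_one]

lemma jkCoeff_eq {q : ℂ} (hq : ‖q‖ < 1) (h0 : q ≠ 0) (N : ℤ) :
    jkCoeff q N = q ^ (N ^ 2 - N) * jkCoeff q 0 := by
  induction N using Int.induction_on with
  | zero => simp
  | succ n ih =>
    rw [jkCoeff_succ hq h0, ih, ← mul_assoc, ← zpow_add₀ h0]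
    congr 2; ring
  | pred n ih =>
    have h := jkCoeff_succ hq h0 (-n - 1)
    rw [sub_add_cancel, ih] at h
    have hne : q ^ (2 * (-(n : ℤ) - 1)) ≠ 0 := zpow_ne_zero _ h0
    apply mul_left_cancel₀ hne
    rw [← h, ← mul_assoc, ← zpow_add₀ h0]
    congr 2; ring

lemma tsum_jk_mul {q x : ℂ} (hq : ‖q‖ < 1) (h0 : q ≠ 0) (hx : x = 1 ∨ x = -1) :
    thetaSeries (-x * q) * ∑' d : ℤ, x ^ d.natAbs * sechCoeff q d =
      jkCoeff q 0 * thetaSeries (x * q) := by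
  have hx1 : ‖x‖ = 1 := by rcases hx with rfl | rfl <;> simp
  have hxx : x * x = 1 := by rcases hx with rfl | rfl <;> simp
  have hs1 := summable_norm_thetaSeries (q := -x * q) (by simpa [hx1] using hq)
  have hs2 : Summable fun d : ℤ => ‖x ^ d.natAbs * sechCoeff q d‖ := by
    simpa [hx1] using summable_norm_sechCoeff hq
  have hxp : ∀ n : ℤ, x ^ (n.natAbs ^ 2) = x ^ n.natAbs := by
    intro n
    rcases hx with rfl | rfl
    · simp
    · exact neg_one_pow_natAbs_sq n
  have hxz : ∀ n : ℤ, x ^ n.natAbs = x ^ n := by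
    intro n
    obtain ⟨k, rfl | rfl⟩ := n.eq_nat_or_neg
    · simp
    · rcases hx with rfl | rfl
      · simp
      · simp [← inv_pow]
  have hx0 : x ≠ 0 := by rintro rfl; simp at hxx
  let e : ℤ × ℤ ≃ ℤ × ℤ :=
    ⟨fun p => (p.2, p.1 - p.2), fun p => (p.1 + p.2, p.1), fun p => by simp, fun p => by simp⟩
  have hS := (e.summable_iff).mpr (summable_mul_of_summable_norm hs1 hs2)
  simp only [Function.comp_def] at hS
  rw [thetaSeries, tsum_mul_tsum_of_summable_norm hs1 hs2, ← e.tsum_eq,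
    hS.tsum_prod, thetaSeries, ← tsum_mul_left]
  refine tsum_congr fun N => ?_
  have : ∀ n : ℤ, (-x * q) ^ (n.natAbs ^ 2) * (x ^ (N - n).natAbs * sechCoeff q (N - n))
      = x ^ N * q ^ N * ((-1) ^ n.natAbs * q ^ (n ^ 2 - n) * (1 + q ^ (2 * (N - n)))⁻¹) := by
    intro n
    rw [zpow_sq_sub_eq n h0, sechCoeff, neg_mul, neg_pow, mul_pow, hxp, hxz, hxz,
      neg_one_pow_natAbs_sq, sub_eq_add_neg, zpow_add₀ hx0, zpow_add₀ h0, div_eq_mul_inv]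
    have : x ^ n * x ^ (-n) = 1 := by rw [← zpow_add₀ hx0]; simp
    linear_combination (-1) ^ n.natAbs * q ^ (n.natAbs ^ 2) * x ^ N *  q ^ N * q ^ (-n) *
        (1 + q ^ (2 * (N + -n)))⁻¹ * this
  simp only [e, Equiv.coe_fn_mk, this]
  rw [tsum_mul_left]
  change _ * jkCoeff q N = _
  rw [jkCoeff_eq hq h0, zpow_sq_sub_eq N h0, mul_pow, hxp, hxz]
  have : q ^ N * q ^ (-N) = 1 := by rw [← zpow_add₀ h0]; simp
  linear_combination x ^ N * q ^ (N.natAbs ^ 2) * jkCoeff q 0 * this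

lemma sechCoeff_two_mul (q : ℂ) (d : ℤ) : sechCoeff q (2 * d) = sechCoeff (q ^ 2) d := by
  have h (n : ℤ) : q ^ (2 * n) = (q ^ 2) ^ n := by
    rw [zpow_mul]; norm_cast
  rw [sechCoeff, sechCoeff, h, h]

lemma tsum_alternating_sechCoeff {q : ℂ} (hq : ‖q‖ < 1) :
    ∑' d : ℤ, (-1) ^ d.natAbs * sechCoeff q d = 2 * sechSeries (q ^ 2) - sechSeries q := by
  have h1 := (summable_norm_sechCoeff hq).of_norm
  have h2 : Summable fun d : ℤ => (-1) ^ d.natAbs * sechCoeff q d :=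
    Summable.of_norm (by simpa using summable_norm_sechCoeff hq)
  rw [eq_sub_iff_add_eq, sechSeries, sechSeries, ← h2.tsum_add h1, ← tsum_mul_left]
  have hinj : Function.Injective (fun k : ℤ => 2 * k) := fun a b h => by
    simpa using h
  rw [← hinj.tsum_eq]
  · refine tsum_congr fun d => ?_
    rw [sechCoeff_two_mul, (Int.natAbs_even.mpr (even_two_mul d)).neg_one_pow]
    ring
  · intro n hn
    rcases Int.even_or_odd n with h | h
    · obtain ⟨k, rfl⟩ := h
      exact ⟨k, by ring⟩
    · exfalso
      apply hn
      simp [(Int.natAbs_odd.mpr h).neg_one_pow]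

lemma sechSeries_mul_thetaSeries {q : ℂ} (hq : ‖q‖ < 1) (h0 : q ≠ 0) :
    sechSeries q * thetaSeries (q ^ 2) ^ 2 = thetaSeries q ^ 2 * sechSeries (q ^ 2) := by
  have h1 := tsum_jk_mul hq h0 (x := 1) (.inl rfl)
  have h2 := tsum_jk_mul hq h0 (x := -1) (.inr rfl)
  rw [tsum_alternating_sechCoeff hq] at h2
  simp only [one_pow, one_mul, neg_mul, neg_neg] at h1 h2
  change _ * sechSeries q = _ at h1
  have h3 := thetaSeries_sq_add_sq hq
  linear_combination (-1 / 2 : ℂ) * sechSeries q * h3 +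
      (thetaSeries (-q) * h1 - thetaSeries q * h2) / 2

lemma continuousAt_sechSeries_zero : ContinuousAt sechSeries 0 := by
  have : ContinuousOn sechSeries (Metric.ball 0 (1 / 2)) := by
    have e : sechSeries = fun q => ∑' d : ℤ, q ^ d.natAbs / (1 + q ^ (2 * d.natAbs)) := by
      funext q
      exact tsum_congr (sechCoeff_eq_natAbs q)
    rw [e]
    refine continuousOn_tsum (u := fun d : ℤ => (1 - (1 / 2 : ℝ) ^ 2)⁻¹ * (1 / 2) ^ d.natAbs) ?_
      ((summable_pow_natAbs (by norm_num) (by norm_num)).mul_left _) ?_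
    · intro d
      refine ContinuousOn.div (by fun_prop) (by fun_prop) ?_
      intro q hq h
      rw [mem_ball_zero_iff] at hq
      rcases Nat.eq_zero_or_pos d.natAbs with h' | h'
      · rw [h'] at h; norm_num at h
      · have := norm_pow_lt_one (q := q) (by linarith) (k := 2 * d.natAbs) (by omega)
        rw [eq_neg_of_add_eq_zero_right h] at this
        simp at this
    · intro d q hq
      rw [mem_ball_zero_iff] at hq
      rw [← sechCoeff_eq_natAbs]
      refine (norm_sechCoeff_le (by linarith) d).trans ?_
      have hb : ‖q‖ ^ 2 ≤ (1 / 2) ^ 2 := pow_le_pow_left₀ (norm_nonneg _) hq.le 2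
      gcongr
  exact this.continuousAt (Metric.ball_mem_nhds 0 (by norm_num))

lemma sechSeries_zero : sechSeries 0 = 1 / 2 := by
  rw [sechSeries, tsum_eq_single 0]
  · norm_num [sechCoeff]
  · intro d hd
    simp [sechCoeff, zero_zpow d hd]

/-- Jacobi's Lambert series for the square of the theta series. -/
lemma sechSeries_eq {q : ℂ} (hq : ‖q‖ < 1) : sechSeries q = thetaSeries q ^ 2 / 2 := by
  rcases eq_or_ne q 0 with rfl | h0
  · rw [sechSeries_zero, thetaSeries_zero, one_pow]
  have key : ∀ n : ℕ, sechSeries (q ^ 2 ^ n) / thetaSeries (q ^ 2 ^ n) ^ 2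
      = sechSeries q / thetaSeries q ^ 2 := by
    intro n
    induction n with
    | zero => simp
    | succ n ih =>
      have hn := norm_pow_lt_one hq (k := 2 ^ n) (by positivity)
      have h := sechSeries_mul_thetaSeries hn (pow_ne_zero _ h0)
      rw [← pow_mul, ← pow_succ] at h
      have h1 := thetaSeries_ne_zero hn
      have h2 := thetaSeries_ne_zero (norm_pow_lt_one hq (k := 2 ^ (n + 1)) (by positivity))
      rw [← ih]
      field_simp
      linear_combination -h
  have ht : Tendsto (fun n : ℕ => sechSeries (q ^ 2 ^ n) / thetaSeries (q ^ 2 ^ n) ^ 2) atTop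
      (𝓝 (1 / 2)) := by
    have h1 := continuousAt_sechSeries_zero.tendsto.comp (tendsto_pow_two_pow hq)
    have h2 := (continuousAt_thetaSeries (q := 0) (by simp)).tendsto.comp (tendsto_pow_two_pow hq)
    have := h1.div (h2.pow 2) (by simp [thetaSeries_zero])
    simp only [Function.comp_def, Pi.div_def] at this
    simpa [thetaSeries_zero, sechSeries_zero] using this
  simp only [key] at ht
  have h := tendsto_nhds_unique ht tendsto_const_nhds
  have hne := thetaSeries_ne_zero hq
  field_simp at h
  linear_combination -h / 2

/-- The hyperbolic cosecant coefficient `1 / (q ^ (-d) - q ^ d)`. -/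
noncomputable def cschCoeff (q : ℂ) (d : ℤ) : ℂ := q ^ d / (1 - q ^ (2 * d))

/-- The hyperbolic tangent coefficient. -/
noncomputable def tanhCoeff (q : ℂ) (d : ℤ) : ℂ := (1 - q ^ (2 * d)) / (1 + q ^ (2 * d))

/-- The hyperbolic cotangent coefficient. -/
noncomputable def cothCoeff (q : ℂ) (d : ℤ) : ℂ := (1 + q ^ (2 * d)) / (1 - q ^ (2 * d))

/-- The indicator of the odd integers. -/
noncomputable def oddInd (d : ℤ) : ℂ := (1 - (-1) ^ d) / 2

lemma oddInd_of_odd {d : ℤ} (h : Odd d) : oddInd d = 1 := by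
  rw [oddInd, h.neg_one_zpow]; norm_num

lemma oddInd_of_even {d : ℤ} (h : Even d) : oddInd d = 0 := by
  rw [oddInd, h.neg_one_zpow]; norm_num

lemma oddInd_neg (d : ℤ) : oddInd (-d) = oddInd d := by
  rcases Int.even_or_odd d with h | h
  · rw [oddInd_of_even h, oddInd_of_even h.neg]
  · rw [oddInd_of_odd h, oddInd_of_odd h.neg]

lemma norm_oddInd_le (d : ℤ) : ‖oddInd d‖ ≤ 1 := by
  rcases Int.even_or_odd d with h | h
  · simp [oddInd_of_even h]
  · simp [oddInd_of_odd h]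

lemma one_sub_zpow_ne_zero {q : ℂ} (hq : ‖q‖ < 1) (h0 : q ≠ 0) {d : ℤ} (hd : d ≠ 0) :
    1 - q ^ (2 * d) ≠ 0 := by
  intro h
  have h1 : q ^ (2 * d) = 1 := by linear_combination -h
  have h3 : ‖q‖ ^ (2 * d) = ‖q‖ ^ (0 : ℤ) := by rw [← norm_zpow, h1]; simp
  have h4 := zpow_right_injective₀ (norm_pos_iff.mpr h0) hq.ne h3
  omega

lemma cschCoeff_neg {q : ℂ} (hq : ‖q‖ < 1) (h0 : q ≠ 0) (d : ℤ) :
    cschCoeff q (-d) = -cschCoeff q d := by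
  rcases eq_or_ne d 0 with rfl | hd
  · simp [cschCoeff]
  have h1 := one_sub_zpow_ne_zero hq h0 hd
  have h2 := one_sub_zpow_ne_zero hq h0 (neg_ne_zero.mpr hd)
  have hz : q ^ d ≠ 0 := zpow_ne_zero _ h0
  have e2 : q ^ (2 * d) = (q ^ d) ^ 2 := by rw [mul_comm, zpow_mul]; norm_cast
  have e1 : q ^ (2 * -d) = ((q ^ d) ^ 2)⁻¹ := by
    rw [← e2, mul_neg, zpow_neg]
  unfold cschCoeff
  rw [← neg_div, div_eq_div_iff h2 h1, zpow_neg, e1, e2]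
  field_simp
  ring

lemma norm_inv_one_sub_pow_le {q : ℂ} (hq : ‖q‖ < 1) (n : ℕ) :
    ‖(1 - q ^ (2 * n))⁻¹‖ ≤ (1 - ‖q‖ ^ 2)⁻¹ := by
  have h2 : ‖q‖ ^ 2 < 1 := pow_lt_one₀ (norm_nonneg _) hq two_ne_zero
  rcases Nat.eq_zero_or_pos n with rfl | hn
  · simpa using h2.le
  rw [norm_inv]
  refine inv_anti₀ (by linarith) ?_
  have h3 : ‖q ^ (2 * n)‖ ≤ ‖q‖ ^ 2 := by
    rw [norm_pow]
    exact pow_le_pow_of_le_one (norm_nonneg _) hq.le (by omega)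
  have := norm_sub_norm_le (1 : ℂ) (q ^ (2 * n))
  rw [norm_one] at this
  linarith

lemma norm_cschCoeff_le {q : ℂ} (hq : ‖q‖ < 1) (h0 : q ≠ 0) (d : ℤ) :
    ‖cschCoeff q d‖ ≤ (1 - ‖q‖ ^ 2)⁻¹ * ‖q‖ ^ d.natAbs := by
  have key (n : ℕ) : ‖cschCoeff q n‖ ≤ (1 - ‖q‖ ^ 2)⁻¹ * ‖q‖ ^ n := by
    have e : cschCoeff q n = (1 - q ^ (2 * n))⁻¹ * q ^ n := by
      unfold cschCoeff
      norm_cast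
      rw [div_eq_mul_inv, mul_comm]
    rw [e, norm_mul, norm_pow]
    exact mul_le_mul_of_nonneg_right (norm_inv_one_sub_pow_le hq n) (by positivity)
  obtain ⟨n, rfl | rfl⟩ := d.eq_nat_or_neg
  · simpa using key n
  · rw [cschCoeff_neg hq h0]
    simpa using key n

lemma summable_natAbs_pow_mul_pow (k : ℕ) {r : ℝ} (h0 : 0 ≤ r) (h1 : r < 1) :
    Summable fun n : ℤ => (n.natAbs : ℝ) ^ k * r ^ n.natAbs := by
  have h := summable_pow_mul_geometric_of_norm_lt_one (R := ℝ) k (r := r)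
    (by rwa [Real.norm_of_nonneg h0])
  refine Summable.of_nat_of_neg ?_ ?_ <;> simpa using h

lemma norm_intCast_pow (n : ℤ) (k : ℕ) : ‖(n : ℂ) ^ k‖ = (n.natAbs : ℝ) ^ k := by
  rw [norm_pow, Complex.norm_intCast]
  congr 1
  rw [Nat.cast_natAbs, Int.cast_abs]

lemma summable_norm_pow_mul_sechCoeff {q : ℂ} (hq : ‖q‖ < 1) (k : ℕ) :
    Summable fun d : ℤ => ‖(d : ℂ) ^ k * sechCoeff q d‖ := by
  refine .of_nonneg_of_le (fun _ => norm_nonneg _) (fun d => ?_)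
    ((summable_natAbs_pow_mul_pow k (norm_nonneg q) hq).mul_left (1 - ‖q‖ ^ 2)⁻¹)
  rw [norm_mul, norm_intCast_pow, mul_left_comm]
  exact mul_le_mul_of_nonneg_left (norm_sechCoeff_le hq d) (by positivity)

lemma summable_norm_pow_mul_cschCoeff {q : ℂ} (hq : ‖q‖ < 1) (h0 : q ≠ 0) (k : ℕ) :
    Summable fun d : ℤ => ‖(d : ℂ) ^ k * cschCoeff q d‖ := by
  refine .of_nonneg_of_le (fun _ => norm_nonneg _) (fun d => ?_)
    ((summable_natAbs_pow_mul_pow k (norm_nonneg q) hq).mul_left (1 - ‖q‖ ^ 2)⁻¹)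
  rw [norm_mul, norm_intCast_pow, mul_left_comm]
  exact mul_le_mul_of_nonneg_left (norm_cschCoeff_le hq h0 d) (by positivity)

lemma summable_norm_cschCoeff {q : ℂ} (hq : ‖q‖ < 1) (h0 : q ≠ 0) :
    Summable fun d : ℤ => ‖cschCoeff q d‖ := by
  simpa using summable_norm_pow_mul_cschCoeff hq h0 0

lemma summable_norm_oddInd_mul {f : ℤ → ℂ} (hf : Summable fun d => ‖f d‖) :
    Summable fun d => ‖oddInd d * f d‖ := by
  refine .of_nonneg_of_le (fun _ => norm_nonneg _) (fun d => ?_) hf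
  rw [norm_mul]
  exact mul_le_of_le_one_left (norm_nonneg _) (norm_oddInd_le d)

lemma summable_norm_mul_zpow {f : ℤ → ℂ} (hf : Summable fun d => ‖f d‖) {x : ℂ} (hx : ‖x‖ = 1) :
    Summable fun d => ‖f d * x ^ d‖ := by
  simpa [hx] using hf

lemma summable_convolution {f g : ℤ → ℂ} (hf : Summable fun d => ‖f d‖)
    (hg : Summable fun d => ‖g d‖) (n : ℤ) : Summable fun d => f d * g (n - d) := by
  let e : ℤ × ℤ ≃ ℤ × ℤ :=
    ⟨fun p => (p.2, p.1 - p.2), fun p => (p.1 + p.2, p.1), fun p => by simp, fun p => by simp⟩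
  exact ((e.summable_iff).mpr (summable_mul_of_summable_norm hf hg)).prod_factor n

lemma tsum_mul_tsum_zpow {f g : ℤ → ℂ} (hf : Summable fun d => ‖f d‖)
    (hg : Summable fun d => ‖g d‖) {x : ℂ} (hx : ‖x‖ = 1) :
    (∑' d, f d * x ^ d) * ∑' d, g d * x ^ d = ∑' n, (∑' d, f d * g (n - d)) * x ^ n := by
  let e : ℤ × ℤ ≃ ℤ × ℤ :=
    ⟨fun p => (p.2, p.1 - p.2), fun p => (p.1 + p.2, p.1), fun p => by simp, fun p => by simp⟩
  have hf' := summable_norm_mul_zpow hf hx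
  have hg' := summable_norm_mul_zpow hg hx
  have hS := (e.summable_iff).mpr (summable_mul_of_summable_norm hf' hg')
  simp only [Function.comp_def] at hS
  have hx0 : x ≠ 0 := by rintro rfl; simp at hx
  rw [tsum_mul_tsum_of_summable_norm hf' hg', ← e.tsum_eq, hS.tsum_prod]
  refine tsum_congr fun n => ?_
  rw [← tsum_mul_right]
  refine tsum_congr fun d => ?_
  simp only [e, Equiv.coe_fn_mk]
  have : x ^ d * x ^ (n - d) = x ^ n := by rw [← zpow_add₀ hx0]; simp
  linear_combination f d * g (n - d) * this

lemma tsum_eq_zero_of_odd {f : ℤ → ℂ} (hf : ∀ d, f (-d) = -f d) : ∑' d, f d = 0 := by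
  have h := (Equiv.neg ℤ).tsum_eq f
  simp only [Equiv.neg_apply, hf, tsum_neg] at h
  linear_combination (-1 / 2 : ℂ) * h

lemma sechCoeff_mul {q : ℂ} (hq : ‖q‖ < 1) (h0 : q ≠ 0) {n : ℤ} (hn : n ≠ 0) (d : ℤ) :
    sechCoeff q d * sechCoeff q (n - d) =
      cschCoeff q n / 2 * (tanhCoeff q d - tanhCoeff q (d - n)) := by
  have h1 := one_add_zpow_ne_zero hq h0 d
  have h2 := one_add_zpow_ne_zero hq h0 (n - d)
  have h3 := one_sub_zpow_ne_zero hq h0 hn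
  have h4 := one_add_zpow_ne_zero hq h0 (d - n)
  have e1 : q ^ (2 * n) = q ^ (2 * d) * q ^ (2 * (n - d)) := by
    rw [← zpow_add₀ h0]; congr 1; ring
  have e2 : q ^ n = q ^ d * q ^ (n - d) := by
    rw [← zpow_add₀ h0]; congr 1; ring
  have e3 : q ^ (2 * (d - n)) = (q ^ (2 * (n - d)))⁻¹ := by
    rw [← zpow_neg]; congr 1; ring
  have hz : q ^ (2 * (n - d)) ≠ 0 := zpow_ne_zero _ h0
  unfold sechCoeff cschCoeff tanhCoeff
  rw [e1] at h3 ⊢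
  rw [e3] at h4 ⊢
  rw [e2]
  generalize q ^ (2 * d) = a at *
  generalize q ^ (2 * (n - d)) = b at *
  have hb : b + 1 ≠ 0 := by rwa [add_comm]
  have : (1 - b⁻¹) / (1 + b⁻¹) = (b - 1) / (1 + b) := by
    rw [div_eq_div_iff h4 h2]; field_simp; ring
  rw [this]
  field_simp
  ring

lemma cschCoeff_mul_sechCoeff {q : ℂ} (hq : ‖q‖ < 1) (h0 : q ≠ 0) (n : ℤ) {d : ℤ} (hd : d ≠ 0) :
    cschCoeff q d * sechCoeff q (n - d) =
      sechCoeff q n / 2 * (cothCoeff q d - tanhCoeff q (d - n)) := by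
  have h1 := one_sub_zpow_ne_zero hq h0 hd
  have h2 := one_add_zpow_ne_zero hq h0 (n - d)
  have h3 := one_add_zpow_ne_zero hq h0 n
  have h4 := one_add_zpow_ne_zero hq h0 (d - n)
  have e1 : q ^ (2 * n) = q ^ (2 * d) * q ^ (2 * (n - d)) := by
    rw [← zpow_add₀ h0]; congr 1; ring
  have e2 : q ^ n = q ^ d * q ^ (n - d) := by
    rw [← zpow_add₀ h0]; congr 1; ring
  have e3 : q ^ (2 * (d - n)) = (q ^ (2 * (n - d)))⁻¹ := by
    rw [← zpow_neg]; congr 1; ring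
  have hz : q ^ (2 * (n - d)) ≠ 0 := zpow_ne_zero _ h0
  unfold sechCoeff cschCoeff tanhCoeff cothCoeff
  rw [e1] at h3 ⊢
  rw [e3] at h4 ⊢
  rw [e2]
  generalize q ^ (2 * d) = a at *
  generalize q ^ (2 * (n - d)) = b at *
  have hb : b + 1 ≠ 0 := by rwa [add_comm]
  have : (1 - b⁻¹) / (1 + b⁻¹) = (b - 1) / (1 + b) := by
    rw [div_eq_div_iff h4 h2]; field_simp; ring
  rw [this]
  field_simp
  ring

lemma cschCoeff_mul {q : ℂ} (hq : ‖q‖ < 1) (h0 : q ≠ 0) {n : ℤ} (hn : n ≠ 0) {d : ℤ} (hd : d ≠ 0)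
    (hnd : n - d ≠ 0) :
    cschCoeff q d * cschCoeff q (n - d) =
      cschCoeff q n / 2 * (cothCoeff q d - cothCoeff q (d - n)) := by
  have h1 := one_sub_zpow_ne_zero hq h0 hd
  have h2 := one_sub_zpow_ne_zero hq h0 hnd
  have h3 := one_sub_zpow_ne_zero hq h0 hn
  have h4 := one_sub_zpow_ne_zero hq h0 (d := d - n) (by omega)
  have e1 : q ^ (2 * n) = q ^ (2 * d) * q ^ (2 * (n - d)) := by
    rw [← zpow_add₀ h0]; congr 1; ring
  have e2 : q ^ n = q ^ d * q ^ (n - d) := by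
    rw [← zpow_add₀ h0]; congr 1; ring
  have e3 : q ^ (2 * (d - n)) = (q ^ (2 * (n - d)))⁻¹ := by
    rw [← zpow_neg]; congr 1; ring
  have hz : q ^ (2 * (n - d)) ≠ 0 := zpow_ne_zero _ h0
  unfold cschCoeff cothCoeff
  rw [e1] at h3 ⊢
  rw [e3] at h4 ⊢
  rw [e2]
  generalize q ^ (2 * d) = a at *
  generalize q ^ (2 * (n - d)) = b at *
  have : (1 + b⁻¹) / (1 - b⁻¹) = -(b + 1) / (1 - b) := by
    rw [div_eq_div_iff h4 h2]; field_simp; ring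
  rw [this]
  field_simp
  ring

lemma cothCoeff_sub_tanhCoeff {q : ℂ} (hq : ‖q‖ < 1) (h0 : q ≠ 0) {d : ℤ} (hd : d ≠ 0) :
    cothCoeff q d - tanhCoeff q d = 4 * cschCoeff (q ^ 2) d := by
  have h1 := one_sub_zpow_ne_zero hq h0 hd
  have h2 := one_add_zpow_ne_zero hq h0 d
  have e1 : (q ^ 2) ^ d = q ^ (2 * d) := by rw [zpow_mul]; norm_cast
  have e2 : (q ^ 2) ^ (2 * d) = (q ^ (2 * d)) ^ 2 := by
    rw [← e1, mul_comm, zpow_mul]; norm_cast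
  unfold cothCoeff tanhCoeff cschCoeff
  rw [e1, e2]
  rw [show (1 : ℂ) - (q ^ (2 * d)) ^ 2 = (1 - q ^ (2 * d)) * (1 + q ^ (2 * d)) by ring]
  generalize q ^ (2 * d) = a at *
  field_simp
  ring

lemma tanhCoeff_neg {q : ℂ} (hq : ‖q‖ < 1) (h0 : q ≠ 0) (d : ℤ) :
    tanhCoeff q (-d) = -tanhCoeff q d := by
  have h1 := one_add_zpow_ne_zero hq h0 d
  have h2 := one_add_zpow_ne_zero hq h0 (-d)
  have hz : q ^ (2 * d) ≠ 0 := zpow_ne_zero _ h0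
  unfold tanhCoeff
  rw [← neg_div, div_eq_div_iff h2 h1, mul_neg, zpow_neg]
  field_simp
  ring

lemma summable_tanhCoeff_sub {q : ℂ} (hq : ‖q‖ < 1) (h0 : q ≠ 0) (n : ℤ) :
    Summable fun d => ‖tanhCoeff q d - tanhCoeff q (d - n)‖ := by
  rcases eq_or_ne n 0 with rfl | hn
  · simp
  have hc := summable_norm_sechCoeff hq
  have h := ((summable_convolution hc hc n).norm).mul_left ‖(cschCoeff q n / 2)⁻¹‖
  refine h.congr fun d => ?_
  have hne : cschCoeff q n / 2 ≠ 0 :=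
    div_ne_zero (div_ne_zero (zpow_ne_zero _ h0) (one_sub_zpow_ne_zero hq h0 hn)) two_ne_zero
  rw [sechCoeff_mul hq h0 hn, ← norm_mul, inv_mul_cancel_left₀ hne]

lemma tendsto_tanhCoeff {q : ℂ} (hq : ‖q‖ < 1) :
    Tendsto (fun n : ℕ => tanhCoeff q n) atTop (𝓝 1) := by
  have h : Tendsto (fun n : ℕ => q ^ (2 * n)) atTop (𝓝 0) := by
    simp only [pow_mul]
    exact tendsto_pow_atTop_nhds_zero_of_norm_lt_one (norm_pow_lt_one hq two_ne_zero)
  have := (tendsto_const_nhds (x := (1 : ℂ)) |>.sub h).div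
      (tendsto_const_nhds (x := (1 : ℂ)) |>.add h)
    (by simp)
  simp only [sub_zero, add_zero, div_one] at this
  refine this.congr fun n => ?_
  simp only [Pi.div_apply, tanhCoeff]
  norm_cast

lemma tsum_tanhCoeff_succ_sub {q : ℂ} (hq : ‖q‖ < 1) (h0 : q ≠ 0) :
    ∑' d : ℤ, (tanhCoeff q (d + 1) - tanhCoeff q d) = 2 := by
  have hs : Summable fun d : ℤ => tanhCoeff q (d + 1) - tanhCoeff q d := by
    have := ((Equiv.addRight (1 : ℤ)).summable_iff).mpr (summable_tanhCoeff_sub hq h0 1).of_norm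
    simpa [Function.comp_def] using this
  have hn : Summable fun d : ℕ => tanhCoeff q ((d : ℤ) + 1) - tanhCoeff q d :=
    hs.comp_injective Nat.cast_injective
  have e (n : ℕ) : tanhCoeff q (-((n : ℤ) + 1) + 1) - tanhCoeff q (-((n : ℤ) + 1))
      = tanhCoeff q ((n : ℤ) + 1) - tanhCoeff q n := by
    rw [show -((n : ℤ) + 1) + 1 = -n by ring, tanhCoeff_neg hq h0, tanhCoeff_neg hq h0]
    ring
  have h1 : HasSum (fun d : ℕ => tanhCoeff q ((d : ℤ) + 1) - tanhCoeff q d) 1 := by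
    rw [hn.hasSum_iff_tendsto_nat]
    have (N : ℕ) : ∑ d ∈ Finset.range N, (tanhCoeff q ((d : ℤ) + 1) - tanhCoeff q d)
        = tanhCoeff q N := by
      have := Finset.sum_range_sub (fun n : ℕ => tanhCoeff q n) N
      push_cast at this
      rw [this]
      simp [tanhCoeff]
    simp only [this]
    exact tendsto_tanhCoeff hq
  have h2 : HasSum (fun n : ℕ =>
    tanhCoeff q (-((n : ℤ) + 1) + 1) - tanhCoeff q (-((n : ℤ) + 1))) 1 := by
    simpa only [e] using h1
  have := (HasSum.of_nat_of_neg_add_one (f := fun d : ℤ => tanhCoeff q (d + 1) - tanhCoeff q d)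
    h1 h2).tsum_eq
  rw [this]; norm_num

lemma tsum_alternating_tanhCoeff_succ_sub {q : ℂ} (hq : ‖q‖ < 1) (h0 : q ≠ 0) :
    ∑' d : ℤ, (-1) ^ d * (tanhCoeff q (d + 1) - tanhCoeff q d) = 0 := by
  have h := (Equiv.subLeft (-1 : ℤ)).tsum_eq
    (fun d : ℤ => (-1 : ℂ) ^ d * (tanhCoeff q (d + 1) - tanhCoeff q d))
  have e (d : ℤ) : (-1 : ℂ) ^ (-1 - d) * (tanhCoeff q (-1 - d + 1) - tanhCoeff q (-1 - d))
      = -((-1) ^ d * (tanhCoeff q (d + 1) - tanhCoeff q d)) := by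
    rw [show -1 - d + 1 = -d by ring, show -1 - d = -(d + 1) by ring, tanhCoeff_neg hq h0,
      tanhCoeff_neg hq h0, zpow_neg, zpow_add_one₀ (by norm_num)]
    rcases Int.even_or_odd d with h | h <;> rw [h.neg_one_zpow] <;> norm_num <;> ring
  simp only [Equiv.subLeft_apply, e, tsum_neg] at h
  linear_combination (-1 / 2 : ℂ) * h

lemma tsum_tanhCoeff_sub_aux {q x : ℂ} (hq : ‖q‖ < 1) (h0 : q ≠ 0) (hx : ‖x‖ = 1) (n : ℤ) :
    ∑' d : ℤ, x ^ d * (tanhCoeff q d - tanhCoeff q (d - (n + 1))) =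
      ∑' d : ℤ, x ^ d * (tanhCoeff q d - tanhCoeff q (d - n)) +
        x ^ (n + 1) * ∑' d : ℤ, x ^ d * (tanhCoeff q (d + 1) - tanhCoeff q d) := by
  have hx0 : x ≠ 0 := by rintro rfl; simp at hx
  have hs (m : ℤ) : Summable fun d : ℤ => x ^ d * (tanhCoeff q d - tanhCoeff q (d - m)) :=
    .of_norm (by simpa [hx] using summable_tanhCoeff_sub hq h0 m)
  rw [← sub_eq_iff_eq_add', ← (hs _).tsum_sub (hs _), ← tsum_mul_left,
    ← (Equiv.subRight (n + 1)).tsum_eq (fun d => x ^ (n + 1) * (x ^ d * _))]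
  refine tsum_congr fun d => ?_
  rw [Equiv.subRight_apply, ← mul_assoc, ← zpow_add₀ hx0, show d - (n + 1) + 1 = d - n by ring,
    show n + 1 + (d - (n + 1)) = d by ring]
  ring

lemma tsum_tanhCoeff_sub {q : ℂ} (hq : ‖q‖ < 1) (h0 : q ≠ 0) (n : ℤ) :
    ∑' d : ℤ, (tanhCoeff q d - tanhCoeff q (d - n)) = 2 * n := by
  have h := tsum_tanhCoeff_sub_aux (x := 1) hq h0 (by simp)
  simp only [one_zpow, one_mul, tsum_tanhCoeff_succ_sub hq h0] at h
  induction n using Int.induction_on with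
  | zero => simp
  | succ n ih => rw [h, ih]; push_cast; ring
  | pred n ih =>
    have := h (-n - 1)
    rw [sub_add_cancel, ih] at this
    push_cast at this ⊢
    linear_combination -this

lemma tsum_alternating_tanhCoeff_sub {q : ℂ} (hq : ‖q‖ < 1) (h0 : q ≠ 0) (n : ℤ) :
    ∑' d : ℤ, (-1) ^ d * (tanhCoeff q d - tanhCoeff q (d - n)) = 0 := by
  have h := tsum_tanhCoeff_sub_aux (x := -1) hq h0 (by simp)
  simp only [tsum_alternating_tanhCoeff_succ_sub hq h0, mul_zero, add_zero] at h
  induction n using Int.induction_on with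
  | zero => simp
  | succ n ih => rw [h, ih]
  | pred n ih =>
    have := h (-n - 1)
    rw [sub_add_cancel, ih] at this
    exact this.symm

lemma tsum_oddInd_mul_tanhCoeff_sub {q : ℂ} (hq : ‖q‖ < 1) (h0 : q ≠ 0) (n : ℤ) :
    ∑' d : ℤ, oddInd d * (tanhCoeff q d - tanhCoeff q (d - n)) = n := by
  have hs := summable_tanhCoeff_sub hq h0 n
  have hs' : Summable fun d : ℤ => (-1 : ℂ) ^ d * (tanhCoeff q d - tanhCoeff q (d - n)) :=
    .of_norm (by simpa using hs)
  have h : (fun d : ℤ => oddInd d * (tanhCoeff q d - tanhCoeff q (d - n))) =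
      fun d => ((tanhCoeff q d - tanhCoeff q (d - n)) -
        (-1 : ℂ) ^ d * (tanhCoeff q d - tanhCoeff q (d - n))) / 2 := by
    funext d
    rw [oddInd]; ring
  rw [h, tsum_div_const, hs.of_norm.tsum_sub hs', tsum_tanhCoeff_sub hq h0,
    tsum_alternating_tanhCoeff_sub hq h0]
  ring

lemma oddInd_sub_of_even {n : ℤ} (hn : Even n) (d : ℤ) : oddInd (n - d) = oddInd d := by
  rcases Int.even_or_odd d with h | h
  · rw [oddInd_of_even h, oddInd_of_even (hn.sub h)]
  · rw [oddInd_of_odd h, oddInd_of_odd (hn.sub_odd h)]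

lemma tsum_sechCoeff_mul {q : ℂ} (hq : ‖q‖ < 1) (h0 : q ≠ 0) {n : ℤ} (hn : n ≠ 0) :
    ∑' d, sechCoeff q d * sechCoeff q (n - d) = n * cschCoeff q n := by
  simp only [sechCoeff_mul hq h0 hn, tsum_mul_left, tsum_tanhCoeff_sub hq h0]
  ring

lemma tsum_alternating_sechCoeff_mul {q : ℂ} (hq : ‖q‖ < 1) (h0 : q ≠ 0) {n : ℤ} (hn : n ≠ 0) :
    ∑' d, sechCoeff q d * ((-1) ^ (n - d) * sechCoeff q (n - d)) = 0 := by
  have h (d : ℤ) : sechCoeff q d * ((-1) ^ (n - d) * sechCoeff q (n - d)) =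
      (-1) ^ n * cschCoeff q n / 2 * ((-1) ^ d * (tanhCoeff q d - tanhCoeff q (d - n))) := by
    have e : (-1 : ℂ) ^ (n - d) = (-1) ^ n * (-1) ^ d := by
      rw [zpow_sub₀ (by norm_num), div_eq_mul_inv]
      congr 1
      rcases Int.even_or_odd d with h | h <;> rw [h.neg_one_zpow] <;> norm_num
    rw [mul_left_comm, sechCoeff_mul hq h0 hn, e]
    ring
  simp only [h, tsum_mul_left, tsum_alternating_tanhCoeff_sub hq h0, mul_zero]

lemma tsum_oddInd_mul_cschCoeff_sq {q : ℂ} (hq : ‖q‖ < 1) (h0 : q ≠ 0) :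
    ∑' d, oddInd d * cschCoeff (q ^ 2) d = 0 :=
  tsum_eq_zero_of_odd fun d => by
    rw [oddInd_neg, cschCoeff_neg (norm_pow_lt_one hq two_ne_zero) (pow_ne_zero _ h0), mul_neg]

lemma tsum_cschCoeff_mul_sechCoeff {q : ℂ} (hq : ‖q‖ < 1) (h0 : q ≠ 0) (n : ℤ) :
    ∑' d, oddInd d * cschCoeff q d * sechCoeff q (n - d) = n * sechCoeff q n / 2 := by
  have h (d : ℤ) : oddInd d * cschCoeff q d * sechCoeff q (n - d) =
      sechCoeff q n / 2 * (oddInd d * (tanhCoeff q d - tanhCoeff q (d - n)) +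
        4 * (oddInd d * cschCoeff (q ^ 2) d)) := by
    rcases Int.even_or_odd d with h | h
    · simp [oddInd_of_even h]
    · have hd : d ≠ 0 := by rintro rfl; simp at h
      rw [oddInd_of_odd h, mul_assoc, cschCoeff_mul_sechCoeff hq h0 n hd]
      linear_combination sechCoeff q n / 2 * cothCoeff_sub_tanhCoeff hq h0 hd
  have hq2 := norm_pow_lt_one hq two_ne_zero
  have s1 := (summable_norm_oddInd_mul (summable_tanhCoeff_sub hq h0 n)).of_norm
  have s2 := (summable_norm_oddInd_mul (summable_norm_cschCoeff hq2 (pow_ne_zero 2 h0))).of_norm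
  simp only [h]
  rw [tsum_mul_left, s1.tsum_add (s2.mul_left 4), tsum_mul_left,
    tsum_oddInd_mul_cschCoeff_sq hq h0, tsum_oddInd_mul_tanhCoeff_sub hq h0]
  ring

lemma tsum_cschCoeff_mul_of_even {q : ℂ} (hq : ‖q‖ < 1) (h0 : q ≠ 0) {n : ℤ} (hn : n ≠ 0)
    (hev : Even n) :
    ∑' d, oddInd d * cschCoeff q d * (oddInd (n - d) * cschCoeff q (n - d)) =
      n * cschCoeff q n / 2 := by
  have h (d : ℤ) : oddInd d * cschCoeff q d * (oddInd (n - d) * cschCoeff q (n - d)) =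
      cschCoeff q n / 2 * (oddInd d * (tanhCoeff q d - tanhCoeff q (d - n)) +
        (4 * (oddInd d * cschCoeff (q ^ 2) d) -
          4 * (oddInd (d - n) * cschCoeff (q ^ 2) (d - n)))) := by
    have e : oddInd (d - n) = oddInd d := by
      rw [← oddInd_neg, neg_sub, oddInd_sub_of_even hev]
    rw [oddInd_sub_of_even hev, e]
    rcases Int.even_or_odd d with h | h
    · simp [oddInd_of_even h]
    · have hd : d ≠ 0 := by rintro rfl; simp at h
      have hnd : n - d ≠ 0 := by
        intro h'
        have := hev.sub_odd h
        simp [h'] at this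
      rw [oddInd_of_odd h, one_mul, one_mul, cschCoeff_mul hq h0 hn hd hnd]
      linear_combination cschCoeff q n / 2 * (cothCoeff_sub_tanhCoeff hq h0 hd -
        cothCoeff_sub_tanhCoeff hq h0 (d := d - n) (by omega))
  have hq2 := norm_pow_lt_one hq two_ne_zero
  have s1 := (summable_norm_oddInd_mul (summable_tanhCoeff_sub hq h0 n)).of_norm
  have s2 := (summable_norm_oddInd_mul (summable_norm_cschCoeff hq2 (pow_ne_zero 2 h0))).of_norm
  have s3 := ((Equiv.subRight n).summable_iff).mpr s2
  have e3 := (Equiv.subRight n).tsum_eq fun d => oddInd d * cschCoeff (q ^ 2) d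
  simp only [Function.comp_def, Equiv.subRight_apply] at s3 e3
  simp only [h]
  rw [tsum_mul_left, s1.tsum_add ((s2.mul_left 4).sub (s3.mul_left 4)),
    (s2.mul_left 4).tsum_sub (s3.mul_left 4), tsum_mul_left, tsum_mul_left, e3,
    tsum_oddInd_mul_cschCoeff_sq hq h0, tsum_oddInd_mul_tanhCoeff_sub hq h0]
  ring

lemma tsum_cschCoeff_mul_of_odd {q : ℂ} {n : ℤ} (hodd : Odd n) :
    ∑' d, oddInd d * cschCoeff q d * (oddInd (n - d) * cschCoeff q (n - d)) = 0 := by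
  refine (tsum_congr fun d => ?_).trans tsum_zero
  rcases Int.even_or_odd d with h | h
  · simp [oddInd_of_even h]
  · simp [oddInd_of_even (hodd.sub_odd h)]

lemma tsum_mul_sechCoeff_mul {q : ℂ} (hq : ‖q‖ < 1) (h0 : q ≠ 0) (n : ℤ) :
    2 * ∑' d, d * sechCoeff q d * sechCoeff q (n - d) = n ^ 2 * cschCoeff q n := by
  have hc := summable_norm_sechCoeff hq
  have hc1 : Summable fun d : ℤ => ‖(d : ℂ) * sechCoeff q d‖ := by
    simpa using summable_norm_pow_mul_sechCoeff hq 1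
  have s1 := summable_convolution hc1 hc n
  have e := (Equiv.subLeft n).tsum_eq fun d : ℤ => d * sechCoeff q d * sechCoeff q (n - d)
  have s2 := ((Equiv.subLeft n).summable_iff).mpr s1
  simp only [Function.comp_def, Equiv.subLeft_apply, sub_sub_cancel] at s2 e
  rw [two_mul]
  nth_rewrite 2 [← e]
  rw [← s1.tsum_add s2]
  have h (d : ℤ) : d * sechCoeff q d * sechCoeff q (n - d) +
      ((n - d : ℤ) : ℂ) * sechCoeff q (n - d) * sechCoeff q d =
        n * (sechCoeff q d * sechCoeff q (n - d)) := by
    push_cast; ring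
  simp only [h, tsum_mul_left]
  rcases eq_or_ne n 0 with rfl | hn
  · simp
  · rw [tsum_sechCoeff_mul hq h0 hn]; ring

/-- The Fourier series with hyperbolic secant coefficients. -/
noncomputable def sechFourier (q x : ℂ) : ℂ := ∑' d, sechCoeff q d * x ^ d

/-- The Fourier series with hyperbolic cosecant coefficients on the odd integers. -/
noncomputable def cschFourier (q x : ℂ) : ℂ := ∑' d, oddInd d * cschCoeff q d * x ^ d

lemma tsum_mul_zpow_eq_const {a : ℤ → ℂ} (h : ∀ n ≠ 0, a n = 0) (x : ℂ) :
    ∑' n, a n * x ^ n = a 0 := by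
  rw [tsum_eq_single 0 fun n hn => by rw [h n hn, zero_mul]]
  simp

lemma summable_norm_convolution {f g : ℤ → ℂ} (hf : Summable fun d => ‖f d‖)
    (hg : Summable fun d => ‖g d‖) : Summable fun n : ℤ => ‖∑' d, f d * g (n - d)‖ := by
  let e : ℤ × ℤ ≃ ℤ × ℤ :=
    ⟨fun p => (p.2, p.1 - p.2), fun p => (p.1 + p.2, p.1), fun p => by simp, fun p => by simp⟩
  have h := ((e.summable_iff).mpr (summable_mul_of_summable_norm hf hg).norm)
  simp only [Function.comp_def] at h
  refine .of_nonneg_of_le (fun _ => norm_nonneg _) (fun n => ?_) h.prod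
  exact norm_tsum_le_tsum_norm (h.prod_factor n)

lemma sechFourier_mul_neg {q x : ℂ} (hq : ‖q‖ < 1) (h0 : q ≠ 0) (hx : ‖x‖ = 1) :
    sechFourier q x * sechFourier q (-x) = sechFourier q 1 * sechFourier q (-1) := by
  have hc := summable_norm_sechCoeff hq
  have hc' : Summable fun d : ℤ => ‖(-1) ^ d * sechCoeff q d‖ := by simpa using hc
  have key (y : ℂ) (hy : ‖y‖ = 1) : sechFourier q y * sechFourier q (-y) =
      ∑' d, sechCoeff q d * ((-1) ^ (0 - d) * sechCoeff q (0 - d)) := by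
    have e (d : ℤ) : sechCoeff q d * (-y) ^ d = (-1) ^ d * sechCoeff q d * y ^ d := by
      rw [← neg_one_mul, mul_zpow]; ring
    simp only [sechFourier, e]
    rw [tsum_mul_tsum_zpow hc hc' hy, tsum_mul_zpow_eq_const]
    intro n hn
    exact tsum_alternating_sechCoeff_mul hq h0 hn
  rw [key x hx, key 1 (by simp)]

lemma cschFourier_sq {q x : ℂ} (hq : ‖q‖ < 1) (h0 : q ≠ 0) (hx : ‖x‖ = 1) :
    4 * cschFourier q x ^ 2 - (sechFourier q x ^ 2 + sechFourier q (-x) ^ 2) =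
      -(sechFourier q 1 ^ 2 + sechFourier q (-1) ^ 2) := by
  have hc := summable_norm_sechCoeff hq
  have hs := summable_norm_oddInd_mul (summable_norm_cschCoeff hq h0)
  set a : ℤ → ℂ := fun n =>
    4 * (∑' d, oddInd d * cschCoeff q d * (oddInd (n - d) * cschCoeff q (n - d))) -
      (1 + (-1) ^ n) * ∑' d, sechCoeff q d * sechCoeff q (n - d) with ha
  have key (y : ℂ) (hy : ‖y‖ = 1) :
      4 * cschFourier q y ^ 2 - (sechFourier q y ^ 2 + sechFourier q (-y) ^ 2) = a 0 := by
    have hy' : ‖-y‖ = 1 := by simpa using hy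
    have s1 := (summable_norm_mul_zpow (summable_norm_convolution hs hs) hy).of_norm
    have s2 := (summable_norm_mul_zpow (summable_norm_convolution hc hc) hy).of_norm
    have s3 := (summable_norm_mul_zpow (summable_norm_convolution hc hc) hy').of_norm
    simp only [sq, cschFourier, sechFourier]
    rw [tsum_mul_tsum_zpow hs hs hy, tsum_mul_tsum_zpow hc hc hy, tsum_mul_tsum_zpow hc hc hy',
      ← tsum_mul_left, ← s2.tsum_add s3, ← (s1.mul_left 4).tsum_sub (s2.add s3)]
    rw [← tsum_mul_zpow_eq_const (a := a) ?_ y]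
    · refine tsum_congr fun n => ?_
      rw [ha, ← neg_one_mul y, mul_zpow]
      ring
    · intro n hn
      rw [ha]
      simp only
      rw [tsum_sechCoeff_mul hq h0 hn]
      rcases Int.even_or_odd n with h | h
      · rw [tsum_cschCoeff_mul_of_even hq h0 hn h, h.neg_one_zpow]; ring
      · rw [tsum_cschCoeff_mul_of_odd h, h.neg_one_zpow]; ring
  have h1 : cschFourier q 1 = 0 := by
    refine tsum_eq_zero_of_odd fun d => ?_
    rw [oddInd_neg, cschCoeff_neg hq h0]
    simp
  have h2 := key 1 (by simp)
  rw [h1] at h2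
  rw [key x hx, ← h2]
  ring

lemma cschFourier_neg {q : ℂ} (x : ℂ) : cschFourier q (-x) = -cschFourier q x := by
  rw [cschFourier, cschFourier, ← tsum_neg]
  refine tsum_congr fun d => ?_
  rcases Int.even_or_odd d with h | h
  · simp [oddInd_of_even h]
  · rw [h.neg_zpow]; ring

lemma tsum_sq_mul_cschCoeff {q x : ℂ} (hq : ‖q‖ < 1) (h0 : q ≠ 0) (hx : ‖x‖ = 1) :
    ∑' d : ℤ, d ^ 2 * cschCoeff q d * x ^ d = 4 * cschFourier q x * sechFourier q x ^ 2 := by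
  have hc := summable_norm_sechCoeff hq
  have hc1 : Summable fun d : ℤ => ‖(d : ℂ) * sechCoeff q d‖ := by
    simpa using summable_norm_pow_mul_sechCoeff hq 1
  have hs := summable_norm_oddInd_mul (summable_norm_cschCoeff hq h0)
  have h1 : cschFourier q x * sechFourier q x = (∑' d : ℤ, d * sechCoeff q d * x ^ d) / 2 := by
    rw [cschFourier, sechFourier, tsum_mul_tsum_zpow hs hc hx, ← tsum_div_const]
    refine tsum_congr fun n => ?_
    rw [tsum_cschCoeff_mul_sechCoeff hq h0]
    ring
  have h2 : (∑' d : ℤ, d * sechCoeff q d * x ^ d) * sechFourier q x =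
      (∑' d : ℤ, d ^ 2 * cschCoeff q d * x ^ d) / 2 := by
    rw [sechFourier, tsum_mul_tsum_zpow hc1 hc hx, ← tsum_div_const]
    refine tsum_congr fun n => ?_
    have := tsum_mul_sechCoeff_mul hq h0 n
    linear_combination x ^ n / 2 * this
  linear_combination -4 * sechFourier q x * h1 - 2 * h2

lemma tsum_oddInd_mul_sq_mul_cschCoeff {q x : ℂ} (hq : ‖q‖ < 1) (h0 : q ≠ 0) (hx : ‖x‖ = 1) :
    ∑' d : ℤ, oddInd d * (d ^ 2 * cschCoeff q d) * x ^ d =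
      2 * cschFourier q x * (sechFourier q x ^ 2 + sechFourier q (-x) ^ 2) := by
  have hs := summable_norm_pow_mul_cschCoeff hq h0 2
  have hx' : ‖-x‖ = 1 := by simpa using hx
  have s1 := (summable_norm_mul_zpow hs hx).of_norm
  have s2 := (summable_norm_mul_zpow hs hx').of_norm
  have h1 := tsum_sq_mul_cschCoeff hq h0 hx
  have h2 := tsum_sq_mul_cschCoeff hq h0 hx'
  rw [cschFourier_neg] at h2
  have : ∑' d : ℤ, oddInd d * (d ^ 2 * cschCoeff q d) * x ^ d =
      (∑' d : ℤ, d ^ 2 * cschCoeff q d * x ^ d -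
        ∑' d : ℤ, d ^ 2 * cschCoeff q d * (-x) ^ d) / 2 := by
    rw [← s1.tsum_sub s2, ← tsum_div_const]
    refine tsum_congr fun d => ?_
    rw [oddInd, ← neg_one_mul x, mul_zpow]
    ring
  rw [this, h1, h2]
  ring

lemma sechFourier_inv (q x : ℂ) : sechFourier q x⁻¹ = sechFourier q x := by
  rw [sechFourier, ← (Equiv.neg ℤ).tsum_eq]
  refine tsum_congr fun d => ?_
  simp [sechCoeff_neg]

lemma sechFourier_add_neg {q x : ℂ} (hq : ‖q‖ < 1) (hx : ‖x‖ = 1) :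
    sechFourier q x + sechFourier q (-x) = 2 * sechFourier (q ^ 2) (x ^ 2) := by
  have hc := summable_norm_sechCoeff hq
  have hx' : ‖-x‖ = 1 := by simpa using hx
  have s1 := (summable_norm_mul_zpow hc hx).of_norm
  have s2 := (summable_norm_mul_zpow hc hx').of_norm
  have hinj : Function.Injective (fun k : ℤ => 2 * k) := fun a b h => by
    simpa using h
  rw [sechFourier, sechFourier, sechFourier, ← s1.tsum_add s2, ← tsum_mul_left, ← hinj.tsum_eq]
  · refine tsum_congr fun d => ?_
    rw [sechCoeff_two_mul, (even_two_mul d).neg_zpow, zpow_mul]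
    norm_cast
    ring
  · intro n hn
    rcases Int.even_or_odd n with h | h
    · obtain ⟨k, rfl⟩ := h
      exact ⟨k, by ring⟩
    · exfalso
      apply hn
      simp [h.neg_zpow]

lemma sechFourier_one {q : ℂ} (hq : ‖q‖ < 1) : sechFourier q 1 = thetaSeries q ^ 2 / 2 := by
  rw [← sechSeries_eq hq]
  simp [sechFourier, sechSeries]

lemma sechFourier_neg_one {q : ℂ} (hq : ‖q‖ < 1) :
    sechFourier q (-1) = thetaSeries (-q) ^ 2 / 2 := by
  have h := sechFourier_add_neg (x := 1) hq (by simp)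
  rw [one_pow, sechFourier_one hq, sechFourier_one (norm_pow_lt_one hq two_ne_zero)] at h
  linear_combination h - thetaSeries_sq_add_sq hq / 2

lemma sechFourier_I {q : ℂ} (hq : ‖q‖ < 1) :
    sechFourier q Complex.I = thetaSeries (-q ^ 2) ^ 2 / 2 := by
  have h := sechFourier_add_neg (x := Complex.I) hq (by simp)
  rw [← Complex.inv_I, sechFourier_inv, Complex.I_sq,
    sechFourier_neg_one (norm_pow_lt_one hq two_ne_zero)] at h
  linear_combination h / 2

section
variable {q z : ℂ}

lemma norm_eq_one_of_sq_eq_I (hz : z ^ 2 = Complex.I) : ‖z‖ = 1 := by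
  have : ‖z‖ ^ 2 = 1 := by rw [← norm_pow, hz, Complex.norm_I]
  exact (pow_eq_one_iff_of_nonneg (norm_nonneg _) two_ne_zero).mp this

lemma sechFourier_sq_add_sq_eighth (hq : ‖q‖ < 1) (h0 : q ≠ 0) (hz : z ^ 2 = Complex.I) :
    sechFourier q z ^ 2 + sechFourier q (-z) ^ 2 =
      thetaSeries (-q ^ 2) ^ 2 * (2 * thetaSeries (q ^ 2) ^ 2 - thetaSeries (-q ^ 2) ^ 2) / 2 := by
  have hz1 := norm_eq_one_of_sq_eq_I hz
  have hq2 := norm_pow_lt_one hq two_ne_zero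
  have h1 := sechFourier_add_neg hq hz1
  have h2 := sechFourier_mul_neg hq h0 hz1
  rw [hz, sechFourier_I hq2] at h1
  rw [sechFourier_one hq, sechFourier_neg_one hq] at h2
  have h3 := thetaSeries_mul_neg hq
  have h4 := thetaSeries_mul_neg hq2
  have h5 : (thetaSeries q * thetaSeries (-q)) ^ 2 = thetaSeries (-q ^ 2) ^ 4 := by
    rw [h3]; ring
  rw [← h4] at h1
  linear_combination (sechFourier q z + sechFourier q (-z) +
    2 * (thetaSeries (q ^ 2) * thetaSeries (-q ^ 2) / 2)) * h1 - 2 * h2 - h5 / 2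

lemma cschFourier_sq_eighth (hq : ‖q‖ < 1) (h0 : q ≠ 0) (hz : z ^ 2 = Complex.I) :
    cschFourier q z ^ 2 = -(thetaSeries (q ^ 2) * thetaOdd q) ^ 2 / 2 := by
  have hz1 := norm_eq_one_of_sq_eq_I hz
  have hq2 := norm_pow_lt_one hq two_ne_zero
  have h1 := cschFourier_sq hq h0 hz1
  rw [sechFourier_sq_add_sq_eighth hq h0 hz, sechFourier_one hq, sechFourier_neg_one hq] at h1
  have h2 := thetaOdd_sq hq
  have h3 := thetaSeries_mul_neg hq
  have h4 := thetaSeries_sq_add_sq hq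
  have h5 := thetaSeries_add_neg hq2
  rw [thetaOdd] at h2
  simp only [← pow_mul] at h5 h2
  norm_num at h5 h2
  have h6 : (thetaSeries q * thetaSeries (-q)) ^ 2 = thetaSeries (-q ^ 2) ^ 4 := by
    rw [h3]; ring
  have h7 : (thetaSeries q ^ 2 + thetaSeries (-q) ^ 2) ^ 2 = 4 * thetaSeries (q ^ 2) ^ 4 := by
    rw [h4]; ring
  have h8 : thetaOdd (q ^ 2) = thetaSeries (q ^ 2) - thetaSeries (q ^ 8) := by
    rw [thetaOdd, ← pow_mul]
  have h9 : thetaSeries (-q ^ 2) = 2 * thetaSeries (q ^ 8) - thetaSeries (q ^ 2) := by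
    linear_combination h5
  rw [mul_pow, thetaOdd_sq hq, h8]
  rw [h9] at h1 h6
  linear_combination h1 / 4 - h7 / 16 + h6 / 8

end

/-- The Lambert series `∑ χ(n) n ^ k q ^ n / (1 - q ^ (2 n))` for the quadratic character of
conductor `-8`. -/
noncomputable def lambertSeries (k : ℕ) (q : ℂ) : ℂ :=
  ∑' n : ℕ, (ZMod.χ₈' n : ℂ) * n ^ k * (q ^ n / (1 - q ^ (2 * n)))

lemma norm_chi_le (n : ℕ) : ‖(ZMod.χ₈' n : ℂ)‖ ≤ 1 := by
  rw [ZMod.χ₈'_nat_eq_if_mod_eight]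
  split_ifs <;> simp

section
variable {q z : ℂ}

lemma zpow_sub_zpow_neg_eighth (hz : z ^ 2 = Complex.I) (hz' : z * (1 + Complex.I) = Complex.I * √2)
    (n : ℕ) : oddInd n * (z ^ (n : ℤ) - z ^ (-(n : ℤ))) = Complex.I * √2 * (ZMod.χ₈' n : ℂ) := by
  have hinv : z⁻¹ = -Complex.I * z := by
    apply inv_eq_of_mul_eq_one_right
    linear_combination (-Complex.I) * hz - Complex.I_sq
  have h4 : z ^ 4 = -1 := by linear_combination (z ^ 2 + Complex.I) * hz + Complex.I_sq
  have h8 : z ^ 8 = 1 := by linear_combination (z ^ 4 - 1) * h4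
  have hn : z ^ n = z ^ (n % 8) := by
    conv_lhs => rw [← Nat.div_add_mod n 8, pow_add, pow_mul, h8, one_pow, one_mul]
  have hn' : z⁻¹ ^ n = z⁻¹ ^ (n % 8) := by
    conv_lhs => rw [← Nat.div_add_mod n 8, pow_add, pow_mul, inv_pow, h8, inv_one, one_pow, one_mul]
  rw [zpow_neg, zpow_natCast, ← inv_pow, hn, hn', ZMod.χ₈'_nat_eq_if_mod_eight]
  rcases Nat.even_or_odd n with h | h
  · rw [oddInd_of_even (by exact_mod_cast h), if_pos (Nat.even_iff.mp h)]
    simp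
  · rw [oddInd_of_odd (by exact_mod_cast h)]
    have h2 := Nat.odd_iff.mp h
    rw [if_neg (by omega), hinv]
    have hI3 : Complex.I ^ 3 = -Complex.I := by rw [pow_succ, Complex.I_sq]; ring
    have h3 : z ^ 3 = Complex.I * z := by rw [pow_succ, hz]
    have h5 : z ^ 5 = -z := by rw [pow_succ, h4]; ring
    have h7 : z ^ 7 = -(Complex.I * z) := by rw [show z ^ 7 = z ^ 4 * z ^ 3 by ring, h4, h3]; ring
    have h : n % 8 = 1 ∨ n % 8 = 3 ∨ n % 8 = 5 ∨ n % 8 = 7 := by omega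
    rcases h with h | h | h | h <;> rw [h] <;> norm_num
    · linear_combination hz'
    · rw [Odd.neg_pow (by decide), mul_pow, hI3, h3]
      linear_combination hz' - z * Complex.I_sq
    · rw [Odd.neg_pow (by decide), mul_pow, h5, show Complex.I ^ 5 = Complex.I by
        rw [show (5 : ℕ) = 2 + 3 by rfl, pow_add, hI3, Complex.I_sq]; ring]
      linear_combination -hz'
    · rw [Odd.neg_pow (by decide), mul_pow, h7, show Complex.I ^ 7 = -Complex.I by
        rw [show (7 : ℕ) = 2 + 2 + 3 by rfl, pow_add, pow_add, hI3, Complex.I_sq]; ring]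
      linear_combination -hz' + z * Complex.I_sq

lemma tsum_oddInd_mul_cschCoeff_eighth (hq : ‖q‖ < 1) (h0 : q ≠ 0) (hz : z ^ 2 = Complex.I)
    (hz' : z * (1 + Complex.I) = Complex.I * √2) {k : ℕ} (hk : Even k) :
    ∑' d : ℤ, oddInd d * (d ^ k * cschCoeff q d) * z ^ d = Complex.I * √2 * lambertSeries k q := by
  have hs := (summable_norm_mul_zpow (summable_norm_oddInd_mul
    (summable_norm_pow_mul_cschCoeff hq h0 k)) (norm_eq_one_of_sq_eq_I hz)).of_norm
  have h := tsum_nat_add_neg hs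
  rw [oddInd_of_even (by simp : Even (0 : ℤ)), zero_mul, zero_mul, add_zero] at h
  rw [← h, lambertSeries, ← tsum_mul_left]
  refine tsum_congr fun n => ?_
  have e := zpow_sub_zpow_neg_eighth hz hz' n
  rw [oddInd_neg, cschCoeff_neg hq h0]
  have e2 : cschCoeff q n = q ^ n / (1 - q ^ (2 * n)) := by
    unfold cschCoeff; norm_cast
  rw [← e2]
  push_cast
  rw [hk.neg_pow]
  linear_combination (n : ℂ) ^ k * cschCoeff q n * e

lemma exists_eighth_root : ∃ z : ℂ, z ^ 2 = Complex.I ∧ z * (1 + Complex.I) = Complex.I * √2 := by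
  have h2 : ((√2 : ℝ) : ℂ) ^ 2 = 2 := by
    norm_cast; simp
  have h0 : ((√2 : ℝ) : ℂ) ≠ 0 := by
    intro h; rw [h] at h2; norm_num at h2
  refine ⟨(1 + Complex.I) / √2, ?_, ?_⟩
  · rw [div_pow, h2]
    linear_combination Complex.I_sq / 2
  · field_simp
    rw [h2]
    linear_combination Complex.I_sq

lemma lambertSeries_sq (hq : ‖q‖ < 1) (h0 : q ≠ 0) :
    (2 * lambertSeries 0 q) ^ 2 = (thetaSeries (q ^ 2) * thetaOdd q) ^ 2 := by
  obtain ⟨z, hz, hz'⟩ := exists_eighth_root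
  have h1 := tsum_oddInd_mul_cschCoeff_eighth hq h0 hz hz' (k := 0) (by simp)
  have h2 := cschFourier_sq_eighth hq h0 hz
  simp only [pow_zero, one_mul] at h1
  rw [cschFourier, h1, mul_pow, mul_pow, Complex.I_sq] at h2
  have h3 : ((√2 : ℝ) : ℂ) ^ 2 = 2 := by
    norm_cast; simp
  rw [h3] at h2
  linear_combination -2 * h2

lemma lambertSeries_two (hq : ‖q‖ < 1) (h0 : q ≠ 0) :
    lambertSeries 2 q = lambertSeries 0 q * (thetaSeries (-q ^ 2) ^ 2 *
      (2 * thetaSeries (q ^ 2) ^ 2 - thetaSeries (-q ^ 2) ^ 2)) := by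
  obtain ⟨z, hz, hz'⟩ := exists_eighth_root
  have h1 := tsum_oddInd_mul_cschCoeff_eighth hq h0 hz hz' (k := 0) (by simp)
  have h2 := tsum_oddInd_mul_cschCoeff_eighth hq h0 hz hz' (k := 2) (by decide)
  have h3 := tsum_oddInd_mul_sq_mul_cschCoeff hq h0 (norm_eq_one_of_sq_eq_I hz)
  simp only [pow_zero, one_mul] at h1
  rw [h2, cschFourier, h1, sechFourier_sq_add_sq_eighth hq h0 hz] at h3
  have h4 : Complex.I * ((√2 : ℝ) : ℂ) ≠ 0 := by simp
  apply mul_left_cancel₀ h4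
  rw [h3]
  ring

end

lemma norm_one_sub_pow_ge {q : ℂ} {r : ℝ} (hr : r < 1) (hq : ‖q‖ ≤ r) {n : ℕ} (hn : n ≠ 0) :
    1 - r ≤ ‖1 - q ^ n‖ := by
  have h3 : ‖q ^ n‖ ≤ r := by
    rw [norm_pow]
    exact (pow_le_of_le_one (norm_nonneg _) (hq.trans hr.le) hn).trans hq
  have := norm_sub_norm_le (1 : ℂ) (q ^ n)
  rw [norm_one] at this
  linarith

/-- The quotient of `lambertSeries 0` by its argument. -/
noncomputable def lambertQuot (q : ℂ) : ℂ :=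
  ∑' n : ℕ, (ZMod.χ₈' n : ℂ) * (q ^ (n - 1) / (1 - q ^ (2 * n)))

lemma lambertSeries_zero_eq (q : ℂ) : lambertSeries 0 q = q * lambertQuot q := by
  rw [lambertSeries, lambertQuot, ← tsum_mul_left]
  refine tsum_congr fun n => ?_
  rcases n with _ | n
  · have : ZMod.χ₈' 0 = 0 := by decide
    simp [this]
  · simp only [add_tsub_cancel_right, pow_zero, pow_succ q n]
    ring

lemma differentiableOn_lambertQuot : DifferentiableOn ℂ lambertQuot (Metric.ball 0 1) := by
  intro q hq
  rw [mem_ball_zero_iff] at hq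
  obtain ⟨r, hr, hr1⟩ := exists_between hq
  have hr0 : 0 ≤ r := (norm_nonneg q).trans hr.le
  have : DifferentiableOn ℂ lambertQuot (Metric.ball 0 r) := by
    refine Complex.differentiableOn_tsum_of_summable_norm
      (u := fun n : ℕ => (if n = 0 then 1 else r ^ (n - 1)) * (1 - r)⁻¹)
      ?_ (fun n => ?_) Metric.isOpen_ball ?_
    · refine Summable.mul_right _ ?_
      rw [← summable_nat_add_iff 1]
      simpa using summable_geometric_of_lt_one hr0 hr1
    · rcases eq_or_ne n 0 with rfl | hn
      · simp
      refine DifferentiableOn.const_mul (DifferentiableOn.div (by fun_prop) (by fun_prop) ?_) _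
      intro w hw h
      rw [mem_ball_zero_iff] at hw
      have := norm_one_sub_pow_ge hr1 hw.le (n := 2 * n) (by omega)
      rw [h, norm_zero] at this
      linarith
    · intro n w hw
      rw [mem_ball_zero_iff] at hw
      rcases eq_or_ne n 0 with rfl | hn
      · simp; linarith
      rw [norm_mul, norm_div, norm_pow, if_neg hn, ← div_eq_mul_inv]
      refine (mul_le_of_le_one_left (by positivity) (norm_chi_le n)).trans ?_
      have h1 : 0 < 1 - r := by linarith
      have := norm_one_sub_pow_ge hr1 hw.le (n := 2 * n) (by omega)
      gcongr
  exact (this.differentiableAt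
      (Metric.isOpen_ball.mem_nhds (by simpa using hr))).differentiableWithinAt

lemma lambertQuot_zero : lambertQuot 0 = 1 := by
  rw [lambertQuot, tsum_eq_single 1]
  · simp
  · intro n hn
    rcases eq_or_ne n 0 with rfl | h
    · simp
    · rw [zero_pow (by omega)]; simp

lemma differentiableOn_thetaOdd : DifferentiableOn ℂ thetaOdd (Metric.ball 0 1) := by
  intro q hq
  rw [mem_ball_zero_iff] at hq
  have h4 : DifferentiableAt ℂ thetaSeries (q ^ 4) :=
    differentiableAt_thetaSeries (norm_pow_lt_one hq (by norm_num))
  exact ((differentiableAt_thetaSeries hq).sub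
    (h4.comp q (f := fun q : ℂ => q ^ 4) (by fun_prop))).differentiableWithinAt

lemma two_mul_lambertSeries_zero {q : ℂ} (hq : ‖q‖ < 1) :
    2 * lambertSeries 0 q = thetaSeries (q ^ 2) * thetaOdd q := by
  have hd2 : DifferentiableOn ℂ (fun q : ℂ => thetaSeries (q ^ 2)) (Metric.ball 0 1) := by
    intro w hw
    rw [mem_ball_zero_iff] at hw
    have h2 : DifferentiableAt ℂ thetaSeries (w ^ 2) :=
      differentiableAt_thetaSeries (norm_pow_lt_one hw two_ne_zero)
    exact (h2.comp w (f := fun q : ℂ => q ^ 2) (by fun_prop)).differentiableWithinAt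
  have hA : DifferentiableOn ℂ (fun q : ℂ => 2 * (q * lambertQuot q)) (Metric.ball 0 1) :=
    (differentiableOn_id.mul differentiableOn_lambertQuot).const_mul 2
  have hB : DifferentiableOn ℂ (fun q : ℂ => thetaSeries (q ^ 2) * thetaOdd q)
      (Metric.ball 0 1) := hd2.mul differentiableOn_thetaOdd
  have hU : IsPreconnected (Metric.ball (0 : ℂ) 1) := (convex_ball 0 1).isPreconnected
  have key := AnalyticOnNhd.eq_zero_or_eq_zero_of_mul_eq_zero
    ((hA.sub hB).analyticOnNhd Metric.isOpen_ball) ((hA.add hB).analyticOnNhd Metric.isOpen_ball)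
    (fun w hw => by
      rw [mem_ball_zero_iff] at hw
      simp only [Pi.sub_apply, Pi.add_apply, ← lambertSeries_zero_eq]
      rcases eq_or_ne w 0 with rfl | h0
      · have : thetaOdd 0 = 0 := by simp [thetaOdd]
        simp [lambertSeries_zero_eq, this]
      · linear_combination lambertSeries_sq hw h0) hU
  rcases key with h | h
  · have := h q (by simpa using hq)
    simp only [Pi.sub_apply, ← lambertSeries_zero_eq] at this
    exact sub_eq_zero.mp this
  · exfalso
    have hball : Metric.ball (0 : ℂ) 1 ∈ 𝓝 0 := Metric.ball_mem_nhds 0 one_pos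
    have hM := (differentiableOn_lambertQuot.differentiableAt hball).hasDerivAt
    have h2 := (hd2.differentiableAt hball).hasDerivAt
    have dA := ((hasDerivAt_id (0 : ℂ)).mul hM).const_mul 2
    have dB := h2.mul hasDerivAt_thetaOdd_zero
    have d := dA.add dB
    have hz : HasDerivAt (fun _ : ℂ => (0 : ℂ)) 0 0 := hasDerivAt_const _ _
    have h0 : thetaOdd 0 = 0 := by simp [thetaOdd]
    have := d.unique (hz.congr_of_eventuallyEq (by
      filter_upwards [hball] with w hw
      exact h w hw))
    simp [lambertQuot_zero, thetaSeries_zero, h0] at this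

/-- The cubic theta product for the Lambert series of weight three. -/
lemma lambertSeries_two_eq {q : ℂ} (hq : ‖q‖ < 1) (h0 : q ≠ 0) :
    2 * lambertSeries 2 q = thetaSeries (q ^ 2) * thetaOdd q * (thetaSeries (-q ^ 2) ^ 2 *
      (2 * thetaSeries (q ^ 2) ^ 2 - thetaSeries (-q ^ 2) ^ 2)) := by
  rw [lambertSeries_two hq h0, ← two_mul_lambertSeries_zero hq]
  ring

lemma thetaOdd_eq_tsum {q : ℂ} (hq : ‖q‖ < 1) :
    thetaOdd q = ∑' n : ℤ, oddInd n * q ^ (n.natAbs ^ 2) := by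
  have h1 := (summable_norm_thetaSeries hq).of_norm
  have h2 := (summable_norm_oddInd_mul (summable_norm_thetaSeries hq)).of_norm
  have hinj : Function.Injective (fun k : ℤ => 2 * k) := fun a b h => by
    simpa using h
  rw [thetaOdd, thetaSeries, sub_eq_iff_eq_add, ← sub_eq_iff_eq_add', ← h1.tsum_sub h2, thetaSeries,
    ← hinj.tsum_eq]
  · refine tsum_congr fun k => ?_
    have : (2 * k).natAbs ^ 2 = 4 * k.natAbs ^ 2 := by
      rw [Int.natAbs_mul]; simp; ring
    rw [oddInd_of_even (even_two_mul k), this, ← pow_mul]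
    ring
  · intro n hn
    rcases Int.even_or_odd n with h | h
    · obtain ⟨k, rfl⟩ := h
      exact ⟨k, by ring⟩
    · exfalso
      apply hn
      simp [oddInd_of_odd h]

lemma pow_odd_sq_of_pow_eight {ε : ℂ} (hε : ε ^ 8 = 1) {n : ℕ} (hn : Odd n) : ε ^ (n ^ 2) = ε := by
  obtain ⟨k, rfl⟩ := hn
  obtain ⟨l, hl⟩ := Nat.even_mul_succ_self k
  have : (2 * k + 1) ^ 2 = 8 * l + 1 := by
    have : (2 * k + 1) ^ 2 = 4 * (k * (k + 1)) + 1 := by ring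
    rw [this, hl]; ring
  rw [this, pow_succ, pow_mul, hε, one_pow, one_mul]

lemma thetaOdd_mul {ε q : ℂ} (hq : ‖q‖ < 1) (hε : ε ^ 8 = 1) :
    thetaOdd (ε * q) = ε * thetaOdd q := by
  have h1 : ‖ε‖ = 1 := by
    have : ‖ε‖ ^ 8 = 1 := by rw [← norm_pow, hε, norm_one]
    exact (pow_eq_one_iff_of_nonneg (norm_nonneg _) (by norm_num)).mp this
  rw [thetaOdd_eq_tsum hq, thetaOdd_eq_tsum (by rwa [norm_mul, h1, one_mul]), ← tsum_mul_left]
  refine tsum_congr fun n => ?_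
  rcases Int.even_or_odd n with h | h
  · simp [oddInd_of_even h]
  · rw [mul_pow, pow_odd_sq_of_pow_eight hε (Int.natAbs_odd.mpr h)]
    ring

lemma summable_norm_lambert_double {q : ℂ} (hq : ‖q‖ < 1) :
    Summable fun p : ℕ × ℕ => ‖(ZMod.χ₈' p.1 : ℂ) * p.1 ^ 2 * q ^ ((2 * p.2 + 1) * p.1)‖ := by
  have s1 := summable_pow_mul_geometric_of_norm_lt_one (R := ℝ) 2 (r := ‖q‖) (by simpa using hq)
  have s2 := summable_geometric_of_lt_one (norm_nonneg q) hq
  have s := s1.mul_of_nonneg s2 (fun n => by positivity) (fun n => by positivity)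
  refine .of_nonneg_of_le (fun _ => norm_nonneg _) (fun ⟨d, m⟩ => ?_) s
  simp only
  rcases Nat.eq_zero_or_pos d with rfl | hd
  · simp
  rw [norm_mul, norm_mul, norm_pow, norm_pow, Complex.norm_natCast, mul_assoc, mul_assoc, ← pow_add]
  refine (mul_le_of_le_one_left (by positivity) (norm_chi_le d)).trans ?_
  refine mul_le_mul_of_nonneg_left ?_ (by positivity)
  exact pow_le_pow_of_le_one (norm_nonneg _) hq.le (by nlinarith)

lemma lambertSeries_eq_double {q : ℂ} (hq : ‖q‖ < 1) :
    lambertSeries 2 q =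
      ∑' p : ℕ × ℕ, (ZMod.χ₈' p.1 : ℂ) * p.1 ^ 2 * q ^ ((2 * p.2 + 1) * p.1) := by
  rw [(summable_norm_lambert_double hq).of_norm.tsum_prod, lambertSeries]
  refine tsum_congr fun n => ?_
  simp only
  rw [tsum_mul_left]
  rcases Nat.eq_zero_or_pos n with rfl | hn
  · simp
  congr 1
  have h : ‖q ^ (2 * n)‖ < 1 := norm_pow_lt_one hq (by omega)
  rw [div_eq_mul_inv, ← tsum_geometric_of_norm_lt_one h, ← tsum_mul_left]
  refine tsum_congr fun m => ?_
  rw [← pow_mul, ← pow_add]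
  congr 1; ring

lemma lambertSeries_two_eq' {q : ℂ} (hq : ‖q‖ < 1) (h0 : q ≠ 0) :
    2 * lambertSeries 2 q = thetaOdd q * (thetaSeries (q ^ 8) ^ 5 +
      5 * thetaSeries (q ^ 8) ^ 4 * thetaOdd (q ^ 2) - 6 * thetaSeries (q ^ 8) ^ 3 *
          thetaOdd (q ^ 2) ^ 2
      - 6 * thetaSeries (q ^ 8) ^ 2 * thetaOdd (q ^ 2) ^ 3
      + 5 * thetaSeries (q ^ 8) * thetaOdd (q ^ 2) ^ 4 + thetaOdd (q ^ 2) ^ 5) := by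
  have h5 := thetaSeries_add_neg (norm_pow_lt_one hq two_ne_zero)
  have h8 : thetaOdd (q ^ 2) = thetaSeries (q ^ 2) - thetaSeries (q ^ 8) := by
    rw [thetaOdd, ← pow_mul]
  rw [← pow_mul] at h5
  norm_num at h5
  rw [lambertSeries_two_eq hq h0,
    show thetaSeries (-q ^ 2) = thetaSeries (q ^ 8) - thetaOdd (q ^ 2) by
      linear_combination h5 + h8,
    show thetaSeries (q ^ 2) = thetaSeries (q ^ 8) + thetaOdd (q ^ 2) by linear_combination -h8]
  ring

/-- The part of the weight three Lambert series supported on exponents `5` modulo `8`, with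
alternating signs. -/
noncomputable def quinticSeries (q : ℂ) : ℂ :=
  ∑' p : ℕ × ℕ, if ((2 * p.2 + 1) * p.1) % 8 = 5 then
    (ZMod.χ₈' p.1 : ℂ) * p.1 ^ 2 *
        ((-1) ^ ((2 * p.2 + 1) * p.1 / 8) * q ^ ((2 * p.2 + 1) * p.1)) else 0

section
variable {q w z : ℂ}

lemma sum_eighth_root_pow (hz4 : z ^ 4 = -1) (n : ℕ) :
    ∑ j ∈ Finset.range 8, z ^ (3 * j) * (z ^ j) ^ n = if n % 8 = 5 then 8 else 0 := by
  have h8 : z ^ 8 = 1 := by linear_combination (z ^ 4 - 1) * hz4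
  have hprim : IsPrimitiveRoot z 8 := by
    rw [IsPrimitiveRoot.iff_orderOf]
    have : Fact (Nat.Prime 2) := ⟨Nat.prime_two⟩
    refine orderOf_eq_prime_pow (p := 2) (n := 2) ?_ h8
    norm_num [hz4]
  have e (j : ℕ) : z ^ (3 * j) * (z ^ j) ^ n = (z ^ (n + 3)) ^ j := by
    rw [← pow_mul, ← pow_add, ← pow_mul]
    congr 1; ring
  simp only [e]
  split_ifs with h
  · have : z ^ (n + 3) = 1 := (hprim.pow_eq_one_iff_dvd _).mpr (by omega)
    simp [this]
  · have hne : z ^ (n + 3) ≠ 1 := fun h' => by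
      have := (hprim.pow_eq_one_iff_dvd _).mp h'
      omega
    rw [geom_sum_eq hne, ← pow_mul, mul_comm, pow_mul, h8, one_pow]
    simp

lemma sum_lambertSeries (hq : ‖q‖ < 1) (hz : z ^ 2 = Complex.I) (hw : w ^ 2 = z) :
    ∑ j ∈ Finset.range 8, z ^ (3 * j) * lambertSeries 2 (w * z ^ j * q) =
      8 * w ^ 5 * quinticSeries q := by
  have hz1 := norm_eq_one_of_sq_eq_I hz
  have hw1 : ‖w‖ = 1 := by
    have : ‖w‖ ^ 2 = 1 := by rw [← norm_pow, hw, hz1]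
    exact (pow_eq_one_iff_of_nonneg (norm_nonneg _) two_ne_zero).mp this
  have hz4 : z ^ 4 = -1 := by linear_combination (z ^ 2 + Complex.I) * hz + Complex.I_sq
  have hw8 : w ^ 8 = -1 := by rw [show w ^ 8 = (w ^ 2) ^ 4 by ring, hw, hz4]
  have hn (j : ℕ) : ‖w * z ^ j * q‖ < 1 := by simpa [hz1, hw1] using hq
  have hs (j : ℕ) := ((summable_norm_lambert_double (hn j)).of_norm).mul_left (z ^ (3 * j))
  simp only [lambertSeries_eq_double (hn _), ← tsum_mul_left]
  rw [← Summable.tsum_finsetSum fun j _ => hs j, quinticSeries, ← tsum_mul_left]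
  refine tsum_congr fun ⟨d, m⟩ => ?_
  simp only
  generalize hN : (2 * m + 1) * d = N
  have e (j : ℕ) : z ^ (3 * j) * ((ZMod.χ₈' d : ℂ) * d ^ 2 * (w * z ^ j * q) ^ N) =
      (ZMod.χ₈' d : ℂ) * d ^ 2 * w ^ N * q ^ N * (z ^ (3 * j) * (z ^ j) ^ N) := by
    rw [mul_pow, mul_pow]; ring
  simp only [e]
  rw [← Finset.mul_sum, sum_eighth_root_pow hz4]
  split_ifs with h
  · have : w ^ N = w ^ 5 * (-1) ^ (N / 8) := by
      conv_lhs => rw [← Nat.div_add_mod N 8, h, pow_add, pow_mul, hw8]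
      ring
    rw [this]; ring
  · simp

lemma quinticSeries_mul (hq : ‖q‖ < 1) (h0 : q ≠ 0) (hz : z ^ 2 = Complex.I) (hw : w ^ 2 = z) :
    w * quinticSeries q = -3 * thetaSeries (-q ^ 8) ^ 3 * thetaOdd (q ^ 2) ^ 2 *
        thetaOdd (w * q) := by
  have hz1 := norm_eq_one_of_sq_eq_I hz
  have hw1 : ‖w‖ = 1 := by
    have : ‖w‖ ^ 2 = 1 := by rw [← norm_pow, hw, hz1]
    exact (pow_eq_one_iff_of_nonneg (norm_nonneg _) two_ne_zero).mp this
  have hz4 : z ^ 4 = -1 := by linear_combination (z ^ 2 + Complex.I) * hz + Complex.I_sq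
  have hw8 : w ^ 8 = -1 := by rw [show w ^ 8 = (w ^ 2) ^ 4 by ring, hw, hz4]
  have hz8 : z ^ 8 = 1 := by linear_combination (z ^ 4 - 1) * hz4
  have hw0 : w ≠ 0 := by rintro rfl; simp at hw1
  have hz0 : z ≠ 0 := by rintro rfl; simp at hz1
  have hI2 := Complex.I_sq
  have hI3 : Complex.I ^ 3 = -Complex.I := by rw [pow_succ, Complex.I_sq]; ring
  have hI4 := Complex.I_pow_four
  have hI5 : Complex.I ^ 5 = Complex.I := by rw [pow_succ, hI4, one_mul]
  have hn (j : ℕ) : ‖w * z ^ j * q‖ < 1 := by simpa [hz1, hw1] using hq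
  set C := thetaSeries (-q ^ 8)
  set D := thetaOdd (q ^ 2)
  set B := thetaOdd (w * q)
  have key (j : ℕ) : z ^ (3 * j) * lambertSeries 2 (w * z ^ j * q) = (-1) ^ j * B / 2 *
      (C ^ 5 + 5 * C ^ 4 * (Complex.I ^ j * z * D) - 6 * C ^ 3 * (Complex.I ^ j * z * D) ^ 2
        - 6 * C ^ 2 * (Complex.I ^ j * z * D) ^ 3
      + 5 * C * (Complex.I ^ j * z * D) ^ 4 + (Complex.I ^ j * z * D) ^ 5) := by
    have h := lambertSeries_two_eq' (hn j) (by simp [hw0, hz0, h0])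
    have e8 : (w * z ^ j * q) ^ 8 = -q ^ 8 := by
      rw [mul_pow, mul_pow, hw8, ← pow_mul, mul_comm j, pow_mul, hz8, one_pow]; ring
    have e2 : (w * z ^ j * q) ^ 2 = (Complex.I ^ j * z) * q ^ 2 := by
      rw [mul_pow, mul_pow, hw, ← pow_mul, mul_comm j, pow_mul, hz]; ring
    have e1 : w * z ^ j * q = z ^ j * (w * q) := by ring
    have e3 : z ^ (3 * j) = (z ^ 3) ^ j := pow_mul _ _ _
    have e4 : (z ^ 3) ^ j * z ^ j = (-1) ^ j := by rw [← mul_pow, ← hz4]; ring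
    rw [e8, e2, thetaOdd_mul (norm_pow_lt_one hq two_ne_zero) (by
      rw [mul_pow, hz8, ← pow_mul, mul_comm j, pow_mul, show Complex.I ^ 8 = 1 by
        rw [show (8 : ℕ) = 4 * 2 by rfl, pow_mul, hI4, one_pow]]; simp)] at h
    nth_rewrite 2 [e1] at h
    rw [thetaOdd_mul (by simpa [hw1] using hq) (by
      rw [← pow_mul, mul_comm j, pow_mul, hz8, one_pow])] at h
    rw [e3, ← e4]
    linear_combination (z ^ 3) ^ j / 2 * h
  have hsum := sum_lambertSeries hq hz hw
  simp only [key, Finset.sum_range_succ, Finset.sum_range_zero] at hsum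
  have hw5 : w ^ 5 = Complex.I * w := by rw [← hz, ← hw]; ring
  have hI6 : Complex.I ^ 6 = -1 := by rw [show (6 : ℕ) = 4 + 2 by rfl, pow_add, hI4, hI2]; ring
  have hI7 : Complex.I ^ 7 = -Complex.I := by
    rw [show (7 : ℕ) = 4 + 3 by rfl, pow_add, hI4, hI3]; ring
  rw [hI2, hI3, hI4, hI5, hI6, hI7, hw5] at hsum
  simp only [mul_pow, neg_mul, pow_zero, pow_one, hI2, hI3, hI4, hI5, hz, one_pow] at hsum
  have hI : Complex.I ≠ 0 := Complex.I_ne_zero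
  apply mul_left_cancel₀ hI
  apply mul_left_cancel₀ (show (8 : ℂ) ≠ 0 by norm_num)
  linear_combination -hsum + 6 * B * C ^ 3 * z ^ 2 * D ^ 2 * hI2 - 6 * B * C ^ 2 * z ^ 3 * D ^ 3 *
      hI3
    - 5 * B * C * z ^ 4 * D ^ 4 * hI4 + B * z ^ 5 * D ^ 5 * hI5 - 12 * B * C ^ 3 * D ^ 2 * hz

end

/-- `(u d/du)² (u ^ (b + 1) / (1 + u ^ 8))`. -/
noncomputable def octicKernel (b : ℕ) (u : ℝ) : ℝ :=
  u ^ (b + 1) * ((b + 1) ^ 2 + (2 * (b + 1) ^ 2 - 16 * (b + 1) - 64) * u ^ 8 + (b - 7) ^ 2 *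
      u ^ 16) /
    (1 + u ^ 8) ^ 3

lemma hasSum_octicKernel (b : ℕ) {u : ℝ} (h0 : 0 ≤ u) (h1 : u < 1) :
    HasSum (fun j : ℕ => (-1) ^ j * ((b + 1 + 8 * j : ℕ) : ℝ) ^ 2 * u ^ (b + 1 + 8 * j))
      (octicKernel b u) := by
  have hu : ‖-u ^ 8‖ < 1 := by
    rw [norm_neg, norm_pow, Real.norm_of_nonneg h0]
    exact pow_lt_one₀ h0 h1 (by norm_num)
  have g0 := hasSum_choose_mul_geometric_of_norm_lt_one 0 hu
  have g1 := hasSum_choose_mul_geometric_of_norm_lt_one 1 hu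
  have g2 := hasSum_choose_mul_geometric_of_norm_lt_one 2 hu
  have hne : (1 + u ^ 8) ≠ 0 := by positivity
  have H := (((g0.mul_left (((b : ℝ) + 1) ^ 2 - 16 * (b + 1) + 64)).add
    (g1.mul_left (16 * ((b : ℝ) + 1) - 192))).add (g2.mul_left 128)).mul_left (u ^ (b + 1))
  have hf : (fun j : ℕ => (-1 : ℝ) ^ j * ((b + 1 + 8 * j : ℕ) : ℝ) ^ 2 * u ^ (b + 1 + 8 * j)) =
      fun j : ℕ => u ^ (b + 1) * ((((b : ℝ) + 1) ^ 2 - 16 * (b + 1) + 64) *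
        (((j + 0).choose 0 : ℕ) * (-u ^ 8) ^ j) + (16 * ((b : ℝ) + 1) - 192) *
        (((j + 1).choose 1 : ℕ) * (-u ^ 8) ^ j) + 128 *
            (((j + 2).choose 2 : ℕ) * (-u ^ 8) ^ j)) := by
    funext j
    have hc : (((j + 2).choose 2 : ℕ) : ℝ) = (j + 2) * (j + 1) / 2 := by
      rw [Nat.cast_choose_two]; push_cast; ring
    rw [hc, Nat.choose_one_right, Nat.choose_zero_right, neg_pow (u ^ 8), pow_add, ← pow_mul]
    push_cast
    ring
  have hv : octicKernel b u = u ^ (b + 1) * ((((b : ℝ) + 1) ^ 2 - 16 * (b + 1) + 64) *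
      (1 / (1 - -u ^ 8) ^ (0 + 1)) + (16 * ((b : ℝ) + 1) - 192) * (1 / (1 - -u ^ 8) ^ (1 + 1)) +
        128 * (1 / (1 - -u ^ 8) ^ (2 + 1))) := by
    rw [octicKernel, sub_neg_eq_add]
    field_simp
    ring
  rw [hf, hv]
  exact H

lemma abs_octicKernel_le {b : ℕ} (hb : b ≤ 6) {u : ℝ} (h0 : 0 ≤ u) (h1 : u ≤ 1) :
    |octicKernel b u| ≤ 400 * u := by
  have hb' : (b : ℝ) ≤ 6 := by exact_mod_cast hb
  have hb0 : (0 : ℝ) ≤ b := b.cast_nonneg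
  have h8 : u ^ 8 ≤ 1 := pow_le_one₀ h0 h1
  have h80 : 0 ≤ u ^ 8 := by positivity
  have h16 : u ^ 16 ≤ 1 := pow_le_one₀ h0 h1
  have h160 : 0 ≤ u ^ 16 := by positivity
  have hbu : u ^ b ≤ 1 := pow_le_one₀ h0 h1
  have hbu0 : 0 ≤ u ^ b := by positivity
  have hd : 1 ≤ (1 + u ^ 8) ^ 3 := one_le_pow₀ (by linarith)
  rw [octicKernel, abs_div, abs_of_pos (by linarith : 0 < (1 + u ^ 8) ^ 3)]
  refine (div_le_self (abs_nonneg _) hd).trans ?_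
  rw [abs_mul, abs_of_nonneg (by positivity : 0 ≤ u ^ (b + 1)), pow_succ, mul_comm (u ^ b)]
  have key : |((b : ℝ) + 1) ^ 2 + (2 * (b + 1) ^ 2 - 16 * (b + 1) - 64) * u ^ 8 + (b - 7) ^ 2 *
      u ^ 16|
      ≤ 400 := by
    have e1 : |((b : ℝ) + 1) ^ 2| ≤ 49 := by rw [abs_le]; constructor <;> nlinarith
    have e2 : |(2 * ((b : ℝ) + 1) ^ 2 - 16 * (b + 1) - 64) * u ^ 8| ≤ 200 := by
      rw [abs_mul, abs_of_nonneg h80]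
      have : |(2 * ((b : ℝ) + 1) ^ 2 - 16 * (b + 1) - 64)| ≤ 200 := by
        rw [abs_le]; constructor <;> nlinarith
      nlinarith [abs_nonneg (2 * ((b : ℝ) + 1) ^ 2 - 16 * (b + 1) - 64)]
    have e3 : |((b : ℝ) - 7) ^ 2 * u ^ 16| ≤ 49 := by
      rw [abs_of_nonneg (by positivity)]
      nlinarith [sq_nonneg ((b : ℝ) - 7)]
    refine (abs_add_le _ _).trans ((add_le_add_left (abs_add_le _ _) _).trans ?_)
    linarith
  calc u * u ^ b * _ ≤ u * 1 * 400 := by gcongr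
    _ = 400 * u := by ring

lemma continuous_octicKernel (b : ℕ) : Continuous (octicKernel b) := by
  unfold octicKernel
  refine Continuous.div (by fun_prop) (by fun_prop) fun u => ?_
  have : 0 ≤ u ^ 8 := by positivity
  positivity

lemma integral_mul_exp_neg {c : ℝ} (hc : 0 < c) :
    IntegrableOn (fun y : ℝ => y * Real.exp (-(c * y))) (Set.Ioi 0) ∧
    ∫ y in Set.Ioi (0 : ℝ), y * Real.exp (-(c * y)) = 1 / c ^ 2 := by
  have h := Real.integral_rpow_mul_exp_neg_mul_Ioi (a := 2) two_pos hc
  have e : ∀ y : ℝ, y ^ ((2 : ℝ) - 1) * Real.exp (-(c * y)) = y * Real.exp (-(c * y)) := fun y => by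
    norm_num
  simp only [e] at h
  have hv : (1 / c) ^ (2 : ℝ) * Real.Gamma 2 = 1 / c ^ 2 := by
    rw [Real.Gamma_two]; norm_num
  rw [hv] at h
  refine ⟨?_, h⟩
  by_contra hn
  have : 0 < 1 / c ^ 2 := by positivity
  rw [← h, integral_undef hn] at this
  exact lt_irrefl _ this

lemma integral_octicKernel {b : ℕ} (hb : b ≤ 6) {c : ℝ} (hc : 0 < c) :
    IntegrableOn (fun y : ℝ => y * octicKernel b (Real.exp (-(c * y)))) (Set.Ioi 0) ∧
    (∫ y in Set.Ioi (0 : ℝ), ‖y * octicKernel b (Real.exp (-(c * y)))‖ ≤ 400 / c ^ 2) ∧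
    ∫ y in Set.Ioi (0 : ℝ), y * octicKernel b (Real.exp (-(c * y))) = 1 / (2 * c ^ 2) := by
  obtain ⟨hi, hv⟩ := integral_mul_exp_neg hc
  have hbound : ∀ y ∈ Set.Ioi (0 : ℝ), ‖y * octicKernel b (Real.exp (-(c * y)))‖ ≤
      400 * (y * Real.exp (-(c * y))) := fun y hy => by
    have hy : 0 < y := hy
    rw [norm_mul, Real.norm_of_nonneg hy.le, Real.norm_eq_abs]
    have := abs_octicKernel_le hb (Real.exp_pos (-(c * y))).le
      (Real.exp_le_one_iff.mpr (by nlinarith))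
    nlinarith
  have hint : IntegrableOn (fun y : ℝ => y * octicKernel b (Real.exp (-(c * y)))) (Set.Ioi 0) := by
    refine (hi.const_mul 400).mono' ?_ ?_
    · have := continuous_octicKernel b
      exact Continuous.aestronglyMeasurable (by fun_prop)
    · exact (ae_restrict_mem measurableSet_Ioi).mono hbound
  refine ⟨hint, ?_, ?_⟩
  · refine (setIntegral_mono_on hint.norm (hi.const_mul 400) measurableSet_Ioi hbound).trans ?_
    rw [integral_const_mul, hv]; apply le_of_eq; ring
  · set G : ℝ → ℝ := fun y => (-(c * y) * (Real.exp (-(c * y)) ^ (b + 1) *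
      ((b + 1) + (b - 7) * Real.exp (-(c * y)) ^ 8) / (1 + Real.exp (-(c * y)) ^ 8) ^ 2) -
        Real.exp (-(c * y)) ^ (b + 1) / (1 + Real.exp (-(c * y)) ^ 8)) / c ^ 2 with hG
    have hderiv : ∀ y ∈ Set.Ici (0 : ℝ),
        HasDerivAt G (y * octicKernel b (Real.exp (-(c * y)))) y := by
      intro y _
      have hy : HasDerivAt (fun y : ℝ => -(c * y)) (-c) y := by
        simpa using ((hasDerivAt_id' y).const_mul c).fun_neg
      have he : HasDerivAt (fun y : ℝ => Real.exp (-(c * y))) (Real.exp (-(c * y)) * (-c)) y :=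
        hy.exp
      have hpos := Real.exp_pos (-(c * y))
      have h8 : 1 + Real.exp (-(c * y)) ^ 8 ≠ 0 := by positivity
      have h82 : (1 + Real.exp (-(c * y)) ^ 8) ^ 2 ≠ 0 := by positivity
      have H := ((hy.mul (((he.pow (b + 1)).mul (((he.pow 8).const_mul ((b : ℝ) - 7)).const_add
        ((b : ℝ) + 1))).div (((he.pow 8).const_add 1).pow 2) h82)).sub
        ((he.pow (b + 1)).div ((he.pow 8).const_add 1) h8)).div_const (c ^ 2)
      refine H.congr_deriv ?_
      simp only [Pi.pow_apply, Pi.mul_apply, Pi.div_apply]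
      generalize Real.exp (-(c * y)) = u at *
      rw [octicKernel]
      push_cast
      field_simp
      ring
    have hlim : Tendsto G atTop (𝓝 0) := by
      have hcy : Tendsto (fun y : ℝ => c * y) atTop atTop := tendsto_id.const_mul_atTop hc
      have hu : Tendsto (fun y : ℝ => Real.exp (-(c * y))) atTop (𝓝 0) :=
        Real.tendsto_exp_neg_atTop_nhds_zero.comp hcy
      have hyu : Tendsto (fun y : ℝ => (c * y) * Real.exp (-(c * y))) atTop (𝓝 0) := by
        simpa [Function.comp_def] using (Real.tendsto_pow_mul_exp_neg_atTop_nhds_zero 1).comp hcy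
      have hf : ContinuousAt
          (fun u : ℝ => u ^ b * ((b + 1) + (b - 7) * u ^ 8) / (1 + u ^ 8) ^ 2) 0 :=
        ContinuousAt.div (by fun_prop) (by fun_prop) (by norm_num)
      have hg : ContinuousAt (fun u : ℝ => u ^ (b + 1) / (1 + u ^ 8)) 0 :=
        ContinuousAt.div (by fun_prop) (by fun_prop) (by norm_num)
      have := (((hyu.mul (hf.tendsto.comp hu)).add (hg.tendsto.comp hu)).neg).div_const (c ^ 2)
      simp only [zero_mul, ne_eq, Nat.add_eq_zero_iff, one_ne_zero, and_false, not_false_eq_true,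
        zero_pow, zero_div, add_zero, neg_zero] at this
      refine this.congr fun y => ?_
      simp only [hG, Function.comp]
      ring
    have := integral_Ioi_of_hasDerivAt_of_tendsto' hderiv hint hlim
    rw [this]
    simp [hG]
    field_simp
    norm_num

/-- The residue index `b`, with `b + 1 ≡ 5 (2 r + 1)` modulo `8`. -/
def quinticIndex (r : ℕ) : ℕ := 2 * ((r + 2) % 4)

def quinticSign (r : ℕ) : ℤ := if (r + 6) % 8 < 4 then 1 else -1

lemma quinticIndex_le (r : ℕ) : quinticIndex r ≤ 6 := by
  rw [quinticIndex]; omega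

lemma norm_quinticSign (r : ℕ) : ‖(quinticSign r : ℝ)‖ = 1 := by
  rw [quinticSign]; split_ifs <;> simp

lemma quinticIndex_mul_mod (r j : ℕ) :
    (2 * r + 1) * (quinticIndex r + 1 + 8 * j) % 8 = 5 ∧
    ZMod.χ₈' ((quinticIndex r + 1 + 8 * j : ℕ) : ZMod 8) *
      (-1) ^ ((2 * r + 1) * (quinticIndex r + 1 + 8 * j) / 8) = quinticSign r * (-1) ^ j := by
  obtain ⟨k, s, hs, rfl⟩ : ∃ k s, s < 8 ∧ r = 8 * k + s :=
    ⟨r / 8, r % 8, Nat.mod_lt _ (by norm_num), by omega⟩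
  have hi : quinticIndex (8 * k + s) = quinticIndex s := by simp only [quinticIndex]; omega
  have hsg : quinticSign (8 * k + s) = quinticSign s := by
    simp only [quinticSign, show (8 * k + s + 6) % 8 = (s + 6) % 8 by omega]
  rw [hi, hsg]
  have hz : ((quinticIndex s + 1 + 8 * j : ℕ) : ZMod 8) = ((quinticIndex s + 1 : ℕ) : ZMod 8) := by
    push_cast
    rw [show (8 : ZMod 8) = 0 from rfl]
    ring
  have hN : (2 * (8 * k + s) + 1) * (quinticIndex s + 1 + 8 * j) =
      (2 * s + 1) * (quinticIndex s + 1) +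
        8 * (2 * (k * (quinticIndex s + 1) + 8 * k * j + s * j) + j) := by ring
  rw [hz, hN]
  generalize k * (quinticIndex s + 1) + 8 * k * j + s * j = t
  have hdiv : ((2 * s + 1) * (quinticIndex s + 1) + 8 * (2 * t + j)) / 8 =
      (2 * s + 1) * (quinticIndex s + 1) / 8 + (2 * t + j) := by omega
  rw [hdiv, Nat.add_mul_mod_self_left, pow_add, pow_add, pow_mul, neg_one_sq, one_pow, one_mul,
    ← mul_assoc]
  have hc : (2 * s + 1) * (quinticIndex s + 1) % 8 = 5 ∧
      ZMod.χ₈' ((quinticIndex s + 1 : ℕ) : ZMod 8) *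
          (-1) ^ ((2 * s + 1) * (quinticIndex s + 1) / 8) =
        quinticSign s := by
    interval_cases s <;> decide
  exact ⟨hc.1, by rw [hc.2]⟩

lemma quinticSeries_eq_tsum {q : ℝ} (h0 : 0 ≤ q) (h1 : q < 1) :
    quinticSeries q =
      ((∑' r : ℕ, (quinticSign r : ℝ) *
          octicKernel (quinticIndex r) (q ^ (2 * r + 1)) : ℝ) : ℂ) := by
  have hq : ‖(q : ℂ)‖ < 1 := by rwa [Complex.norm_real, Real.norm_of_nonneg h0]
  set f : ℕ × ℕ → ℂ := fun p => if ((2 * p.2 + 1) * p.1) % 8 = 5 then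
    (ZMod.χ₈' p.1 : ℂ) * p.1 ^ 2 *
        ((-1) ^ ((2 * p.2 + 1) * p.1 / 8) * (q : ℂ) ^ ((2 * p.2 + 1) * p.1))
      else 0 with hf
  have hs : Summable f := by
    refine .of_norm_bounded (summable_norm_lambert_double hq) fun p => ?_
    simp only [hf]
    split_ifs
    · simp
    · rw [norm_zero]; exact norm_nonneg _
  have hq' : quinticSeries q = ∑' p : ℕ × ℕ, f p := rfl
  rw [hq', hs.tsum_prod, ← Summable.tsum_comm (f := fun d m => f (d, m)) hs, Complex.ofReal_tsum]
  refine tsum_congr fun r => ?_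
  have hinj : Function.Injective fun j : ℕ => quinticIndex r + 1 + 8 * j := fun a b h => by
    simp only at h; omega
  rw [← hinj.tsum_eq (f := fun d => f (d, r))]
  · rw [← (hasSum_octicKernel (quinticIndex r) (pow_nonneg h0 (2 * r + 1))
      (pow_lt_one₀ h0 h1 (by omega))).tsum_eq, ← tsum_mul_left, Complex.ofReal_tsum]
    refine tsum_congr fun j => ?_
    obtain ⟨e1, e2⟩ := quinticIndex_mul_mod r j
    have e2' := congrArg (Int.cast : ℤ → ℂ) e2
    simp only [hf, e1, if_true]
    generalize (2 * r + 1) * (quinticIndex r + 1 + 8 * j) / 8 = M at *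
    push_cast at e2' ⊢
    rw [← pow_mul]
    linear_combination ((quinticIndex r : ℂ) + 1 + 8 * j) ^ 2 *
      (q : ℂ) ^ ((2 * r + 1) * (quinticIndex r + 1 + 8 * j)) * e2'
  · intro d hd
    simp only [Function.mem_support, hf, ne_eq, ite_eq_right_iff, not_forall] at hd
    obtain ⟨h, -⟩ := hd
    have h8 : (d % 8) = quinticIndex r + 1 := by
      rw [Nat.mul_mod] at h
      have h2 : (2 * r + 1) % 8 = 2 * (r % 4) + 1 := by omega
      have h3 : quinticIndex r = 2 * ((r % 4 + 2) % 4) := by rw [quinticIndex]; omega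
      rw [h2] at h
      rw [h3]
      have := Nat.mod_lt d (show 8 > 0 by norm_num)
      have := Nat.mod_lt r (show 4 > 0 by norm_num)
      generalize d % 8 = x at *
      generalize r % 4 = y at *
      interval_cases x <;> interval_cases y <;> simp_all
    exact ⟨d / 8, by simp only; omega⟩

lemma hasSum_cos_odd {x : ℝ} (h0 : 0 ≤ x) (h1 : x ≤ 1 / 2) :
    HasSum (fun r : ℕ => 1 / (2 * r + 1 : ℝ) ^ 2 * Real.cos (2 * π * (2 * r + 1) * x))
      (π ^ 2 * (1 / 8 - x / 2)) := by
  have hB (x : ℝ) : (-1 : ℝ) ^ (1 + 1) * (2 * π) ^ (2 * 1) / 2 / (2 * 1).factorial *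
      (Polynomial.map (algebraMap ℚ ℝ) (Polynomial.bernoulli (2 * 1))).eval x =
      π ^ 2 * (x ^ 2 - x + 1 / 6) := by
    simp [Polynomial.bernoulli, Finset.sum_range_succ, Polynomial.eval_add, bernoulli_one]
    ring
  have H1 := hasSum_one_div_nat_pow_mul_cos one_ne_zero (x := x) ⟨h0, by linarith⟩
  have H2 := hasSum_one_div_nat_pow_mul_cos one_ne_zero (x := 2 * x) ⟨by linarith, by linarith⟩
  rw [hB] at H1 H2
  set f : ℕ → ℝ := fun n => 1 / (n : ℝ) ^ (2 * 1) * Real.cos (2 * π * n * x) with hf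
  have E : HasSum (fun n : ℕ => f (2 * n)) (1 / 4 * (π ^ 2 * ((2 * x) ^ 2 - 2 * x + 1 / 6))) := by
    have h := H2.mul_left (1 / 4)
    have he : (fun n : ℕ => f (2 * n)) =
        fun n : ℕ => 1 / 4 * (1 / (n : ℝ) ^ (2 * 1) * Real.cos (2 * π * n * (2 * x))) := by
      funext n
      simp only [hf]
      push_cast
      rw [show 2 * π * (2 * n) * x = 2 * π * n * (2 * x) by ring]
      ring
    rw [he]; exact h
  have hs := H1.summable
  have O : HasSum (fun r : ℕ => f (2 * r + 1)) (∑' r : ℕ, f (2 * r + 1)) :=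
    (hs.comp_injective (i := fun r : ℕ => 2 * r + 1) fun a b h => by simp only at h; omega).hasSum
  have hv := (E.even_add_odd O).unique H1
  have : ∑' r : ℕ, f (2 * r + 1) = π ^ 2 * (1 / 8 - x / 2) := by linear_combination hv
  rw [this] at O
  simpa [hf] using O

lemma quinticSign_eq (r : ℕ) : (quinticSign r : ℝ) =
    -(Real.cos (π / 8) + Real.cos (3 * π / 8)) * Real.cos (2 * π * (2 * r + 1) * (1 / 16)) +
    (Real.cos (π / 8) - Real.cos (3 * π / 8)) * Real.cos (2 * π * (2 * r + 1) * (3 / 16)) := by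
  obtain ⟨k, s, hs, rfl⟩ : ∃ k s, s < 8 ∧ r = 8 * k + s :=
    ⟨r / 8, r % 8, Nat.mod_lt _ (by norm_num), by omega⟩
  have hsg : quinticSign (8 * k + s) = quinticSign s := by
    simp only [quinticSign, show (8 * k + s + 6) % 8 = (s + 6) % 8 by omega]
  have e1 : 2 * π * (2 * ((8 * k + s : ℕ) : ℝ) + 1) * (1 / 16) = (2 * s + 1) * (π / 8) + k *
      (2 * π) := by
    push_cast; ring
  have e3 : 2 * π * (2 * ((8 * k + s : ℕ) : ℝ) + 1) * (3 / 16) =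
      (2 * s + 1) * (3 * π / 8) + (3 * k : ℕ) * (2 * π) := by
    push_cast; ring
  rw [hsg, e1, e3, Real.cos_add_nat_mul_two_pi, Real.cos_add_nat_mul_two_pi]
  have hsin : Real.cos (3 * π / 8) = Real.sin (π / 8) := by
    rw [← Real.cos_pi_div_two_sub]; congr 1; ring
  have hsq : Real.cos (π / 8) ^ 2 + Real.cos (3 * π / 8) ^ 2 = 1 := by
    rw [hsin]; exact Real.cos_sq_add_sin_sq _
  have c5 : Real.cos (5 * (π / 8)) = -Real.cos (3 * π / 8) := by
    rw [← Real.cos_pi_sub]; congr 1; ring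
  have c7 : Real.cos (7 * (π / 8)) = -Real.cos (π / 8) := by
    rw [← Real.cos_pi_sub]; congr 1; ring
  have add_pi (n : ℝ) : Real.cos ((n + 8) * (π / 8)) = -Real.cos (n * (π / 8)) := by
    rw [← Real.cos_add_pi]; congr 1; ring
  have c9 := add_pi 1
  have c11 := add_pi 3
  have c13 := add_pi 5
  have c15 := add_pi 7
  have c21 : Real.cos (21 * (π / 8)) = Real.cos (5 * (π / 8)) := by
    rw [← Real.cos_sub_two_pi]; congr 1; ring
  have c27 : Real.cos (27 * (π / 8)) = Real.cos (11 * (π / 8)) := by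
    rw [← Real.cos_sub_two_pi]; congr 1; ring
  have c33 : Real.cos (33 * (π / 8)) = Real.cos (1 * (π / 8)) := by
    rw [← Real.cos_sub_nat_mul_two_pi _ 2]; congr 1; push_cast; ring
  have c39 : Real.cos (39 * (π / 8)) = Real.cos (7 * (π / 8)) := by
    rw [← Real.cos_sub_nat_mul_two_pi _ 2]; congr 1; push_cast; ring
  have c45 : Real.cos (45 * (π / 8)) = Real.cos (13 * (π / 8)) := by
    rw [← Real.cos_sub_nat_mul_two_pi _ 2]; congr 1; push_cast; ring
  have h3 (n : ℝ) : n * (3 * π / 8) = (3 * n) * (π / 8) := by ring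
  have h33 : Real.cos (3 * (π / 8)) = Real.cos (3 * π / 8) := by congr 1; ring
  rw [h3]
  clear e1 e3 hsin add_pi h3
  generalize Real.cos (3 * π / 8) = B at *
  generalize hA : Real.cos (π / 8) = A at *
  generalize π / 8 = x at *
  norm_num at c9 c11 c13 c15 c33
  interval_cases s <;> norm_num [quinticSign, c5, c7, c9, c11, c13, c15, c21, c27,
    c33, c39, c45, h33, hA] <;>
    first | linear_combination hsq | linear_combination -hsq

lemma cos_sum_sq : (Real.cos (π / 8) + 2 * Real.cos (3 * π / 8)) ^ 2 = (5 + 1 / √2) / 2 := by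
  have hsin : Real.cos (3 * π / 8) = Real.sin (π / 8) := by
    rw [← Real.cos_pi_div_two_sub]; congr 1; ring
  have h2 : √2 ^ 2 = 2 := Real.sq_sqrt (by norm_num)
  have hc : 2 * Real.cos (π / 8) ^ 2 - 1 = √2 / 2 := by
    rw [← Real.cos_two_mul, ← Real.cos_pi_div_four]; congr 1; ring
  have hs : 2 * Real.sin (π / 8) * Real.cos (π / 8) = √2 / 2 := by
    rw [← Real.sin_two_mul, ← Real.sin_pi_div_four]; congr 1; ring
  have h1 := Real.sin_sq_add_cos_sq (π / 8)
  have : 1 / √2 = √2 / 2 := by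
    field_simp; rw [h2]
  rw [hsin, this]
  linear_combination 2 * hs + 4 * h1 - 3 / 2 * hc

lemma hasSum_quinticSign : HasSum (fun r : ℕ => (quinticSign r : ℝ) / (2 * r + 1) ^ 2)
    (-(π ^ 2 / 16) * (Real.cos (π / 8) + 2 * Real.cos (3 * π / 8))) := by
  have h1 := (hasSum_cos_odd (x := 1 / 16) (by norm_num) (by norm_num)).mul_left
    (-(Real.cos (π / 8) + Real.cos (3 * π / 8)))
  have h3 := (hasSum_cos_odd (x := 3 / 16) (by norm_num) (by norm_num)).mul_left
    (Real.cos (π / 8) - Real.cos (3 * π / 8))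
  have hf : (fun r : ℕ => (quinticSign r : ℝ) / (2 * r + 1) ^ 2) = fun r : ℕ =>
      -(Real.cos (π / 8) + Real.cos (3 * π / 8)) *
        (1 / (2 * r + 1 : ℝ) ^ 2 * Real.cos (2 * π * (2 * r + 1) * (1 / 16))) +
      (Real.cos (π / 8) - Real.cos (3 * π / 8)) *
        (1 / (2 * r + 1 : ℝ) ^ 2 * Real.cos (2 * π * (2 * r + 1) * (3 / 16))) := by
    funext r
    rw [quinticSign_eq]; ring
  rw [hf]
  have hv : -(π ^ 2 / 16) * (Real.cos (π / 8) + 2 * Real.cos (3 * π / 8)) =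
      -(Real.cos (π / 8) + Real.cos (3 * π / 8)) * (π ^ 2 * (1 / 8 - 1 / 16 / 2)) +
      (Real.cos (π / 8) - Real.cos (3 * π / 8)) * (π ^ 2 * (1 / 8 - 3 / 16 / 2)) := by ring
  rw [hv]
  exact h1.add h3

lemma integral_quinticSeries :
    ∫ y in Set.Ioi (0 : ℝ), y * (quinticSeries (Real.exp (-(π * y / 8)) : ℝ)).re =
      -2 * (Real.cos (π / 8) + 2 * Real.cos (3 * π / 8)) := by
  set c : ℕ → ℝ := fun r => π * (2 * r + 1) / 8 with hc
  have hc0 (r : ℕ) : 0 < c r := by simp only [hc]; positivity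
  set F : ℕ → ℝ → ℝ := fun r y =>
    (quinticSign r : ℝ) * (y * octicKernel (quinticIndex r) (Real.exp (-(c r * y)))) with hF
  have hK (r : ℕ) := integral_octicKernel (quinticIndex_le r) (hc0 r)
  have hodd : Summable fun r : ℕ => 1 / (2 * r + 1 : ℝ) ^ 2 := by
    have := (Real.summable_one_div_nat_pow.mpr one_lt_two).comp_injective
      (i := fun r : ℕ => 2 * r + 1) fun a b h => by simp only at h; omega
    simpa [Function.comp_def] using this
  have key := hasSum_integral_of_summable_integral_norm (μ := volume.restrict (Set.Ioi 0)) (F := F)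
    (fun r => (hK r).1.const_mul _) (by
      refine .of_nonneg_of_le (fun r => integral_nonneg fun y => norm_nonneg _) (fun r => ?_)
        (hodd.mul_left (400 * 64 / π ^ 2))
      simp only [hF, norm_mul _ (_ * _), norm_quinticSign, one_mul]
      refine (hK r).2.1.trans (le_of_eq ?_)
      simp only [hc]
      field_simp
      norm_num)
  have hv (r : ℕ) : ∫ y in Set.Ioi (0 : ℝ), F r y =
      32 / π ^ 2 * ((quinticSign r : ℝ) / (2 * r + 1) ^ 2) := by
    simp only [hF]
    rw [integral_const_mul, (hK r).2.2]
    simp only [hc]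
    field_simp
    ring
  simp only [hv] at key
  have := key.unique (hasSum_quinticSign.mul_left (32 / π ^ 2))
  rw [show -2 * (Real.cos (π / 8) + 2 * Real.cos (3 * π / 8)) = 32 / π ^ 2 *
    (-(π ^ 2 / 16) * (Real.cos (π / 8) + 2 * Real.cos (3 * π / 8))) by field_simp; ring, ← this]
  refine setIntegral_congr_fun measurableSet_Ioi fun y hy => ?_
  have hy : 0 < y := hy
  rw [quinticSeries_eq_tsum (Real.exp_pos _).le (Real.exp_lt_one_iff.mpr (by
    have := Real.pi_pos; have : 0 < π * y / 8 := by positivity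
    linarith)), Complex.ofReal_re, ← tsum_mul_left]
  refine tsum_congr fun r => ?_
  simp only [hF, hc]
  rw [← Real.exp_nat_mul]
  rw [show ((2 * r + 1 : ℕ) : ℝ) * -(π * y / 8) = -(π * (2 * r + 1) / 8 * y) by push_cast; ring]
  ring

noncomputable def realTheta (q : ℝ) : ℝ := ∑' n : ℤ, q ^ (n.natAbs ^ 2)

noncomputable def realThetaOdd (q : ℝ) : ℝ := realTheta q - realTheta (q ^ 4)

lemma ofReal_realTheta (q : ℝ) : (realTheta q : ℂ) = thetaSeries q := by
  rw [realTheta, thetaSeries, Complex.ofReal_tsum]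
  simp

lemma ofReal_realThetaOdd (q : ℝ) : (realThetaOdd q : ℂ) = thetaOdd q := by
  rw [realThetaOdd, thetaOdd]
  push_cast [ofReal_realTheta]
  rfl

lemma realTheta_zero : realTheta 0 = 1 := by
  have := ofReal_realTheta 0
  rw [Complex.ofReal_zero, thetaSeries_zero] at this
  exact_mod_cast this

section
variable {q : ℝ}

lemma norm_ofReal_lt_one (hq : |q| < 1) : ‖(q : ℂ)‖ < 1 := by
  rwa [Complex.norm_real, Real.norm_eq_abs]

lemma abs_pow_lt_one (hq : |q| < 1) {k : ℕ} (hk : k ≠ 0) : |q ^ k| < 1 := by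
  rw [abs_pow]
  exact pow_lt_one₀ (abs_nonneg _) hq hk

lemma realTheta_neg (hq : |q| < 1) : realTheta (-q) = 2 * realTheta (q ^ 4) - realTheta q := by
  have := thetaSeries_neg (norm_ofReal_lt_one hq)
  rw [← Complex.ofReal_neg, ← Complex.ofReal_pow] at this
  simp only [← ofReal_realTheta] at this
  exact_mod_cast this

lemma realTheta_sq_add_sq (hq : |q| < 1) :
    realTheta q ^ 2 + realTheta (-q) ^ 2 = 2 * realTheta (q ^ 2) ^ 2 := by
  have := thetaSeries_sq_add_sq (norm_ofReal_lt_one hq)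
  rw [← Complex.ofReal_neg, ← Complex.ofReal_pow] at this
  simp only [← ofReal_realTheta] at this
  exact_mod_cast this

lemma realTheta_mul_neg (hq : |q| < 1) : realTheta q * realTheta (-q) = realTheta (-q ^ 2) ^ 2 := by
  have := thetaSeries_mul_neg (norm_ofReal_lt_one hq)
  rw [← Complex.ofReal_pow, ← Complex.ofReal_neg, ← Complex.ofReal_neg] at this
  simp only [← ofReal_realTheta] at this
  exact_mod_cast this

lemma realTheta_landen (hq : |q| < 1) :
    realThetaOdd q ^ 2 + realTheta (q ^ 4) ^ 2 = realTheta (q ^ 2) ^ 2 := by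
  have := thetaSeries_landen (norm_ofReal_lt_one hq)
  rw [← Complex.ofReal_pow, ← Complex.ofReal_pow] at this
  simp only [← ofReal_realTheta] at this
  exact_mod_cast this

lemma realThetaOdd_sq (hq : |q| < 1) :
    realThetaOdd q ^ 2 = 2 * realTheta (q ^ 8) * realThetaOdd (q ^ 2) := by
  have := thetaOdd_sq (norm_ofReal_lt_one hq)
  rw [← Complex.ofReal_pow, ← Complex.ofReal_pow] at this
  simp only [← ofReal_realTheta, ← ofReal_realThetaOdd] at this
  exact_mod_cast this

lemma realTheta_ne_zero (hq : |q| < 1) : realTheta q ≠ 0 := by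
  have := thetaSeries_ne_zero (norm_ofReal_lt_one hq)
  rw [← ofReal_realTheta] at this
  exact_mod_cast this

lemma realTheta_pos_of_nonneg (h0 : 0 ≤ q) (h1 : q < 1) : 0 < realTheta q :=
  lt_of_le_of_ne (tsum_nonneg fun n => pow_nonneg h0 _)
    (realTheta_ne_zero (by rwa [abs_of_nonneg h0])).symm

lemma realTheta_neg_pos (h0 : 0 ≤ q) (h1 : q < 1) : 0 < realTheta (-q) := by
  have hq : |q| < 1 := by rwa [abs_of_nonneg h0]
  have h := realTheta_mul_neg hq
  have hp := realTheta_pos_of_nonneg h0 h1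
  have hne := realTheta_ne_zero (q := -q) (by rwa [abs_neg])
  have h2 : 0 ≤ realTheta q * realTheta (-q) := h ▸ sq_nonneg _
  exact lt_of_le_of_ne (nonneg_of_mul_nonneg_right h2 hp) hne.symm

lemma realThetaOdd_ne_zero (hq : |q| < 1) (h0 : q ≠ 0) : realThetaOdd q ≠ 0 := by
  have := thetaOdd_ne_zero (norm_ofReal_lt_one hq) (by exact_mod_cast h0)
  rw [← ofReal_realThetaOdd] at this
  exact_mod_cast this

lemma realThetaOdd_pos (h0 : 0 < q) (h1 : q < 1) : 0 < realThetaOdd q := by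
  have hs0 : 0 < √q := Real.sqrt_pos.mpr h0
  have hs1 : √q < 1 := by rw [Real.sqrt_lt' one_pos]; simpa using h1
  have hs : |√q| < 1 := by rwa [abs_of_pos hs0]
  have h := realThetaOdd_sq hs
  rw [Real.sq_sqrt h0.le] at h
  have h2 : 0 < realThetaOdd √q ^ 2 := sq_pos_of_ne_zero (realThetaOdd_ne_zero hs hs0.ne')
  have h8 := realTheta_pos_of_nonneg (pow_nonneg hs0.le 8) (pow_lt_one₀ hs0.le hs1 (by norm_num))
  rw [h] at h2
  exact pos_of_mul_pos_right h2 (by positivity)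

lemma differentiableAt_realTheta (hq : |q| < 1) : DifferentiableAt ℝ realTheta q := by
  have h := (differentiableAt_thetaSeries (norm_ofReal_lt_one hq)).hasDerivAt.real_of_complex
  have e : (fun x : ℝ => (thetaSeries x).re) = realTheta := by
    funext x; rw [← ofReal_realTheta, Complex.ofReal_re]
  rw [e] at h
  exact h.differentiableAt

lemma hasDerivAt_realTheta_zero : HasDerivAt realTheta 2 0 := by
  have h := (show HasDerivAt thetaSeries 2 ((0 : ℝ) : ℂ) by
    simpa using hasDerivAt_thetaSeries_zero).real_of_complex
  have e : (fun x : ℝ => (thetaSeries x).re) = realTheta := by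
    funext x; rw [← ofReal_realTheta, Complex.ofReal_re]
  rw [e] at h
  simpa using h

/-- The square of the quintic series as a theta product. -/
lemma quinticSeries_sq (h0 : 0 < q) (h1 : q < 1) :
    (quinticSeries q).re ^ 2 = 18 * realTheta (-q ^ 8) ^ 7 * realThetaOdd (q ^ 2) ^ 5 := by
  obtain ⟨z, hz, -⟩ := exists_eighth_root
  obtain ⟨w, hw⟩ : ∃ w : ℂ, w ^ 2 = z := IsAlgClosed.exists_pow_nat_eq z two_pos
  have hz1 := norm_eq_one_of_sq_eq_I hz
  have hw1 : ‖w‖ = 1 := by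
    have : ‖w‖ ^ 2 = 1 := by rw [← norm_pow, hw, hz1]
    exact (pow_eq_one_iff_of_nonneg (norm_nonneg _) two_ne_zero).mp this
  have hz4 : z ^ 4 = -1 := by linear_combination (z ^ 2 + Complex.I) * hz + Complex.I_sq
  have hw8 : w ^ 8 = -1 := by rw [show w ^ 8 = (w ^ 2) ^ 4 by ring, hw, hz4]
  have hz0 : z ≠ 0 := by rintro rfl; simp at hz1
  have hq : ‖(q : ℂ)‖ < 1 := norm_ofReal_lt_one (by rwa [abs_of_pos h0])
  have h := quinticSeries_mul hq (by exact_mod_cast h0.ne') hz hw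
  have hs := thetaOdd_sq (q := w * q) (by simpa [hw1] using hq)
  rw [mul_pow, mul_pow, hw8, hw, thetaOdd_mul (norm_pow_lt_one hq two_ne_zero)
    (by linear_combination (z ^ 4 - 1) * hz4), neg_one_mul] at hs
  have hr : quinticSeries q = ((quinticSeries q).re : ℂ) := by
    rw [quinticSeries_eq_tsum h0.le h1, Complex.ofReal_re]
  have hC : thetaSeries (-(q : ℂ) ^ 8) = (realTheta (-q ^ 8) : ℂ) := by
    rw [ofReal_realTheta]; push_cast; rfl
  have hD : thetaOdd ((q : ℂ) ^ 2) = (realThetaOdd (q ^ 2) : ℂ) := by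
    rw [ofReal_realThetaOdd]; push_cast; rfl
  rw [hC, hD] at h hs
  rw [hr] at h
  have key : z * ((quinticSeries q).re : ℂ) ^ 2 =
      z * (18 * (realTheta (-q ^ 8) : ℂ) ^ 7 * (realThetaOdd (q ^ 2) : ℂ) ^ 5) := by
    rw [← hw, ← mul_pow, h, hw, mul_pow, hs]; ring
  exact_mod_cast mul_left_cancel₀ hz0 key

lemma continuousOn_quinticSeries :
    ContinuousOn (fun q : ℝ => (quinticSeries q).re) (Set.Ioo 0 1) := by
  obtain ⟨z, hz, -⟩ := exists_eighth_root
  obtain ⟨w, hw⟩ : ∃ w : ℂ, w ^ 2 = z := IsAlgClosed.exists_pow_nat_eq z two_pos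
  have hz1 := norm_eq_one_of_sq_eq_I hz
  have hw1 : ‖w‖ = 1 := by
    have : ‖w‖ ^ 2 = 1 := by rw [← norm_pow, hw, hz1]
    exact (pow_eq_one_iff_of_nonneg (norm_nonneg _) two_ne_zero).mp this
  have hw0 : w ≠ 0 := by rintro rfl; simp at hw1
  have hc : ContinuousOn (fun q : ℝ => (-3 * thetaSeries (-(q : ℂ) ^ 8) ^ 3 *
      thetaOdd ((q : ℂ) ^ 2) ^ 2 * thetaOdd (w * q) / w).re) (Set.Ioo 0 1) := by
    intro q hq
    have hqn : ‖(q : ℂ)‖ < 1 := norm_ofReal_lt_one (by rw [abs_of_pos hq.1]; exact hq.2)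
    have c1 : ContinuousAt (fun q : ℝ => thetaSeries (-(q : ℂ) ^ 8)) q :=
      ContinuousAt.comp (f := fun q : ℝ => -(q : ℂ) ^ 8)
        (continuousAt_thetaSeries (by rw [norm_neg]; exact norm_pow_lt_one hqn (by norm_num)))
        (by fun_prop)
    have cO {x : ℂ} (hx : ‖x‖ < 1) : ContinuousAt thetaOdd x :=
      (differentiableOn_thetaOdd.differentiableAt
        (Metric.isOpen_ball.mem_nhds (by simpa using hx))).continuousAt
    have c2 : ContinuousAt (fun q : ℝ => thetaOdd ((q : ℂ) ^ 2)) q :=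
      ContinuousAt.comp (f := fun q : ℝ => (q : ℂ) ^ 2) (cO (norm_pow_lt_one hqn two_ne_zero))
        (by fun_prop)
    have c3 : ContinuousAt (fun q : ℝ => thetaOdd (w * q)) q :=
      ContinuousAt.comp (f := fun q : ℝ => w * (q : ℂ)) (cO (by simpa [hw1] using hqn))
          (by fun_prop)
    have := ((((c1.pow 3).const_mul (-3)).mul (c2.pow 2)).mul c3).div_const w
    exact (Complex.continuous_re.continuousAt.comp this).continuousWithinAt
  refine hc.congr fun q hq => ?_
  have hqn : ‖(q : ℂ)‖ < 1 := norm_ofReal_lt_one (by rw [abs_of_pos hq.1]; exact hq.2)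
  have := quinticSeries_mul hqn (by exact_mod_cast hq.1.ne') hz hw
  simp only
  rw [← this, mul_div_cancel_left₀ _ hw0]

end

lemma exp_neg_mem_Ioo {c : ℝ} (hc : 0 < c) : Real.exp (-c) ∈ Set.Ioo (0 : ℝ) 1 :=
  ⟨Real.exp_pos _, Real.exp_lt_one_iff.mpr (by linarith)⟩

lemma quinticSeries_neg {q : ℝ} (h0 : 0 < q) (h1 : q < 1) : (quinticSeries q).re < 0 := by
  set f : ℝ → ℝ := fun q => (quinticSeries q).re with hf
  have hne : ∀ x ∈ Set.Ioo (0 : ℝ) 1, f x ≠ 0 := by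
    intro x hx h
    have h2 := quinticSeries_sq hx.1 hx.2
    have hC := realTheta_neg_pos (pow_nonneg hx.1.le 8) (pow_lt_one₀ hx.1.le hx.2 (by norm_num))
    have hD := realThetaOdd_pos (pow_pos hx.1 2) (pow_lt_one₀ hx.1.le hx.2 two_ne_zero)
    have : (quinticSeries x).re = 0 := h
    rw [this] at h2
    have : 0 < 18 * realTheta (-x ^ 8) ^ 7 * realThetaOdd (x ^ 2) ^ 5 := by positivity
    linarith
  by_contra hn
  have hpos : ∀ x ∈ Set.Ioo (0 : ℝ) 1, 0 < f x := by
    intro x hx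
    by_contra hx'
    have hqm : q ∈ Set.Ioo (0 : ℝ) 1 := ⟨h0, h1⟩
    obtain ⟨c, hc, hc0⟩ := isPreconnected_Ioo.intermediate_value hx hqm continuousOn_quinticSeries
      (show (0 : ℝ) ∈ Set.Icc (f x) (f q) from ⟨not_lt.mp hx', not_lt.mp hn⟩)
    exact hne c hc hc0
  have hI := integral_quinticSeries
  have h2 : 0 ≤ ∫ y in Set.Ioi (0 : ℝ), y * (quinticSeries (Real.exp (-(π * y / 8)) : ℝ)).re := by
    refine setIntegral_nonneg measurableSet_Ioi fun y hy => ?_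
    have hy : 0 < y := hy
    exact mul_nonneg hy.le (hpos _ (exp_neg_mem_Ioo (by positivity))).le
  have c1 : 0 < Real.cos (π / 8) :=
    Real.cos_pos_of_mem_Ioo ⟨by linarith [Real.pi_pos], by linarith [Real.pi_pos]⟩
  have c3 : 0 < Real.cos (3 * π / 8) :=
    Real.cos_pos_of_mem_Ioo ⟨by linarith [Real.pi_pos], by linarith [Real.pi_pos]⟩
  linarith

lemma integral_mul_sqrt_theta :
    ∫ y in Set.Ioi (0 : ℝ), y * √(realTheta (-Real.exp (-(π * y))) ^ 7 *
      realThetaOdd (Real.exp (-(π * y / 4))) ^ 5) = √(5 + 1 / √2) / 3 := by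
  have hI := integral_quinticSeries
  have h : ∀ y ∈ Set.Ioi (0 : ℝ), y * (quinticSeries (Real.exp (-(π * y / 8)) : ℝ)).re =
      -(3 * √2) * (y * √(realTheta (-Real.exp (-(π * y))) ^ 7 *
      realThetaOdd (Real.exp (-(π * y / 4))) ^ 5)) := by
    intro y hy
    have hy : 0 < y := hy
    obtain ⟨e0, e1⟩ := exp_neg_mem_Ioo (show 0 < π * y / 8 by positivity)
    have hs := quinticSeries_sq e0 e1
    rw [← Real.exp_nat_mul, ← Real.exp_nat_mul,
      show ((8 : ℕ) : ℝ) * -(π * y / 8) = -(π * y) by push_cast; ring,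
      show ((2 : ℕ) : ℝ) * -(π * y / 8) = -(π * y / 4) by push_cast; ring] at hs
    have hneg := quinticSeries_neg e0 e1
    have : (quinticSeries (Real.exp (-(π * y / 8)) : ℝ)).re = -(3 * √2 *
        √(realTheta (-Real.exp (-(π * y))) ^ 7 * realThetaOdd (Real.exp (-(π * y / 4))) ^ 5)) := by
      rw [← neg_eq_iff_eq_neg, ← abs_of_neg hneg, ← Real.sqrt_sq_eq_abs, hs,
        show (3 : ℝ) * √2 = √18 by
          rw [show (18 : ℝ) = 3 ^ 2 * 2 by norm_num, Real.sqrt_mul (by norm_num),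
            Real.sqrt_sq (by norm_num)], ← Real.sqrt_mul (by norm_num), mul_assoc]
    rw [this]; ring
  rw [setIntegral_congr_fun measurableSet_Ioi h, integral_const_mul] at hI
  have c1 : 0 < Real.cos (π / 8) :=
    Real.cos_pos_of_mem_Ioo ⟨by linarith [Real.pi_pos], by linarith [Real.pi_pos]⟩
  have c3 : 0 < Real.cos (3 * π / 8) :=
    Real.cos_pos_of_mem_Ioo ⟨by linarith [Real.pi_pos], by linarith [Real.pi_pos]⟩
  have hc : √2 * (Real.cos (π / 8) + 2 * Real.cos (3 * π / 8)) = √(5 + 1 / √2) := by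
    rw [eq_comm, Real.sqrt_eq_iff_mul_self_eq (by positivity) (by positivity)]
    have := cos_sum_sq
    have h2 : √2 ^ 2 = 2 := Real.sq_sqrt (by norm_num)
    rw [← sq, mul_pow, h2, this]; ring
  have h2 : √2 ^ 2 = 2 := Real.sq_sqrt (by norm_num)
  rw [← hc]
  have h20 : √2 ≠ 0 := by positivity
  apply mul_left_cancel₀ (show -(3 * √2) ≠ 0 by simp)
  rw [hI]
  linear_combination (Real.cos (π / 8) + 2 * Real.cos (3 * π / 8)) * h2

/-- Gauss' integral, which computes the arithmetic-geometric mean. -/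
noncomputable def agmIntegral (a b : ℝ) : ℝ :=
  ∫ x in Set.Ioi (0 : ℝ), 1 / √((x ^ 2 + a ^ 2) * (x ^ 2 + b ^ 2))

section
variable {a b : ℝ}

lemma agmIntegral_eq_agm (ha : 0 < a) (hb : 0 < b) :
    agmIntegral a b = agmIntegral ((a + b) / 2) √(a * b) := by
  set g : ℝ → ℝ := fun t => 1 / √((t ^ 2 + ((a + b) / 2) ^ 2) * (t ^ 2 + √(a * b) ^ 2)) with hg
  set f : ℝ → ℝ := fun x => (x - a * b / x) / 2 with hf
  have hab : 0 < a * b := mul_pos ha hb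
  have hd : ∀ x ∈ Set.Ioi (0 : ℝ), HasDerivWithinAt f ((1 + a * b / x ^ 2) / 2) (Set.Ioi 0) x := by
    intro x hx
    have hx : 0 < x := hx
    have := (((hasDerivAt_id' x).sub (((hasDerivAt_inv hx.ne').const_mul (a * b)))).div_const 2)
    refine (this.congr_deriv ?_).hasDerivWithinAt
    field_simp; ring
  have hinj : Set.InjOn f (Set.Ioi 0) := by
    intro x hx y hy h
    have hx : 0 < x := hx
    have hy : 0 < y := hy
    simp only [hf] at h
    field_simp at h
    have : (x - y) * (x * y + a * b) = 0 := by linear_combination h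
    rcases mul_eq_zero.mp this with h | h
    · linarith
    · nlinarith [mul_pos hx hy]
  have himg : f '' Set.Ioi 0 = Set.univ := by
    refine Set.eq_univ_of_forall fun t => ⟨t + √(t ^ 2 + a * b), ?_, ?_⟩
    · have : |t| < √(t ^ 2 + a * b) := by
        rw [← Real.sqrt_sq_eq_abs]; exact Real.sqrt_lt_sqrt (sq_nonneg _) (by linarith)
      have := neg_abs_le t
      exact Set.mem_Ioi.mpr (by linarith)
    · have h1 : |t| < √(t ^ 2 + a * b) := by
        rw [← Real.sqrt_sq_eq_abs]; exact Real.sqrt_lt_sqrt (sq_nonneg _) (by linarith)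
      have h2 := neg_abs_le t
      have h3 : √(t ^ 2 + a * b) ^ 2 = t ^ 2 + a * b := Real.sq_sqrt (by positivity)
      simp only [hf]
      have : 0 < t + √(t ^ 2 + a * b) := by linarith
      field_simp
      linear_combination h3
  have key := integral_image_eq_integral_abs_deriv_smul measurableSet_Ioi hd hinj g
  rw [himg, setIntegral_univ] at key
  have heven : ∫ t, g t = 2 * agmIntegral ((a + b) / 2) √(a * b) := by
    have := integral_comp_abs (f := g)
    simp only [hg, sq_abs] at this
    exact this
  have hr : ∫ x in Set.Ioi (0 : ℝ), |(1 + a * b / x ^ 2) / 2| • g (f x) = 2 * agmIntegral a b := by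
    rw [agmIntegral, ← integral_const_mul]
    refine setIntegral_congr_fun measurableSet_Ioi fun x hx => ?_
    have hx : 0 < x := hx
    have e1 : (f x ^ 2 + ((a + b) / 2) ^ 2) * (f x ^ 2 + √(a * b) ^ 2) =
        ((x ^ 2 + a ^ 2) * (x ^ 2 + b ^ 2)) * ((x ^ 2 + a * b) / (4 * x ^ 2)) ^ 2 := by
      rw [Real.sq_sqrt hab.le]
      simp only [hf]
      field_simp
      ring
    simp only [hg, smul_eq_mul]
    rw [e1, Real.sqrt_mul (by positivity), Real.sqrt_sq (by positivity), abs_of_pos (by positivity)]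
    have : 0 < √((x ^ 2 + a ^ 2) * (x ^ 2 + b ^ 2)) := by positivity
    field_simp
    ring
  rw [heven, hr] at key
  linarith

lemma integral_Ioi_one_div_sq_add_sq (ha : 0 < a) :
    IntegrableOn (fun x : ℝ => 1 / (x ^ 2 + a ^ 2)) (Set.Ioi 0) ∧
    ∫ x in Set.Ioi (0 : ℝ), 1 / (x ^ 2 + a ^ 2) = π / 2 / a := by
  have hd : ∀ x ∈ Set.Ioi (0 : ℝ),
      HasDerivAt (fun x : ℝ => Real.arctan (x / a) / a) (1 / (x ^ 2 + a ^ 2)) x := by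
    intro x _
    have := (((hasDerivAt_id' x).div_const a).arctan).div_const a
    refine this.congr_deriv ?_
    field_simp; ring
  have hc : ContinuousWithinAt (fun x : ℝ => Real.arctan (x / a) / a) (Set.Ici 0) 0 :=
    Continuous.continuousWithinAt (by fun_prop)
  have hl : Tendsto (fun x : ℝ => Real.arctan (x / a) / a) atTop (𝓝 (π / 2 / a)) :=
    ((tendsto_nhds_of_tendsto_nhdsWithin Real.tendsto_arctan_atTop).comp
      (tendsto_id.atTop_div_const ha)).div_const a
  have hp : ∀ x ∈ Set.Ioi (0 : ℝ), 0 ≤ 1 / (x ^ 2 + a ^ 2) := fun x _ => by positivity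
  refine ⟨integrableOn_Ioi_deriv_of_nonneg hc hd hp hl, ?_⟩
  rw [integral_Ioi_of_hasDerivAt_of_nonneg hc hd hp hl]
  simp

lemma agmIntegral_bounds (hb : 0 < b) (hab : b ≤ a) :
    π / 2 / a ≤ agmIntegral a b ∧ agmIntegral a b ≤ π / 2 / b := by
  have ha := hb.trans_le hab
  obtain ⟨ia, va⟩ := integral_Ioi_one_div_sq_add_sq ha
  obtain ⟨ib, vb⟩ := integral_Ioi_one_div_sq_add_sq hb
  have hle : ∀ x ∈ Set.Ioi (0 : ℝ),
      1 / √((x ^ 2 + a ^ 2) * (x ^ 2 + b ^ 2)) ≤ 1 / (x ^ 2 + b ^ 2) := fun x _ => by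
    refine one_div_le_one_div_of_le (by positivity) (Real.le_sqrt_of_sq_le ?_)
    rw [sq]
    gcongr
  have hge : ∀ x ∈ Set.Ioi (0 : ℝ),
      1 / (x ^ 2 + a ^ 2) ≤ 1 / √((x ^ 2 + a ^ 2) * (x ^ 2 + b ^ 2)) := fun x _ => by
    refine one_div_le_one_div_of_le (by positivity) ?_
    rw [Real.sqrt_le_iff, sq (x ^ 2 + a ^ 2)]
    have : b ^ 2 ≤ a ^ 2 := pow_le_pow_left₀ hb.le hab 2
    exact ⟨by positivity, mul_le_mul_of_nonneg_left (by linarith) (by positivity)⟩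
  have hi : IntegrableOn (fun x : ℝ => 1 / √((x ^ 2 + a ^ 2) * (x ^ 2 + b ^ 2))) (Set.Ioi 0) := by
    refine ib.mono' (Continuous.aestronglyMeasurable ?_)
      ((ae_restrict_mem measurableSet_Ioi).mono fun x hx => ?_)
    · exact Continuous.div continuous_const (by fun_prop) fun x => by positivity
    · rw [Real.norm_of_nonneg (by positivity)]; exact hle x hx
  exact ⟨va ▸ setIntegral_mono_on ia hi measurableSet_Ioi hge,
    vb ▸ setIntegral_mono_on hi ib measurableSet_Ioi hle⟩

lemma EllK_eq_agmIntegral (ha : 0 < a) (hb : 0 < b) {k : ℝ} (hk : k ^ 2 = 1 - (b / a) ^ 2) :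
    EllK k = a * agmIntegral a b := by
  set f : ℝ → ℝ := fun t => t / √(t ^ 2 + b ^ 2) with hf
  have hr (t : ℝ) : 0 < √(t ^ 2 + b ^ 2) := by positivity
  have hr2 (t : ℝ) : √(t ^ 2 + b ^ 2) ^ 2 = t ^ 2 + b ^ 2 := Real.sq_sqrt (by positivity)
  have hd : ∀ t ∈ Set.Ioi (0 : ℝ),
      HasDerivWithinAt f (b ^ 2 / √(t ^ 2 + b ^ 2) ^ 3) (Set.Ioi 0) t := by
    intro t _
    have h1 : HasDerivAt (fun t : ℝ => t ^ 2 + b ^ 2) (2 * t) t := by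
      simpa using ((hasDerivAt_id' t).fun_pow 2).add_const (b ^ 2)
    have := (hasDerivAt_id' t).div (h1.sqrt (by positivity)) (hr t).ne'
    refine (this.congr_deriv ?_).hasDerivWithinAt
    have := hr t
    field_simp
    rw [hr2]; ring
  have hinv : ∀ t ∈ Set.Ioi (0 : ℝ), f t ∈ Set.Ioo (0 : ℝ) 1 ∧ b * f t / √(1 - f t ^ 2) = t := by
    intro t ht
    have ht : 0 < t := ht
    have h1 : 1 - f t ^ 2 = (b / √(t ^ 2 + b ^ 2)) ^ 2 := by
      have := hr t
      simp only [hf]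
      field_simp
      linear_combination hr2 t
    refine ⟨⟨div_pos ht (hr t), ?_⟩, ?_⟩
    · have : 0 < (b / √(t ^ 2 + b ^ 2)) ^ 2 := by positivity
      have h0 : 0 < f t := div_pos ht (hr t)
      nlinarith
    · rw [h1, Real.sqrt_sq (by positivity)]
      have := hr t
      simp only [hf]
      field_simp
  have hinj : Set.InjOn f (Set.Ioi 0) := fun x hx y hy h => by
    rw [← (hinv x hx).2, ← (hinv y hy).2, h]
  have himg : f '' Set.Ioi 0 = Set.Ioo 0 1 := by
    ext x
    refine ⟨fun ⟨t, ht, h⟩ => h ▸ (hinv t ht).1, fun ⟨h0, h1⟩ => ?_⟩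
    have hx : 0 < 1 - x ^ 2 := by nlinarith
    have hx2 : √(1 - x ^ 2) ^ 2 = 1 - x ^ 2 := Real.sq_sqrt hx.le
    have hx0 : 0 < √(1 - x ^ 2) := Real.sqrt_pos.mpr hx
    refine ⟨b * x / √(1 - x ^ 2), div_pos (mul_pos hb h0) hx0, ?_⟩
    simp only [hf]
    have : (b * x / √(1 - x ^ 2)) ^ 2 + b ^ 2 = (b / √(1 - x ^ 2)) ^ 2 := by
      field_simp
      linear_combination hx2
    rw [this, Real.sqrt_sq (by positivity)]
    field_simp
  rw [EllK, intervalIntegral.integral_of_le zero_le_one, integral_Ioc_eq_integral_Ioo, ← himg,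
    integral_image_eq_integral_abs_deriv_smul measurableSet_Ioi hd hinj, agmIntegral,
    ← integral_const_mul]
  refine setIntegral_congr_fun measurableSet_Ioi fun t _ => ?_
  have e : (1 - f t ^ 2) * (1 - k ^ 2 * f t ^ 2) =
      ((t ^ 2 + a ^ 2) * (t ^ 2 + b ^ 2)) * (b ^ 2 / (a * √(t ^ 2 + b ^ 2) ^ 3)) ^ 2 := by
    have e3 : (√(t ^ 2 + b ^ 2) ^ 3) ^ 2 = (t ^ 2 + b ^ 2) ^ 3 := by
      rw [← pow_mul, mul_comm, pow_mul, hr2]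
    rw [hk]
    simp only [hf]
    rw [div_pow, div_pow _ (a * _), mul_pow, hr2, e3, div_pow]
    field_simp
    ring
  simp only [smul_eq_mul]
  rw [e, Real.sqrt_mul (by positivity), Real.sqrt_sq (by positivity), abs_of_pos (by positivity)]
  have := hr t
  have : 0 < √((t ^ 2 + a ^ 2) * (t ^ 2 + b ^ 2)) := by positivity
  field_simp

end

lemma agmIntegral_theta {q : ℝ} (h0 : 0 < q) (h1 : q < 1) :
    agmIntegral (realTheta q ^ 2) (realTheta (-q) ^ 2) = π / 2 := by
  have hstep : ∀ {q : ℝ}, 0 < q → q < 1 → agmIntegral (realTheta q ^ 2) (realTheta (-q) ^ 2) =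
      agmIntegral (realTheta (q ^ 2) ^ 2) (realTheta (-q ^ 2) ^ 2) := by
    intro q h0 h1
    have hq : |q| < 1 := by rwa [abs_of_pos h0]
    have hp := realTheta_pos_of_nonneg h0.le h1
    have hn := realTheta_neg_pos h0.le h1
    rw [agmIntegral_eq_agm (by positivity) (by positivity), realTheta_sq_add_sq hq, ← mul_pow,
      realTheta_mul_neg hq, Real.sqrt_sq (sq_nonneg _)]
    congr 1
    ring
  have hpow (n : ℕ) : 0 < q ^ 2 ^ n ∧ q ^ 2 ^ n < 1 :=
    ⟨by positivity, pow_lt_one₀ h0.le h1 (by positivity)⟩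
  have hn (n : ℕ) : agmIntegral (realTheta q ^ 2) (realTheta (-q) ^ 2) =
      agmIntegral (realTheta (q ^ 2 ^ n) ^ 2) (realTheta (-q ^ 2 ^ n) ^ 2) := by
    induction n with
    | zero => simp
    | succ n ih => rw [ih, hstep (hpow n).1 (hpow n).2, ← pow_mul, ← pow_succ]
  have hle (n : ℕ) : realTheta (-q ^ 2 ^ n) ^ 2 ≤ realTheta (q ^ 2 ^ n) ^ 2 := by
    have hp := hpow n
    set x := q ^ 2 ^ n
    have hx : |x| < 1 := by rw [abs_of_pos hp.1]; exact hp.2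
    have hO := realThetaOdd_pos hp.1 hp.2
    have e := realTheta_neg hx
    rw [realThetaOdd] at hO
    have := realTheta_neg_pos hp.1.le hp.2
    exact pow_le_pow_left₀ this.le (by linarith) 2
  have hlim : Tendsto (fun n : ℕ => q ^ 2 ^ n) atTop (𝓝 0) :=
    (tendsto_pow_atTop_nhds_zero_of_lt_one h0.le h1).comp
      (tendsto_pow_atTop_atTop_of_one_lt one_lt_two)
  have hc : ContinuousAt realTheta 0 := (differentiableAt_realTheta (by simp)).continuousAt
  have l1 : Tendsto (fun n : ℕ => π / 2 / realTheta (q ^ 2 ^ n) ^ 2) atTop (𝓝 (π / 2)) := by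
    have := (tendsto_const_nhds (x := π / 2)).div ((hc.tendsto.comp hlim).pow 2)
      (by simp [realTheta_zero])
    simpa [realTheta_zero, Function.comp_def, Pi.div_def] using this
  have l2 : Tendsto (fun n : ℕ => π / 2 / realTheta (-q ^ 2 ^ n) ^ 2) atTop (𝓝 (π / 2)) := by
    have hlim' : Tendsto (fun n : ℕ => -q ^ 2 ^ n) atTop (𝓝 0) := by simpa using hlim.neg
    have := (tendsto_const_nhds (x := π / 2)).div ((hc.tendsto.comp hlim').pow 2)
      (by simp [realTheta_zero])
    simpa [realTheta_zero, Function.comp_def, Pi.div_def] using this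
  have hb (n : ℕ) := agmIntegral_bounds
    (pow_pos (realTheta_neg_pos (hpow n).1.le (hpow n).2) 2) (hle n)
  refine le_antisymm (ge_of_tendsto' l2 fun n => ?_) (le_of_tendsto' l1 fun n => ?_)
  · rw [hn n]; exact (hb n).2
  · rw [hn n]; exact (hb n).1

lemma continuousAt_deriv_realTheta_zero : ContinuousAt (deriv realTheta) 0 := by
  have hd : ContinuousAt (deriv thetaSeries) ((0 : ℝ) : ℂ) :=
    ((differentiableOn_thetaSeries.deriv Metric.isOpen_ball).differentiableAt
      (Metric.isOpen_ball.mem_nhds (by simp))).continuousAt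
  have hc : ContinuousAt (fun x : ℝ => (deriv thetaSeries x).re) 0 :=
    Complex.continuous_re.continuousAt.comp
      (ContinuousAt.comp (f := fun x : ℝ => (x : ℂ)) hd (by fun_prop))
  refine hc.congr ?_
  filter_upwards [Metric.ball_mem_nhds (0 : ℝ) one_pos] with x hx
  have h := (differentiableAt_thetaSeries (q := x)
    (norm_ofReal_lt_one (by simpa using hx))).hasDerivAt.real_of_complex
  have e : (fun x : ℝ => (thetaSeries x).re) = realTheta := by
    funext x; rw [← ofReal_realTheta, Complex.ofReal_re]
  rw [e] at h
  exact h.deriv.symm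

section
variable {q : ℝ}

lemma realTheta_neg_lt (h0 : 0 < q) (h1 : q < 1) : realTheta (-q) < realTheta q := by
  have hO := realThetaOdd_pos h0 h1
  rw [realThetaOdd] at hO
  have e := realTheta_neg (q := q) (by rwa [abs_of_pos h0])
  linarith

/-- The Wronskian of `θ₃` and `θ₄`, normalised by its theta product. -/
noncomputable def thetaWronskianQuot (q : ℝ) : ℝ :=
  q * (realTheta q * deriv realTheta (-q) + realTheta (-q) * deriv realTheta q) /
    (realTheta q * realTheta (-q) * (realTheta q ^ 4 - realTheta (-q) ^ 4))

lemma hasDerivAt_realTheta_comp_neg (hq : |q| < 1) :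
    HasDerivAt (fun x => realTheta (-x)) (-deriv realTheta (-q)) q := by
  have h := (differentiableAt_realTheta (q := -q) (by rwa [abs_neg])).hasDerivAt
  simpa [Function.comp_def] using h.comp q (hasDerivAt_neg q)

lemma thetaWronskianQuot_sq (h0 : 0 < q) (h1 : q < 1) :
    thetaWronskianQuot (q ^ 2) = thetaWronskianQuot q := by
  have hq : |q| < 1 := by rwa [abs_of_pos h0]
  have hq2 := abs_pow_lt_one hq two_ne_zero
  have hev : ∀ᶠ x in 𝓝 q, |x| < 1 := continuous_abs.continuousAt.eventually_lt continuousAt_const hq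
  have da := (differentiableAt_realTheta hq).hasDerivAt
  have db := hasDerivAt_realTheta_comp_neg hq
  have dsq : HasDerivAt (fun x : ℝ => x ^ 2) (2 * q) q := by simpa using hasDerivAt_pow 2 q
  have dc : HasDerivAt (fun x => realTheta (x ^ 2)) (deriv realTheta (q ^ 2) * (2 * q)) q :=
    (differentiableAt_realTheta hq2).hasDerivAt.comp (h := fun x : ℝ => x ^ 2) q dsq
  have dd : HasDerivAt (fun x => realTheta (-x ^ 2)) (-deriv realTheta (-q ^ 2) * (2 * q)) q :=
    (hasDerivAt_realTheta_comp_neg hq2).comp (h := fun x : ℝ => x ^ 2) q dsq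
  have A' := ((da.fun_pow 2).fun_add (db.fun_pow 2)).unique
      (((dc.fun_pow 2).const_mul 2).congr_of_eventuallyEq
    (hev.mono fun x hx => realTheta_sq_add_sq hx))
  have B' := (da.fun_mul db).unique ((dd.fun_pow 2).congr_of_eventuallyEq
    (hev.mono fun x hx => realTheta_mul_neg hx))
  have A := realTheta_sq_add_sq hq
  have B := realTheta_mul_neg hq
  have p0 := pow_pos h0 2
  have p1 := pow_lt_one₀ h0.le h1 two_ne_zero
  have ha := realTheta_pos_of_nonneg h0.le h1
  have hb := realTheta_neg_pos h0.le h1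
  have hab := realTheta_neg_lt h0 h1
  have hc := realTheta_pos_of_nonneg p0.le p1
  have hd := realTheta_neg_pos p0.le p1
  have hcd := realTheta_neg_lt p0 p1
  rw [thetaWronskianQuot, thetaWronskianQuot]
  generalize realTheta q = a at *
  generalize realTheta (-q) = b at *
  generalize realTheta (q ^ 2) = c at *
  generalize realTheta (-q ^ 2) = d at *
  generalize deriv realTheta q = α at *
  generalize deriv realTheta (-q) = β at *
  generalize deriv realTheta (q ^ 2) = γ at *
  generalize deriv realTheta (-q ^ 2) = δ at *
  norm_num at A' B'
  have h1 : 0 < a ^ 4 - b ^ 4 := sub_pos.mpr (pow_lt_pow_left₀ hab hb.le (by norm_num))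
  have h2 : 0 < c ^ 4 - d ^ 4 := sub_pos.mpr (pow_lt_pow_left₀ hcd hd.le (by norm_num))
  have hN : 8 * (q * (c * δ + d * γ) * (c * d)) = (a ^ 2 - b ^ 2) * (a * β + b * α) := by
    linear_combination -d ^ 2 * A' + 2 * c ^ 2 * B' - (a * β - b * α) * A - 2 * (a * α - b * β) * B
  have hM : 4 * (c ^ 4 - d ^ 4) = (a ^ 2 - b ^ 2) ^ 2 := by
    linear_combination -(a ^ 2 + b ^ 2 + 2 * c ^ 2) * A + 4 * (a * b + d ^ 2) * B
  have hcd2 : 2 * (c ^ 2 * d ^ 2) = (a ^ 2 + b ^ 2) * (a * b) := by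
    linear_combination -(a * b) * A - 2 * c ^ 2 * B
  rw [div_eq_div_iff (by positivity) (by positivity)]
  have hcd0 : c * d ≠ 0 := by positivity
  apply mul_left_cancel₀ hcd0
  apply mul_left_cancel₀ (show (8 : ℝ) ≠ 0 by norm_num)
  linear_combination q * a * b * (a ^ 4 - b ^ 4) * hN - 2 * q * (a * β + b * α) * c ^ 2 * d ^ 2 * hM
    - q * (a * β + b * α) * (a ^ 2 - b ^ 2) ^ 2 * hcd2

lemma thetaWronskianQuot_eq (h0 : 0 < q) (h1 : q < 1) : thetaWronskianQuot q = 1 / 4 := by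
  have hpow (n : ℕ) : 0 < q ^ 2 ^ n ∧ q ^ 2 ^ n < 1 :=
    ⟨by positivity, pow_lt_one₀ h0.le h1 (by positivity)⟩
  have hn (n : ℕ) : thetaWronskianQuot (q ^ 2 ^ n) = thetaWronskianQuot q := by
    induction n with
    | zero => simp
    | succ n ih => rw [← ih, pow_succ, pow_mul, thetaWronskianQuot_sq (hpow n).1 (hpow n).2]
  have hlim : Tendsto (fun n : ℕ => q ^ 2 ^ n) atTop (𝓝[≠] 0) :=
    tendsto_nhdsWithin_iff.mpr ⟨(tendsto_pow_atTop_nhds_zero_of_lt_one h0.le h1).comp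
      (tendsto_pow_atTop_atTop_of_one_lt one_lt_two), .of_forall fun n => (hpow n).1.ne'⟩
  have hc : ContinuousAt realTheta 0 := hasDerivAt_realTheta_zero.continuousAt
  have hc' : ContinuousAt (fun x => realTheta (-x)) 0 :=
    ContinuousAt.comp (g := realTheta) (f := fun x : ℝ => -x) (x := 0) (by simpa using hc)
        (by fun_prop)
  have hd := continuousAt_deriv_realTheta_zero
  have hd' : ContinuousAt (fun x => deriv realTheta (-x)) 0 :=
    ContinuousAt.comp (g := deriv realTheta) (f := fun x : ℝ => -x) (x := 0) (by simpa using hd)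
        (by fun_prop)
  have hv := hasDerivAt_realTheta_zero.deriv
  have db := hasDerivAt_realTheta_comp_neg (q := 0) (by simp)
  rw [neg_zero, hv] at db
  have hslope := hasDerivAt_iff_tendsto_slope_zero.mp
    ((hasDerivAt_realTheta_zero.fun_pow 4).fun_sub (db.fun_pow 4))
  have hnum := ((hc.mul hd').add (hc'.mul hd)).tendsto.mono_left (nhdsWithin_le_nhds (s := {0}ᶜ))
  have hden := ((hc.mul hc').tendsto.mono_left (nhdsWithin_le_nhds (s := {0}ᶜ))).mul hslope
  have hT := hnum.div hden (by simp [realTheta_zero])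
  have hval : Tendsto thetaWronskianQuot (𝓝[≠] 0) (𝓝 (1 / 4)) := by
    simp [realTheta_zero, hv] at hT
    norm_num at hT
    refine (hT.congr' ?_)
    filter_upwards [self_mem_nhdsWithin] with x hx
    have hx : x ≠ 0 := hx
    simp [thetaWronskianQuot]
    field_simp
  exact tendsto_nhds_unique (tendsto_const_nhds.congr fun n => (hn n).symm) (hval.comp hlim)

end

section
variable {y : ℝ}

lemma realTheta_exp_inv (hy : 0 < y) :
    realTheta (Real.exp (-(π / y))) = √y * realTheta (Real.exp (-(π * y))) := by
  have e (c : ℝ) : realTheta (Real.exp (-(π * c))) = ∑' n : ℤ, Real.exp (-π * c * (n : ℝ) ^ 2) := by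
    refine tsum_congr fun n => ?_
    rw [← Real.exp_nat_mul]
    congr 1
    push_cast
    rw [Nat.cast_natAbs, Int.cast_abs, sq_abs]
    ring
  have h := Real.tsum_exp_neg_mul_int_sq hy
  rw [← e, ← Real.sqrt_eq_rpow] at h
  rw [h, div_eq_mul_inv π y, e, ← mul_assoc, mul_one_div_cancel (Real.sqrt_pos.mpr hy).ne', one_mul]
  exact tsum_congr fun n => by ring_nf

lemma realTheta_neg_exp (hy : 0 < y) : realTheta (-Real.exp (-(π * y))) =
    2 * realTheta (Real.exp (-(π * (4 * y)))) - realTheta (Real.exp (-(π * y))) := by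
  have hq := exp_neg_mem_Ioo (mul_pos Real.pi_pos hy)
  rw [realTheta_neg (by rw [abs_of_pos hq.1]; exact hq.2), ← Real.exp_nat_mul]
  ring_nf

lemma realThetaOdd_exp (y : ℝ) : realThetaOdd (Real.exp (-(π * y / 4))) =
    realTheta (Real.exp (-(π * (y / 4)))) - realTheta (Real.exp (-(π * y))) := by
  rw [realThetaOdd, ← Real.exp_nat_mul]
  ring_nf

lemma realTheta_neg_exp_inv (hy : 0 < y) :
    realTheta (-Real.exp (-(π / y))) = √y * realThetaOdd (Real.exp (-(π * y / 4))) := by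
  have h4 : 0 < y / 4 := by positivity
  have h := realTheta_neg_exp (inv_pos.mpr hy)
  have e := realTheta_exp_inv h4
  have hs : √(y / 4) = √y / 2 := by
    rw [Real.sqrt_div hy.le, show (4 : ℝ) = 2 ^ 2 by norm_num, Real.sqrt_sq two_pos.le]
  rw [div_eq_mul_inv, h, realThetaOdd_exp, show π * (4 * y⁻¹) = π / (y / 4) by field_simp, e,
    ← div_eq_mul_inv, realTheta_exp_inv hy, hs]
  ring

/-- Jacobi's identity `θ₂⁴ = θ₃⁴ - θ₄⁴`. -/
lemma realThetaOdd_pow_four {x : ℝ} (hx : |x| < 1) :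
    realThetaOdd x ^ 4 = realTheta (x ^ 4) ^ 4 - realTheta (-x ^ 4) ^ 4 := by
  have h1 := realThetaOdd_sq hx
  have h2 := realTheta_landen (abs_pow_lt_one hx two_ne_zero)
  have h3 := realTheta_sq_add_sq (abs_pow_lt_one hx four_ne_zero)
  norm_num [← pow_mul] at h2 h3
  linear_combination (realThetaOdd x ^ 2 + 2 * realTheta (x ^ 8) * realThetaOdd (x ^ 2)) * h1 +
    4 * realTheta (x ^ 8) ^ 2 * h2 +
    (2 * realTheta (x ^ 8) ^ 2 + realTheta (-x ^ 4) ^ 2 - realTheta (x ^ 4) ^ 2) * h3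

/-- The elliptic modulus attached to the nome `exp (-π / y)`. -/
noncomputable def thetaModulus (y : ℝ) : ℝ :=
  (realTheta (-Real.exp (-(π * y))) / realTheta (Real.exp (-(π * y)))) ^ 2

lemma realThetaOdd_exp_pow_four (hy : 0 < y) : realThetaOdd (Real.exp (-(π * y / 4))) ^ 4 =
    realTheta (Real.exp (-(π * y))) ^ 4 - realTheta (-Real.exp (-(π * y))) ^ 4 := by
  have hx := exp_neg_mem_Ioo (show 0 < π * y / 4 by positivity)
  rw [realThetaOdd_pow_four (by rw [abs_of_pos hx.1]; exact hx.2), ← Real.exp_nat_mul]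
  ring_nf

lemma realTheta_exp_pos (hy : 0 < y) : 0 < realTheta (Real.exp (-(π * y))) := by
  have hq := exp_neg_mem_Ioo (mul_pos Real.pi_pos hy)
  exact realTheta_pos_of_nonneg hq.1.le hq.2

lemma realTheta_neg_exp_pos (hy : 0 < y) : 0 < realTheta (-Real.exp (-(π * y))) := by
  have hq := exp_neg_mem_Ioo (mul_pos Real.pi_pos hy)
  exact realTheta_neg_pos hq.1.le hq.2

lemma realThetaOdd_exp_pos (hy : 0 < y) : 0 < realThetaOdd (Real.exp (-(π * y / 4))) := by
  have hq := exp_neg_mem_Ioo (show 0 < π * y / 4 by positivity)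
  exact realThetaOdd_pos hq.1 hq.2

lemma thetaModulus_pos (hy : 0 < y) : 0 < thetaModulus y :=
  pow_pos (div_pos (realTheta_neg_exp_pos hy) (realTheta_exp_pos hy)) 2

lemma one_sub_thetaModulus_sq (hy : 0 < y) : 1 - thetaModulus y ^ 2 =
    ((realThetaOdd (Real.exp (-(π * y / 4))) / realTheta (Real.exp (-(π * y)))) ^ 2) ^ 2 := by
  have h := realTheta_exp_pos hy
  rw [thetaModulus]
  field_simp
  linear_combination -realThetaOdd_exp_pow_four hy

lemma thetaModulus_lt_one (hy : 0 < y) : thetaModulus y < 1 := by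
  have h : 0 < 1 - thetaModulus y ^ 2 := by
    rw [one_sub_thetaModulus_sq hy]
    have := div_pos (realThetaOdd_exp_pos hy) (realTheta_exp_pos hy)
    positivity
  nlinarith [thetaModulus_pos hy]

lemma sqrt_one_sub_thetaModulus_sq (hy : 0 < y) : √(1 - thetaModulus y ^ 2) =
    (realThetaOdd (Real.exp (-(π * y / 4))) / realTheta (Real.exp (-(π * y)))) ^ 2 := by
  rw [one_sub_thetaModulus_sq hy, Real.sqrt_sq (sq_nonneg _)]

lemma thetaModulus_inv (hy : 0 < y) : thetaModulus y⁻¹ = √(1 - thetaModulus y ^ 2) := by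
  rw [sqrt_one_sub_thetaModulus_sq hy, thetaModulus, ← div_eq_mul_inv, realTheta_neg_exp_inv hy,
    realTheta_exp_inv hy, mul_div_mul_left _ _ (Real.sqrt_pos.mpr hy).ne']

lemma EllK_thetaModulus (hy : 0 < y) :
    EllK (thetaModulus y) = π / 2 * y * realTheta (Real.exp (-(π * y))) ^ 2 := by
  have hi := inv_pos.mpr hy
  have hq := exp_neg_mem_Ioo (mul_pos Real.pi_pos hi)
  have hk : thetaModulus y ^ 2 = 1 - (realTheta (-Real.exp (-(π * y⁻¹))) ^ 2 /
      realTheta (Real.exp (-(π * y⁻¹))) ^ 2) ^ 2 := by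
    rw [← div_pow, ← thetaModulus, thetaModulus_inv hy, Real.sq_sqrt]
    · ring
    · nlinarith [thetaModulus_pos hy, thetaModulus_lt_one hy]
  rw [EllK_eq_agmIntegral (pow_pos (realTheta_exp_pos hi) 2)
      (pow_pos (realTheta_neg_exp_pos hi) 2) hk,
    agmIntegral_theta hq.1 hq.2, ← div_eq_mul_inv, realTheta_exp_inv hy, mul_pow,
        Real.sq_sqrt hy.le]
  ring

lemma hasDerivAt_thetaModulus (hy : 0 < y) : HasDerivAt thetaModulus
    (π / 2 * thetaModulus y * realThetaOdd (Real.exp (-(π * y / 4))) ^ 4) y := by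
  have hq := exp_neg_mem_Ioo (mul_pos Real.pi_pos hy)
  have hq' : |Real.exp (-(π * y))| < 1 := by rw [abs_of_pos hq.1]; exact hq.2
  have he : HasDerivAt (fun t => Real.exp (-(π * t))) (Real.exp (-(π * y)) * -(π * 1)) y :=
    ((hasDerivAt_id' y).const_mul π).fun_neg.exp
  have ha := (differentiableAt_realTheta hq').hasDerivAt.comp
      (h := fun t => Real.exp (-(π * t))) y he
  have hb := (hasDerivAt_realTheta_comp_neg hq').comp (h := fun t => Real.exp (-(π * t))) y he
  have ha0 := realTheta_exp_pos hy
  have hb0 := realTheta_neg_exp_pos hy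
  have hlt := realTheta_neg_lt hq.1 hq.2
  have hW := thetaWronskianQuot_eq hq.1 hq.2
  refine ((hb.fun_div ha ha0.ne').fun_pow 2).congr_deriv ?_
  rw [realThetaOdd_exp_pow_four hy, thetaModulus]
  rw [thetaWronskianQuot] at hW
  simp only [Function.comp]
  generalize Real.exp (-(π * y)) = q at *
  generalize realTheta q = a at *
  generalize realTheta (-q) = b at *
  generalize deriv realTheta q = α at *
  generalize deriv realTheta (-q) = β at *
  have h4 : 0 < a ^ 4 - b ^ 4 := sub_pos.mpr (pow_lt_pow_left₀ hlt hb0.le (by norm_num))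
  rw [div_eq_div_iff (by positivity) (by norm_num)] at hW
  norm_num
  field_simp
  linear_combination hW

lemma strictMonoOn_thetaModulus : StrictMonoOn thetaModulus (Set.Ioi 0) := by
  refine strictMonoOn_of_deriv_pos (convex_Ioi 0)
    (fun y hy => (hasDerivAt_thetaModulus hy).continuousAt.continuousWithinAt) fun y hy => ?_
  rw [interior_Ioi] at hy
  rw [(hasDerivAt_thetaModulus hy).deriv]
  have := thetaModulus_pos hy
  have := realThetaOdd_exp_pos hy
  positivity

lemma tendsto_thetaModulus_atTop : Tendsto thetaModulus atTop (𝓝 1) := by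
  have he : Tendsto (fun y : ℝ => Real.exp (-(π * y))) atTop (𝓝 0) :=
    Real.tendsto_exp_neg_atTop_nhds_zero.comp (tendsto_id.const_mul_atTop Real.pi_pos)
  have hc : ContinuousAt (fun q => (realTheta (-q) / realTheta q) ^ 2) 0 := by
    have h := hasDerivAt_realTheta_zero.continuousAt
    refine (ContinuousAt.div (ContinuousAt.comp (g := realTheta) (f := fun x : ℝ => -x) (x := 0)
      (by simpa using h) (by fun_prop)) h (by simp [realTheta_zero])).pow 2
  have := hc.tendsto.comp he
  simp only [neg_zero, realTheta_zero, div_one, one_pow] at this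
  exact this

lemma image_thetaModulus : thetaModulus '' Set.Ioi 0 = Set.Ioo 0 1 := by
  refine Set.Subset.antisymm ?_ fun k hk => ?_
  · rintro _ ⟨y, hy, rfl⟩
    exact ⟨thetaModulus_pos hy, thetaModulus_lt_one hy⟩
  obtain ⟨Y, hY, hY0⟩ := ((tendsto_thetaModulus_atTop.eventually (lt_mem_nhds hk.2)).and
    (eventually_gt_atTop 0)).exists
  have hlim : Tendsto (fun y => √(1 - thetaModulus y ^ 2)) atTop (𝓝 0) := by
    simpa using ((tendsto_thetaModulus_atTop.pow 2).const_sub 1).sqrt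
  obtain ⟨X, hX, hX0⟩ := ((hlim.eventually (gt_mem_nhds hk.1)).and (eventually_gt_atTop 0)).exists
  rw [← thetaModulus_inv hX0] at hX
  refine isPreconnected_Ioi.intermediate_value (inv_pos.mpr hX0) hY0
    (fun y hy => (hasDerivAt_thetaModulus hy).continuousAt.continuousWithinAt) ⟨hX.le, hY.le⟩

lemma rpow_three_quarters_mul_EllK_thetaModulus (hy : 0 < y) :
    (π / 2 * thetaModulus y * realThetaOdd (Real.exp (-(π * y / 4))) ^ 4) *
      ((thetaModulus y / √(1 - thetaModulus y ^ 2)) ^ ((3 : ℝ) / 4) * EllK (thetaModulus y)) =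
    π ^ 2 / 4 * (y * √(realTheta (-Real.exp (-(π * y))) ^ 7 *
      realThetaOdd (Real.exp (-(π * y / 4))) ^ 5)) := by
  rw [sqrt_one_sub_thetaModulus_sq hy, EllK_thetaModulus hy, thetaModulus]
  have ha := realTheta_exp_pos hy
  have hb := realTheta_neg_exp_pos hy
  have hc := realThetaOdd_exp_pos hy
  generalize realTheta (Real.exp (-(π * y))) = a at *
  generalize realTheta (-Real.exp (-(π * y))) = b at *
  generalize realThetaOdd (Real.exp (-(π * y / 4))) = c at *
  have hr : ((b / a) ^ 2 / (c / a) ^ 2) ^ ((3 : ℝ) / 4) = √((b / c) ^ 3) := by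
    rw [Real.sqrt_eq_rpow, ← Real.rpow_natCast (b / c) 3, ← Real.rpow_mul (by positivity),
      ← div_pow, div_div_div_cancel_right₀ ha.ne', ← Real.rpow_natCast (b / c) 2,
      ← Real.rpow_mul (by positivity)]
    norm_num
  have hs : √(b ^ 7 * c ^ 5) = b ^ 2 * c ^ 4 * √((b / c) ^ 3) := by
    rw [show b ^ 7 * c ^ 5 = (b ^ 2 * c ^ 4) ^ 2 * (b / c) ^ 3 by field_simp,
      Real.sqrt_mul (by positivity), Real.sqrt_sq (by positivity)]
  rw [hr, hs]
  field_simp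
  ring

end

theorem stmt_11 :
    ∫ k in (0:ℝ)..(1:ℝ), (k / Real.sqrt (1 - k^2)) ^ ((3:ℝ)/4) * EllK k
      = π^2 / 12 * Real.sqrt (5 + 1 / Real.sqrt 2) := by
  rw [intervalIntegral.integral_of_le zero_le_one, integral_Ioc_eq_integral_Ioo,
    ← image_thetaModulus, integral_image_eq_integral_abs_deriv_smul measurableSet_Ioi
      (fun y hy => (hasDerivAt_thetaModulus hy).hasDerivWithinAt) strictMonoOn_thetaModulus.injOn]
  calc _ = ∫ y in Set.Ioi (0 : ℝ), π ^ 2 / 4 * (y * √(realTheta (-Real.exp (-(π * y))) ^ 7 *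
      realThetaOdd (Real.exp (-(π * y / 4))) ^ 5)) := by
        refine setIntegral_congr_fun measurableSet_Ioi fun y hy => ?_
        have hy : 0 < y := hy
        have := thetaModulus_pos hy
        have := realThetaOdd_exp_pos hy
        rw [abs_of_pos (by positivity), smul_eq_mul, rpow_three_quarters_mul_EllK_thetaModulus hy]
    _ = _ := by
        rw [integral_const_mul, integral_mul_sqrt_theta]
        ring
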